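/- Let p be a prime, n = d + m with d, m ≥ 1, and α ∈ ℤ_p^m with τ(α) = m+1. Let τ = (τ₁,…,τₙ) ∈ ℝ^n_{>0} satisfy Σ_{i=1}^m τ_{d+i} < m+1, Σ_{i=1}^n τ_i > n+1, and τ_i > 1 for all i. Then the Hausdorff dimension of 𝔚_n(τ) ∩ Π_α is at least min_{1≤i≤d} ( n + 1 − Σ_{i=1}^m τ_{d+i} + Σ_{1≤j≤d, τ_j ≤ τ_i} (τ_i − τ_j) ) / τ_i. -/

import Mathlib

/-!
Fix `Q = p ^ M`, and write `b` for the exponents of the free coordinates, `β` for those of the fixed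
ones and `e = m + 1 - ∑ i, β i > 0`.

**Denominators.** The pairs `(q, a) ∈ ℤ × ℤ ^ m` for which `q * α - a` is small of order `Q ^ (-β)`
form a lattice of index about `Q ^ (∑ i, β i)`. Since `τ(α) = m + 1` excludes unusually good
approximations, this lattice has no short vectors (`exists_dioExp_bound`), hence small covering
radius (`covering`), and every large box contains as many lattice points as expected. The
coprimality conditions cost only factors `Q ^ ε`: one moves along a fixed short lattice vector `w`,
which leaves the determinants `v 0 * w i - v i * w 0` unchanged, and sieves by the few primes
dividing them (`exists_coprime_near`, `exists_sieved`). So there are at least `Q ^ (e - η)` admissible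
denominators `q` of size `Q` (`exists_denominators`).

**Counting pairs.** For each such `q`, take in every free coordinate `j` about `Q` fractions `a / q`
that are equidistributed in a given cylinder, and thicken them to radius `Q ^ (-b j)`
(`exists_families`). Two points with different denominators agree modulo `p ^ L` no more often than
random points would, because the numerator `a * q' - a' * q` of the difference is nonzero. Two
points with the same denominator agree modulo `p ^ L = Q ^ ρ` with frequency
`Q ^ (-∑ j, (min ρ 1 + max (ρ - b j) 0))`, and this event carries only a proportion `Q ^ (-e)` of the
pairs. Up to factors `Q ^ ε`, the sum is at most `Q ^ (-ρ * s)` exactly when `s ≤ d` and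
`ρ * s ≤ e + d * min ρ 1 + ∑ j, max (ρ - b j) 0`, which is a piecewise linear inequality in `ρ`; its
breakpoints `ρ = b i` give the minimum in the statement (`mul_le_diag`). That `s < d`, which deals
with different denominators and with large `ρ`, is the hypothesis `∑ i, τ i > n + 1`
(`iInf_lt_card`).

**Dimension.** By Markov's inequality, a second moment bound of this kind at all levels yields a large
subfamily that is well spread in every cylinder (`exists_spread`), hence for each `s' < s` a
probability measure inside the given cylinder with local dimension at least `s'`
(`exists_measure`). A Cantor construction iterates this along a sequence of `Q`, and the mass
distribution principle bounds the dimension of the resulting limsup set (`cantor`).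
-/

open scoped BigOperators ENNReal Classical
open MeasureTheory

noncomputable instance {p : ℕ} [Fact p.Prime] : MeasurableSpace ℤ_[p] := borel _
instance {p : ℕ} [Fact p.Prime] : BorelSpace ℤ_[p] := ⟨rfl⟩

/-- The Diophantine exponent of `α ∈ ℤ_p^m`. -/
noncomputable def dioExp {p : ℕ} [Fact p.Prime] {m : ℕ} (α : Fin m → ℤ_[p]) : ℝ :=
  sSup {s : ℝ | ∃ τ : Fin m → ℝ, s = ∑ i, τ i ∧
    ∀ Q₀ : ℕ, ∃ Q : ℕ, Q₀ ≤ Q ∧ ∃ q₀ : ℤ, ∃ q : Fin m → ℤ,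
      0 < q₀ ∧ q₀ ≤ (Q : ℤ) ∧ (∀ i, |q i| ≤ (Q : ℤ)) ∧
      ∀ i, ‖(q₀ : ℤ_[p]) * α i - (q i : ℤ_[p])‖ < (Q : ℝ) ^ (-(τ i))}

/-- The set `𝔄_{q₀}(τ)` of weighted `τ`-approximable points with denominator `q₀`. -/
def Aset {p : ℕ} [Fact p.Prime] {n : ℕ} (τ : Fin n → ℝ) (q₀ : ℕ) :
    Set (Fin n → ℤ_[p]) :=
  ⋃ (q : Fin n → ℤ) (_ : ∀ i, |q i| ≤ (q₀ : ℤ) ∧ Int.gcd (q i) q₀ = 1),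
    {x | ∀ i, ‖(x i : ℚ_[p]) - (q i : ℚ_[p]) / (q₀ : ℚ_[p])‖ < (q₀ : ℝ) ^ (-(τ i))}

/-- The set `𝔚_n(τ) = limsup_{q₀ → ∞} 𝔄_{q₀}(τ)` of weighted `τ`-approximable points. -/
def Wset {p : ℕ} [Fact p.Prime] {n : ℕ} (τ : Fin n → ℝ) : Set (Fin n → ℤ_[p]) :=
  ⋂ (Q : ℕ), ⋃ (q₀ : ℕ) (_ : Q ≤ q₀), Aset τ q₀

/-- The coordinate hyperplane `Π_α ⊆ ℤ_p^{d+m}` determined by `α ∈ ℤ_p^m`. -/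
def Pialpha {p : ℕ} [Fact p.Prime] {d m : ℕ} (α : Fin m → ℤ_[p]) :
    Set (Fin (d + m) → ℤ_[p]) :=
  {x | ∀ i : Fin m, x (Fin.natAdd d i) = α i}

/-! ### Cylinders and Cantor measures in `ℤ_p^d` -/

section Cantor

variable {p : ℕ} [Fact p.Prime] {d : ℕ}

/-- The cylinder of level `L` around `x`: all points congruent to `x` modulo `p ^ L` in every
coordinate. This is the closed ball of radius `p ^ (-L)` in the maximum metric. -/
def cyl (L : ℕ) (x : Fin d → ℤ_[p]) : Set (Fin d → ℤ_[p]) :=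
  {y | ∀ j, (p : ℤ_[p]) ^ L ∣ y j - x j}

lemma cyl_self (L : ℕ) (x : Fin d → ℤ_[p]) : x ∈ cyl L x := fun j => by simp

lemma cyl_symm {L : ℕ} {x y : Fin d → ℤ_[p]} (h : y ∈ cyl L x) : x ∈ cyl L y := fun j => by
  rw [dvd_sub_comm]; exact h j

lemma cyl_trans {L : ℕ} {x y z : Fin d → ℤ_[p]} (h : y ∈ cyl L x) (h' : z ∈ cyl L y) :
    z ∈ cyl L x := fun j => by
  have := dvd_add (h j) (h' j)
  rwa [show y j - x j + (z j - y j) = z j - x j by ring] at this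

lemma cyl_anti {L M : ℕ} (h : L ≤ M) (x : Fin d → ℤ_[p]) : cyl M x ⊆ cyl L x :=
  fun _ hy j => (pow_dvd_pow _ h).trans (hy j)

lemma pow_dvd_iff_norm (L : ℕ) (x : ℤ_[p]) :
    (p : ℤ_[p]) ^ L ∣ x ↔ ‖x‖ ≤ (p : ℝ) ^ (-(L : ℤ)) := by
  rw [PadicInt.norm_le_pow_iff_mem_span_pow, Ideal.mem_span_singleton]

lemma p_pos : (0 : ℝ) < p := by
  exact_mod_cast (Fact.out : p.Prime).pos

lemma one_lt_p : (1 : ℝ) < p := by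
  exact_mod_cast (Fact.out : p.Prime).one_lt

lemma cyl_eq_closedBall (L : ℕ) (x : Fin d → ℤ_[p]) :
    cyl L x = Metric.closedBall x ((p : ℝ) ^ (-(L : ℤ))) := by
  have : (0 : ℝ) ≤ (p : ℝ) ^ (-(L : ℤ)) := zpow_nonneg p_pos.le _
  ext y
  simp only [cyl, Set.mem_ofPred_eq, Metric.mem_closedBall, dist_eq_norm, pow_dvd_iff_norm]
  exact (pi_norm_le_iff_of_nonneg this).symm

lemma cyl_isOpen_of_sat {N : ℕ} {U : Set (Fin d → ℤ_[p])} (h : ∀ x ∈ U, cyl N x ⊆ U) :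
    IsOpen U := by
  rw [Metric.isOpen_iff]
  intro x hx
  refine ⟨(p : ℝ) ^ (-(N : ℤ)), zpow_pos p_pos _, fun y hy => h x hx ?_⟩
  rw [cyl_eq_closedBall]
  exact Metric.ball_subset_closedBall hy

lemma sat_compl {N : ℕ} {U : Set (Fin d → ℤ_[p])} (h : ∀ x ∈ U, cyl N x ⊆ U) :
    ∀ x ∈ Uᶜ, cyl N x ⊆ Uᶜ := fun _ hx _ hy hyU => hx (h _ hyU (cyl_symm hy))

/-- Unions of cylinders of a fixed level are clopen. -/
lemma isClopen_of_sat {N : ℕ} {U : Set (Fin d → ℤ_[p])} (h : ∀ x ∈ U, cyl N x ⊆ U) :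
    IsClopen U :=
  ⟨isOpen_compl_iff.1 (cyl_isOpen_of_sat (sat_compl h)), cyl_isOpen_of_sat h⟩

lemma cyl_sat {L N : ℕ} (h : L ≤ N) (x : Fin d → ℤ_[p]) : ∀ y ∈ cyl L x, cyl N y ⊆ cyl L x :=
  fun _ hy _ hz => cyl_trans hy (cyl_anti h _ hz)

/-- Refining a measure inside each cylinder of level `N` does not change the mass of unions of
such cylinders. -/
lemma bind_sat (ν : PMF (Fin d → ℤ_[p])) (κ : (Fin d → ℤ_[p]) → PMF (Fin d → ℤ_[p])) {N : ℕ}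
    (hκ : ∀ z, ∀ y ∈ (κ z).support, y ∈ cyl N z) {U : Set (Fin d → ℤ_[p])}
    (h : ∀ x ∈ U, cyl N x ⊆ U) :
    (ν.bind κ).toOuterMeasure U = ν.toOuterMeasure U := by
  rw [PMF.toOuterMeasure_bind_apply, PMF.toOuterMeasure_apply]
  refine tsum_congr fun x => ?_
  by_cases hx : x ∈ U
  · rw [Set.indicator_of_mem hx, ((κ x).toOuterMeasure_apply_eq_one_iff U).2
      (fun y hy => h x hx (hκ x y hy)), mul_one]
  · rw [Set.indicator_of_notMem hx, ((κ x).toOuterMeasure_apply_eq_zero_iff U).2, mul_zero]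
    rw [Set.disjoint_left]
    exact fun y hy => sat_compl h x hx (hκ x y hy)

/-- If `κ z` is a probability measure on the cylinder of level `N₀` around `z`, every cylinder
of level `L` gets at most the fraction `c` from any `κ z`, then it gets at most the fraction `c`
of the mass of the surrounding cylinder of level `N₀`. -/
lemma bind_cyl_le (ν : PMF (Fin d → ℤ_[p])) (κ : (Fin d → ℤ_[p]) → PMF (Fin d → ℤ_[p]))
    {N₀ L : ℕ} (hL : N₀ ≤ L) (hκ : ∀ z, ∀ y ∈ (κ z).support, y ∈ cyl N₀ z) (c : ℝ≥0∞)
    (w : Fin d → ℤ_[p]) (h : ∀ z, (κ z).toOuterMeasure (cyl L w) ≤ c) :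
    (ν.bind κ).toOuterMeasure (cyl L w) ≤ ν.toOuterMeasure (cyl N₀ w) * c := by
  rw [PMF.toOuterMeasure_bind_apply, PMF.toOuterMeasure_apply, ← ENNReal.tsum_mul_right]
  refine ENNReal.tsum_le_tsum fun x => ?_
  by_cases hx : x ∈ cyl N₀ w
  · rw [Set.indicator_of_mem hx]
    gcongr
    exact h x
  · rw [((κ x).toOuterMeasure_apply_eq_zero_iff _).2, mul_zero]
    · exact zero_le
    · rw [Set.disjoint_left]
      exact fun y hy hyw => hx (cyl_trans (cyl_anti hL _ hyw) (cyl_symm (hκ x y hy)))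

/-- The mass distribution principle for measures that are controlled on cylinders. -/
lemma dimH_ge_of_measure {s : ℝ} (hs : 0 < s) (ν : Measure (Fin d → ℤ_[p]))
    (E : Set (Fin d → ℤ_[p])) (hE : ν E ≠ 0)
    (h : ∀ L x, ν (cyl L x) ≤ ENNReal.ofReal ((p : ℝ) ^ (-(L : ℝ) * s))) :
    ENNReal.ofReal s ≤ dimH E := by
  have hp0 := p_pos (p := p)
  have hp1 := one_lt_p (p := p)
  set c : ℝ≥0∞ := ENNReal.ofReal ((p : ℝ) ^ (-s)) with hc
  have hc0 : c ≠ 0 := by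
    rw [hc, Ne, ENNReal.ofReal_eq_zero, not_le]
    exact Real.rpow_pos_of_pos hp0 _
  have key : c • ν ≤ μH[s] := by
    refine Measure.le_hausdorffMeasure s _ 1 one_pos fun A hA => ?_
    rcases A.eq_empty_or_nonempty with rfl | ⟨x, hx⟩
    · simp
    have hfin : Metric.ediam A ≠ ⊤ := ne_top_of_le_ne_top ENNReal.one_ne_top hA
    have hbd : ∀ y ∈ A, dist y x ≤ (Metric.ediam A).toReal := fun y hy => by
      rw [dist_edist]
      exact ENNReal.toReal_mono hfin (Metric.edist_le_ediam_of_mem hy hx)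
    set r := (Metric.ediam A).toReal with hr
    have hr1 : r ≤ 1 := by
      rw [hr]; exact ENNReal.toReal_le_of_le_ofReal zero_le_one (by simpa using hA)
    have hsub : ∀ L : ℕ, r ≤ (p : ℝ) ^ (-(L : ℤ)) → A ⊆ cyl L x := fun L hL y hy => by
      rw [cyl_eq_closedBall]
      exact (hbd y hy).trans hL
    rcases (ENNReal.toReal_nonneg : 0 ≤ r).eq_or_lt with h0 | h0
    · have : ν A = 0 := by
        have ht : Filter.Tendsto (fun L : ℕ => ENNReal.ofReal ((p : ℝ) ^ (-(L : ℝ) * s)))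
            Filter.atTop (nhds 0) := by
          rw [← ENNReal.ofReal_zero]
          refine ENNReal.tendsto_ofReal ?_
          have h1 : ∀ L : ℕ, (p : ℝ) ^ (-(L : ℝ) * s) = ((p : ℝ) ^ (-s)) ^ L := fun L => by
            rw [← Real.rpow_natCast, ← Real.rpow_mul hp0.le]; congr 1; ring
          simp_rw [h1]
          exact tendsto_pow_atTop_nhds_zero_of_lt_one (Real.rpow_nonneg hp0.le _)
            (Real.rpow_lt_one_of_one_lt_of_neg hp1 (by linarith))
        refine le_antisymm (ge_of_tendsto' ht fun L => ?_) zero_le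
        exact (measure_mono (hsub L (h0.symm.le.trans (zpow_nonneg hp0.le _)))).trans (h L x)
      simp [this]
    · -- `L` is the level with `p ^ (-(L + 1)) < r ≤ p ^ (-L)`
      obtain ⟨L, hL1, hL2⟩ := exists_nat_pow_near_of_lt_one h0 hr1 (inv_pos.2 hp0)
        (inv_lt_one_of_one_lt₀ hp1)
      have hL2' : r ≤ (p : ℝ) ^ (-(L : ℤ)) := by
        rw [zpow_neg, zpow_natCast, ← inv_pow]; exact hL2
      have h3 : (p : ℝ) ^ (-s) * (p : ℝ) ^ (-(L : ℝ) * s) ≤ r ^ s := by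
        have : (p : ℝ) ^ (-s) * (p : ℝ) ^ (-(L : ℝ) * s) = (((p : ℝ)⁻¹) ^ (L + 1)) ^ s := by
          rw [← Real.rpow_neg_one, ← Real.rpow_natCast, ← Real.rpow_mul hp0.le,
            ← Real.rpow_mul hp0.le, ← Real.rpow_add hp0]
          congr 1; push_cast; ring
        rw [this]
        exact Real.rpow_le_rpow (by positivity) hL1.le hs.le
      calc (c • ν) A = c * ν A := by simp
        _ ≤ c * ENNReal.ofReal ((p : ℝ) ^ (-(L : ℝ) * s)) := by
          gcongr
          exact (measure_mono (hsub L hL2')).trans (h L x)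
        _ ≤ ENNReal.ofReal (r ^ s) := by
          rw [hc, ← ENNReal.ofReal_mul (Real.rpow_nonneg hp0.le _)]
          exact ENNReal.ofReal_le_ofReal h3
        _ = Metric.ediam A ^ s := by
          rw [← ENNReal.ofReal_rpow_of_pos h0, ENNReal.ofReal_toReal hfin]
  have h4 : μH[s] E ≠ 0 := by
    intro h0
    have := key E
    rw [h0] at this
    simp [hc0, hE] at this
  have := le_dimH_of_hausdorffMeasure_ne_zero (s := E) (d := s.toNNReal)
    (by rwa [Real.coe_toNNReal _ hs.le])
  exact this

/-- Cantor construction: if every cylinder of level `N₀` carries a finer probability measure, whose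
support lies in `E k` together with cylinders of some level `N > N₀`, and which has local dimension
at least `s` between these two levels, then `⋂ k, E k` has Hausdorff dimension at least `s`. -/
theorem cantor {s : ℝ} (hs : 0 < s) (E : ℕ → Set (Fin d → ℤ_[p]))
    (H : ∀ N₀ k : ℕ, ∃ N > N₀, ∀ z : Fin d → ℤ_[p], ∃ μ : PMF (Fin d → ℤ_[p]),
      (∀ y ∈ μ.support, y ∈ cyl N₀ z) ∧ (∀ y ∈ μ.support, cyl N y ⊆ E k) ∧
      ∀ L, N₀ < L → L ≤ N → ∀ x,
        μ.toOuterMeasure (cyl L x) ≤ ENNReal.ofReal ((p : ℝ) ^ (((N₀ : ℝ) - L) * s))) :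
    ENNReal.ofReal s ≤ dimH (⋂ k, E k) := by
  have hp0 := p_pos (p := p)
  choose N' hN' κ hκ1 hκ2 hκ3 using H
  let st : ℕ → PMF (Fin d → ℤ_[p]) × ℕ := fun k => Nat.rec (PMF.pure 0, 0)
    (fun k S => (S.1.bind (κ S.2 k), N' S.2 k)) k
  let ν : ℕ → PMF (Fin d → ℤ_[p]) := fun k => (st k).1
  let N : ℕ → ℕ := fun k => (st k).2
  have hν : ∀ k, ν (k + 1) = (ν k).bind (κ (N k) k) := fun k => rfl
  have hN : ∀ k, N (k + 1) = N' (N k) k := fun k => rfl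
  have hNmono : StrictMono N := strictMono_nat_of_lt_succ fun k => by rw [hN]; exact hN' _ _
  -- masses of sets that are visible at level `N k` no longer change after step `k`
  have hstab : ∀ k (U : Set (Fin d → ℤ_[p])), (∀ x ∈ U, cyl (N k) x ⊆ U) → ∀ l, k ≤ l →
      (ν l).toOuterMeasure U = (ν k).toOuterMeasure U := by
    intro k U hU l hl
    induction l, hl using Nat.le_induction with
    | base => rfl
    | succ l hl ih =>
      rw [hν, bind_sat _ _ (hκ1 (N l) l), ih]
      exact fun x hx => (cyl_anti (hNmono.monotone hl) x).trans (hU x hx)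
  have hbound : ∀ k L, L ≤ N k → ∀ x, (ν k).toOuterMeasure (cyl L x) ≤
      ENNReal.ofReal ((p : ℝ) ^ (-(L : ℝ) * s)) := by
    intro k
    induction k with
    | zero =>
      intro L hL x
      have : L = 0 := Nat.le_zero.1 hL
      subst this
      simp only [CharP.cast_eq_zero, neg_zero, zero_mul, Real.rpow_zero, ENNReal.ofReal_one]
      calc (ν 0).toOuterMeasure (cyl 0 x) ≤ (ν 0).toOuterMeasure Set.univ :=
            (ν 0).toOuterMeasure.mono (Set.subset_univ _)
        _ = 1 := ((ν 0).toOuterMeasure_apply_eq_one_iff _).2 (Set.subset_univ _)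
    | succ k ih =>
      intro L hL x
      by_cases hLk : L ≤ N k
      · rw [hν, bind_sat _ _ (hκ1 (N k) k) (cyl_sat hLk x)]
        exact ih L hLk x
      · push Not at hLk
        rw [hν]
        refine (bind_cyl_le _ _ hLk.le (hκ1 (N k) k) _ x
          (fun z => hκ3 (N k) k z L hLk hL x)).trans ?_
        refine (mul_le_mul_left (ih (N k) le_rfl x) _).trans ?_
        rw [← ENNReal.ofReal_mul (Real.rpow_nonneg hp0.le _), ← Real.rpow_add hp0]
        refine le_of_eq ?_
        congr 2; ring
  have hgood : ∀ k, (ν (k + 1)).toOuterMeasure {x | cyl (N (k + 1)) x ⊆ E k} = 1 := by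
    intro k
    rw [PMF.toOuterMeasure_apply_eq_one_iff, hν]
    intro y hy
    obtain ⟨z, -, hz⟩ := (PMF.mem_support_bind_iff _ _ _).1 hy
    exact hκ2 (N k) k z y hz
  -- the limit measure
  let P : ℕ → ProbabilityMeasure (Fin d → ℤ_[p]) := fun k => ⟨(ν k).toMeasure, inferInstance⟩
  let F : Ultrafilter (ProbabilityMeasure (Fin d → ℤ_[p])) := (Filter.hyperfilter ℕ).map P
  obtain ⟨Q, -, hQ⟩ := isCompact_univ.ultrafilter_le_nhds F (by simp)
  have hlim : Filter.Tendsto P (Filter.hyperfilter ℕ : Filter ℕ) (nhds Q) := hQ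
  have hval : ∀ k (U : Set (Fin d → ℤ_[p])), (∀ x ∈ U, cyl (N k) x ⊆ U) →
      (Q : Measure (Fin d → ℤ_[p])) U = (ν k).toOuterMeasure U := by
    intro k U hU
    have hcl := isClopen_of_sat hU
    have h1 := ProbabilityMeasure.tendsto_measure_of_isClopen_of_tendsto hlim hcl
    have h2 : ∀ᶠ l in (Filter.hyperfilter ℕ : Filter ℕ),
        (P l : Measure (Fin d → ℤ_[p])) U = (ν k).toOuterMeasure U := by
      have : ∀ᶠ l in Filter.atTop, k ≤ l := Filter.eventually_ge_atTop k
      rw [← Nat.cofinite_eq_atTop] at this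
      filter_upwards [Filter.hyperfilter_le_cofinite this] with l hl
      have : (P l : Measure (Fin d → ℤ_[p])) U = (ν l).toMeasure U := rfl
      rw [this, PMF.toMeasure_apply_eq_toOuterMeasure_apply _ hcl.2.measurableSet, hstab k U hU l hl]
    have h3 : Filter.Tendsto (fun l => (P l : Measure (Fin d → ℤ_[p])) U)
        (Filter.hyperfilter ℕ : Filter ℕ) (nhds ((Q : Measure (Fin d → ℤ_[p])) U)) := by
      simpa using (ENNReal.tendsto_coe.2 h1)
    exact tendsto_nhds_unique h3 ((Filter.tendsto_congr' h2).2 tendsto_const_nhds)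
  have hQb : ∀ L x, (Q : Measure (Fin d → ℤ_[p])) (cyl L x) ≤
      ENNReal.ofReal ((p : ℝ) ^ (-(L : ℝ) * s)) := by
    intro L x
    rw [hval L _ (cyl_sat (hNmono.le_apply) x)]
    exact hbound L L hNmono.le_apply x
  refine dimH_ge_of_measure hs (Q : Measure _) _ ?_ hQb
  have hfull : (Q : Measure (Fin d → ℤ_[p])) (⋂ k, E k)ᶜ = 0 := by
    rw [Set.compl_iInter, measure_iUnion_null_iff]
    intro k
    set U := {x | cyl (N (k + 1)) x ⊆ E k} with hU
    have hsat : ∀ x ∈ U, cyl (N (k + 1)) x ⊆ U :=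
      fun x hx y hy z hz => hx (cyl_trans hy hz)
    have h1 : (Q : Measure (Fin d → ℤ_[p])) U = 1 := by rw [hval (k + 1) U hsat, hgood]
    have h2 : (Q : Measure (Fin d → ℤ_[p])) Uᶜ = 0 :=
      (prob_compl_eq_zero_iff (isClopen_of_sat hsat).2.measurableSet).2 h1
    refine measure_mono_null (Set.compl_subset_compl.2 ?_) h2
    exact fun x hx => hx (cyl_self _ x)
  intro h0
  have := measure_union_le (μ := (Q : Measure (Fin d → ℤ_[p]))) (⋂ k, E k) (⋂ k, E k)ᶜ
  rw [Set.union_compl_self, h0, hfull, measure_univ] at this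
  simp at this

end Cantor

/-! ### Avoiding finitely many primes in arithmetic progressions -/

section Sieve

/-- The density of the terms of an arithmetic progression with difference `y` that are not
divisible by any prime of `P`, provided that no prime of `P` divides all terms. -/
noncomputable def sieveDensity (P : Finset ℕ) (y : ℤ) : ℝ :=
  ∏ l ∈ P, if (l : ℤ) ∣ y then (1 : ℝ) else 1 - 1 / l

lemma sieveDensity_bounds (P : Finset ℕ) (hP : ∀ l ∈ P, l.Prime) (y : ℤ) :
    (1 / 2 : ℝ) ^ P.card ≤ sieveDensity P y ∧ sieveDensity P y ≤ 1 := by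
  have h : ∀ l ∈ P, (1 / 2 : ℝ) ≤ (if (l : ℤ) ∣ y then (1 : ℝ) else 1 - 1 / l) ∧
      (if (l : ℤ) ∣ y then (1 : ℝ) else 1 - 1 / l) ≤ 1 := by
    intro l hl
    have h2 : (2 : ℝ) ≤ l := by exact_mod_cast (hP l hl).two_le
    have h3 : (1 : ℝ) / l ≤ 1 / 2 := one_div_le_one_div_of_le (by norm_num) h2
    have h4 : (0 : ℝ) ≤ 1 / l := by positivity
    split_ifs <;> constructor <;> linarith
  constructor
  · rw [← Finset.prod_const]
    exact Finset.prod_le_prod (fun _ _ => by norm_num) fun l hl => (h l hl).1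
  · exact Finset.prod_le_one (fun l hl => by linarith [(h l hl).1]) fun l hl => (h l hl).2

/-- Legendre's sieve: inclusion-exclusion gives the expected count up to `2 ^ |P| - 1`. -/
lemma sieve_count (P : Finset ℕ) (hP : ∀ l ∈ P, l.Prime) :
    ∀ (n : ℕ) (x y : ℤ), (∀ l ∈ P, ¬ ((l : ℤ) ∣ x ∧ (l : ℤ) ∣ y)) →
    |(((Finset.range n).filter fun t : ℕ => ∀ l ∈ P, ¬ (l : ℤ) ∣ x + t * y).card : ℝ)
      - n * sieveDensity P y| ≤ 2 ^ P.card - 1 := by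
  induction P using Finset.induction_on with
  | empty => intro n x y _; simp [sieveDensity]
  | insert l P hl ih =>
    intro n x y hxy
    have hlp : l.Prime := hP l (Finset.mem_insert_self _ _)
    have ih' := ih fun q hq => hP q (Finset.mem_insert_of_mem hq)
    have hxy' : ∀ q ∈ P, ¬ ((q : ℤ) ∣ x ∧ (q : ℤ) ∣ y) :=
      fun q hq => hxy q (Finset.mem_insert_of_mem hq)
    have h0 := ih' n x y hxy'
    rw [Finset.card_insert_of_notMem hl]
    have hpow : (1 : ℝ) ≤ 2 ^ P.card := one_le_pow₀ (by norm_num)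
    by_cases hly : (l : ℤ) ∣ y
    · have hlx : ¬ (l : ℤ) ∣ x := fun h => hxy l (Finset.mem_insert_self _ _) ⟨h, hly⟩
      have e1 : sieveDensity (insert l P) y = sieveDensity P y := by
        rw [sieveDensity, Finset.prod_insert hl, if_pos hly, one_mul, sieveDensity]
      have e2 : ((Finset.range n).filter fun t : ℕ => ∀ q ∈ insert l P, ¬ (q : ℤ) ∣ x + t * y) =
          (Finset.range n).filter fun t : ℕ => ∀ q ∈ P, ¬ (q : ℤ) ∣ x + t * y := by
        refine Finset.filter_congr fun t _ => ?_
        rw [Finset.forall_mem_insert]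
        refine and_iff_right fun h => hlx ?_
        rwa [dvd_add_left (hly.mul_left _)] at h
      rw [e1, e2, pow_succ]
      linarith
    · have hcop : IsCoprime (y : ℤ) (l : ℤ) := by
        exact ((Nat.prime_iff_prime_int.1 hlp).coprime_iff_not_dvd.2 hly).symm
      -- `c` is the residue class of the parameters at which `l` divides the progression
      obtain ⟨c, hcl, hc⟩ : ∃ c : ℕ, c < l ∧ (l : ℤ) ∣ x + c * y := by
        obtain ⟨u, v, huv⟩ := hcop
        refine ⟨((-x * u) % l).toNat, ?_, ?_⟩
        · have h1 := Int.emod_lt_of_pos (-x * u) (Int.natCast_pos.2 hlp.pos)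
          have h2 := Int.emod_nonneg (-x * u) (Int.natCast_ne_zero.2 hlp.ne_zero)
          omega
        · have h2 := Int.emod_nonneg (-x * u) (Int.natCast_ne_zero.2 hlp.ne_zero)
          rw [Int.toNat_of_nonneg h2, Int.emod_def]
          refine ⟨x * v - (-x * u / l) * y, ?_⟩
          linear_combination -x * huv
      have hcx : ∀ t : ℕ, (l : ℤ) ∣ x + t * y ↔ ∃ t' : ℕ, t = c + l * t' := by
        intro t
        constructor
        · intro h
          have h1 : (l : ℤ) ∣ ((t : ℤ) - c) * y := by
            have := dvd_sub h hc
            rwa [show x + t * y - (x + c * y) = ((t : ℤ) - c) * y by ring] at this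
          obtain ⟨k, hk⟩ := hcop.symm.dvd_of_dvd_mul_right h1
          have hk0 : 0 ≤ k := by
            by_contra! hneg
            have : (l : ℤ) * k ≤ l * (-1) := by gcongr; omega
            omega
          refine ⟨k.toNat, ?_⟩
          zify
          rw [Int.toNat_of_nonneg hk0]
          linarith
        · rintro ⟨t', rfl⟩
          push_cast
          rw [show x + (c + l * t') * y = x + c * y + l * (t' * y) by ring]
          exact dvd_add hc (dvd_mul_right _ _)
      set n' : ℕ := (n + l - 1 - c) / l with hn'
      have hlt : ∀ t' : ℕ, t' < n' ↔ c + l * t' < n := by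
        intro t'
        rw [← Nat.succ_le_iff, hn', Nat.le_div_iff_mul_le hlp.pos, Nat.succ_mul, mul_comm l]
        omega
      have h1 := ih' n' (x + c * y) (l * y) (by
        rintro q hq ⟨ha, hb⟩
        have hqp := hP q (Finset.mem_insert_of_mem hq)
        rcases (Nat.prime_iff_prime_int.1 hqp).dvd_mul.1 hb with h | h
        · have := (Nat.prime_dvd_prime_iff_eq hqp hlp).1 (Int.natCast_dvd_natCast.1 h)
          exact hl (this ▸ hq)
        · exact hxy' q hq ⟨(dvd_add_left (h.mul_left _)).1 ha, h⟩)
      have e0 : sieveDensity P (l * y) = sieveDensity P y := by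
        refine Finset.prod_congr rfl fun q hq => ?_
        have hqp := hP q (Finset.mem_insert_of_mem hq)
        have : (q : ℤ) ∣ l * y ↔ (q : ℤ) ∣ y := by
          rw [(Nat.prime_iff_prime_int.1 hqp).dvd_mul]
          refine or_iff_right fun h => ?_
          have := (Nat.prime_dvd_prime_iff_eq hqp hlp).1 (Int.natCast_dvd_natCast.1 h)
          exact hl (this ▸ hq)
        simp only [this]
      have e1 : sieveDensity (insert l P) y = (1 - 1 / l) * sieveDensity P y := by
        rw [sieveDensity, Finset.prod_insert hl, if_neg hly, sieveDensity]
      have e2 : (((Finset.range n).filter fun t : ℕ =>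
            ∀ q ∈ insert l P, ¬ (q : ℤ) ∣ x + t * y).card : ℝ) +
          ((Finset.range n').filter fun t : ℕ =>
            ∀ q ∈ P, ¬ (q : ℤ) ∣ (x + c * y) + t * (l * y)).card =
          ((Finset.range n).filter fun t : ℕ => ∀ q ∈ P, ¬ (q : ℤ) ∣ x + t * y).card := by
        have hinj : Set.InjOn (fun t' : ℕ => c + l * t')
            (((Finset.range n').filter fun t : ℕ =>
              ∀ q ∈ P, ¬ (q : ℤ) ∣ (x + c * y) + t * (l * y)) : Set ℕ) := by
          intro a _ b _ hab
          exact Nat.eq_of_mul_eq_mul_left hlp.pos (Nat.add_left_cancel hab)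
        rw [← Finset.card_image_of_injOn hinj, ← Nat.cast_add, ← Finset.card_union_of_disjoint]
        · congr 2
          ext t
          simp only [Finset.mem_union, Finset.mem_filter, Finset.mem_range, Finset.mem_image,
            Finset.forall_mem_insert]
          constructor
          · rintro (⟨h, -, h'⟩ | ⟨t', ⟨h, h'⟩, rfl⟩)
            · exact ⟨h, h'⟩
            · refine ⟨(hlt t').1 h, fun q hq hd => h' q hq ?_⟩
              push_cast at hd
              rwa [show x + c * y + t' * (l * y) = x + (c + l * t') * y by ring]
          · rintro ⟨h, h'⟩
            by_cases hd : (l : ℤ) ∣ x + t * y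
            · obtain ⟨t', rfl⟩ := (hcx t).1 hd
              refine Or.inr ⟨t', ⟨(hlt t').2 h, fun q hq hd' => h' q hq ?_⟩, rfl⟩
              push_cast
              rwa [show x + (c + l * t') * y = x + c * y + t' * (l * y) by ring]
            · exact Or.inl ⟨h, hd, h'⟩
        · rw [Finset.disjoint_left]
          intro t ht ht'
          obtain ⟨t', -, rfl⟩ := Finset.mem_image.1 ht'
          exact (Finset.forall_mem_insert _ _ _ |>.1 (Finset.mem_filter.1 ht).2).1
            ((hcx _).2 ⟨t', rfl⟩)
      have hl0 : (0 : ℝ) < l := by exact_mod_cast hlp.pos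
      have h3 : |(n' : ℝ) - n / l| ≤ 1 := by
        have a1 : n' * l ≤ n + l - 1 - c := Nat.div_mul_le_self _ _
        have a2 : n + l - 1 - c < (n' + 1) * l := by
          rw [← Nat.div_lt_iff_lt_mul hlp.pos]; exact Nat.lt_succ_self _
        have a1' : n' * l ≤ n + l := by omega
        have a2' : n ≤ (n' + 1) * l := by omega
        have b1 : (n' : ℝ) * l ≤ n + l := by exact_mod_cast a1'
        have b2 : (n : ℝ) ≤ (n' + 1) * l := by exact_mod_cast a2'
        rw [abs_le]
        constructor
        · have : (n : ℝ) / l ≤ n' + 1 := (div_le_iff₀ hl0).2 b2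
          linarith
        · have : (n' : ℝ) - 1 ≤ n / l := (le_div_iff₀ hl0).2 (by linarith)
          linarith
      obtain ⟨d1, d2⟩ := sieveDensity_bounds P (fun q hq => hP q (Finset.mem_insert_of_mem hq)) y
      have d0 : 0 ≤ sieveDensity P y := le_trans (by positivity) d1
      rw [e0] at h1
      rw [e1]
      have h4 : |sieveDensity P y * ((n' : ℝ) - n / l)| ≤ 1 := by
        rw [abs_mul, abs_of_nonneg d0]
        exact mul_le_one₀ d2 (abs_nonneg _) h3
      rw [abs_le] at h0 h1 h4 ⊢
      have e3 : (n : ℝ) * ((1 - 1 / l) * sieveDensity P y) = n * sieveDensity P y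
          - n' * sieveDensity P y + sieveDensity P y * ((n' : ℝ) - n / l) := by ring
      rw [e3, pow_succ]
      constructor <;> linarith [e2, h0.1, h0.2, h1.1, h1.2, h4.1, h4.2]

/-- A progression in which no prime of `P` divides all terms has, among its first `4 ^ |P|`
terms, one that is not divisible by any prime of `P`. -/
lemma exists_sieved (P : Finset ℕ) (hP : ∀ l ∈ P, l.Prime) (x y : ℤ)
    (hxy : ∀ l ∈ P, ¬ ((l : ℤ) ∣ x ∧ (l : ℤ) ∣ y)) :
    ∃ t : ℕ, t < 4 ^ P.card ∧ ∀ l ∈ P, ¬ (l : ℤ) ∣ x + t * y := by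
  have h := sieve_count P hP (4 ^ P.card) x y hxy
  have hd := (sieveDensity_bounds P hP y).1
  have h4 : (4 : ℝ) ^ P.card * (1 / 2) ^ P.card = 2 ^ P.card := by
    rw [← mul_pow]; norm_num
  have h5 : (2 : ℝ) ^ P.card ≤ 4 ^ P.card * sieveDensity P y := by
    rw [← h4]; gcongr
  by_contra! hcon
  rw [Finset.filter_false_of_mem (fun t ht => by
    have := hcon t (Finset.mem_range.1 ht)
    push Not
    exact this)] at h
  push_cast at h
  rw [Finset.card_empty, Nat.cast_zero, zero_sub, abs_neg] at h
  linarith [le_abs_self ((4 : ℝ) ^ P.card * sieveDensity P y)]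

/-- The number `4 ^ ω(n)` grows more slowly than any power of `n`. -/
lemma four_pow_omega_le (ε : ℝ) (hε : 0 < ε) :
    ∃ C : ℝ, 0 < C ∧ ∀ n : ℕ, 1 ≤ n → (4 : ℝ) ^ n.primeFactors.card ≤ C * (n : ℝ) ^ ε := by
  obtain ⟨Y, hY⟩ := exists_nat_gt ((4 : ℝ) ^ (1 / ε))
  refine ⟨4 ^ Y, by positivity, fun n hn => ?_⟩
  have h1 : ∀ l ∈ n.primeFactors, (4 : ℝ) ≤ (if l < Y then 4 else 1) * (l : ℝ) ^ ε := by
    intro l hl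
    have hl1 : (1 : ℝ) ≤ l := by exact_mod_cast (Nat.prime_of_mem_primeFactors hl).one_le
    split_ifs with h
    · linarith [Real.one_le_rpow hl1 hε.le]
    · have : (4 : ℝ) ^ (1 / ε) ≤ l := hY.le.trans (by exact_mod_cast not_lt.1 h)
      have := Real.rpow_le_rpow (by positivity) this hε.le
      rw [← Real.rpow_mul (by norm_num), one_div_mul_cancel hε.ne', Real.rpow_one] at this
      linarith
  rw [← Finset.prod_const]
  refine (Finset.prod_le_prod (fun _ _ => by norm_num) h1).trans ?_
  rw [Finset.prod_mul_distrib]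
  gcongr
  · rw [← Finset.prod_filter, Finset.prod_const]
    refine pow_le_pow_right₀ (by norm_num) ?_
    refine (Finset.card_le_card (t := Finset.range Y) fun l hl => ?_).trans (by simp)
    exact Finset.mem_range.2 (Finset.mem_filter.1 hl).2
  · rw [Real.finsetProd_rpow _ _ (fun _ _ => Nat.cast_nonneg _)]
    refine Real.rpow_le_rpow (by positivity) ?_ hε.le
    rw [← Nat.cast_prod]
    exact Nat.cast_le.2 (Nat.le_of_dvd hn (Nat.prod_primeFactors_dvd n))

end Sieve

/-! ### Covering radius of integer lattices without short vectors -/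

section Covering

variable {ι : Type*} [Fintype ι] {G : Type*} [AddCommGroup G]

/-- Moving an integer by at most `c` towards the origin. -/
lemma exists_shrink (c : ℕ) (z : ℤ) :
    ∃ w : ℤ, |z - w| ≤ c ∧ ∀ R : ℤ, c ≤ R → |z| ≤ R → |w| ≤ R - c := by
  refine ⟨z - max (-(c : ℤ)) (min z c), ?_, fun R hc hz => ?_⟩
  · rw [abs_le]
    omega
  · rw [abs_le] at hz ⊢
    omega

/-- Suppose that the lattice `ker φ` has no nonzero vector of sup-norm at most `h`. If `z` has
distance exactly `R` to the lattice, then walking from `z` to a nearest lattice point one finds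
about `R / (2 * h + 1)` boxes of side `h` whose translates by the lattice are disjoint. -/
lemma covering_aux [Fintype G] (φ : (ι → ℤ) →+ G) (h : ℕ)
    (hh : ∀ z : ι → ℤ, (∀ i, |z i| ≤ h) → φ z = 0 → z = 0) (R : ℕ) (z : ι → ℤ)
    (hz : ∀ i, |z i| ≤ R) (hmin : ∀ l : ι → ℤ, φ l = 0 → ∀ R' : ℤ, (∀ i, |z i - l i| ≤ R') →
      (R : ℤ) ≤ R') :
    (R / (2 * h + 1) + 1) * (h + 1) ^ Fintype.card ι ≤ Fintype.card G := by
  choose w hw1 hw2 using fun (j : ℕ) (i : ι) => exists_shrink (j * (2 * h + 1)) (z i)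
  have hJ : ∀ j : ℕ, j < R / (2 * h + 1) + 1 → j * (2 * h + 1) ≤ R := fun j hj =>
    (Nat.le_div_iff_mul_le (by omega)).1 (Nat.lt_succ_iff.1 hj)
  have hwR : ∀ j : ℕ, j < R / (2 * h + 1) + 1 → ∀ i,
      |w j i| ≤ (R : ℤ) - (j * (2 * h + 1) : ℕ) := fun j hj i =>
    hw2 j i R (by exact_mod_cast hJ j hj) (hz i)
  have hne : ∀ j j' : ℕ, j < j' → j' < R / (2 * h + 1) + 1 → ∀ b b' : ι → Fin (h + 1),
      φ (fun i => w j i + (b i : ℕ)) ≠ φ (fun i => w j' i + (b' i : ℕ)) := by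
    intro j j' hjj hj' b b' heq
    have h1 := hmin (fun i => (w j i + (b i : ℕ)) - (w j' i + (b' i : ℕ))) (by
      have := map_sub φ (fun i => w j i + ((b i : ℕ) : ℤ)) (fun i => w j' i + ((b' i : ℕ) : ℤ))
      rw [heq, sub_self] at this
      exact this) (R - (j' * (2 * h + 1) : ℕ) + h + (j * (2 * h + 1) : ℕ)) (by
      intro i
      have a1 := hwR j' hj' i
      have a2 := hw1 j i
      have a3 := (b i).2
      have a4 := (b' i).2
      rw [abs_le] at a1 a2 ⊢
      omega)
    have h2 : (j + 1) * (2 * h + 1) ≤ j' * (2 * h + 1) := Nat.mul_le_mul_right _ hjj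
    rw [Nat.succ_mul] at h2
    omega
  have hinj : Function.Injective (fun jb : Fin (R / (2 * h + 1) + 1) × (ι → Fin (h + 1)) =>
      φ (fun i => w jb.1 i + ((jb.2 i : ℕ) : ℤ))) := by
    rintro ⟨j, b⟩ ⟨j', b'⟩ heq
    rcases lt_trichotomy (j : ℕ) j' with hlt | heq' | hlt
    · exact absurd heq (hne j j' hlt j'.2 b b')
    · obtain rfl : j = j' := Fin.ext heq'
      have h1 : (fun i => ((b i : ℕ) : ℤ) - (b' i : ℕ)) = 0 := by
        refine hh _ (fun i => ?_) ?_
        · have a3 := (b i).2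
          have a4 := (b' i).2
          rw [abs_le]
          omega
        · have := map_sub φ (fun i => w j i + ((b i : ℕ) : ℤ)) (fun i => w j i + ((b' i : ℕ) : ℤ))
          rw [show φ (fun i => w j i + ((b i : ℕ) : ℤ)) = _ from heq, sub_self] at this
          rw [← this]
          congr 1
          funext i
          simp
      have h2 : b = b' := by
        funext i
        have := congrFun h1 i
        simp only [Pi.zero_apply] at this
        exact Fin.ext (by omega)
      rw [h2]
    · exact absurd heq.symm (hne j' j hlt j.2 b' b)
  have := Fintype.card_le_of_injective _ hinj
  simpa using this

/-- A lattice `ker φ` of index at most `|G|` without nonzero vectors of sup-norm at most `h` has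
covering radius at most `2 * |G| / (h + 1) ^ (n - 1)`. -/
lemma covering [Fintype G] (φ : (ι → ℤ) →+ G) (h : ℕ)
    (hh : ∀ z : ι → ℤ, (∀ i, |z i| ≤ h) → φ z = 0 → z = 0) (m R : ℕ)
    (hm : Fintype.card ι = m + 1) (hR : 2 * Fintype.card G ≤ R * (h + 1) ^ m) (z : ι → ℤ) :
    ∃ l : ι → ℤ, φ l = 0 ∧ ∀ i, |z i - l i| ≤ R := by
  have hex : ∃ D : ℕ, ∃ l : ι → ℤ, φ l = 0 ∧ ∀ i, |z i - l i| ≤ D :=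
    ⟨∑ i, (z i).natAbs, 0, map_zero φ, fun i => by
      rw [Pi.zero_apply, sub_zero, Int.abs_eq_natAbs]
      exact_mod_cast Finset.single_le_sum (f := fun i => (z i).natAbs) (fun _ _ => Nat.zero_le _)
        (Finset.mem_univ i)⟩
  have hne : Nonempty ι := Fintype.card_pos_iff.1 (by omega)
  obtain ⟨l, hl, hD⟩ := Nat.find_spec hex
  have hmin := fun D => Nat.find_min' hex (m := D)
  set D := Nat.find hex
  have key := covering_aux φ h hh D (fun i => z i - l i) hD (by
    intro l' hl' R' hR'
    have h0 : 0 ≤ R' := (abs_nonneg _).trans (hR' hne.some)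
    have := hmin R'.toNat ⟨l + l', by rw [map_add, hl, hl', add_zero], fun i => by
      rw [Int.toNat_of_nonneg h0, Pi.add_apply, ← sub_sub]
      exact hR' i⟩
    omega)
  have h1 : D < (D / (2 * h + 1) + 1) * (2 * h + 1) := by
    rw [← Nat.div_lt_iff_lt_mul (by omega)]
    exact Nat.lt_succ_self _
  have h2 : D * (h + 1) ^ m < R * (h + 1) ^ m := by
    have hpos : 0 < (h + 1) ^ m := by positivity
    rw [hm, pow_succ] at key
    calc D * (h + 1) ^ m < (D / (2 * h + 1) + 1) * (2 * h + 1) * (h + 1) ^ m :=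
          Nat.mul_lt_mul_of_pos_right h1 hpos
      _ ≤ (D / (2 * h + 1) + 1) * (2 * (h + 1)) * (h + 1) ^ m := by gcongr; omega
      _ = 2 * ((D / (2 * h + 1) + 1) * ((h + 1) ^ m * (h + 1))) := by ring
      _ ≤ 2 * Fintype.card G := by gcongr
      _ ≤ R * (h + 1) ^ m := hR
  have h3 : D < R := Nat.lt_of_mul_lt_mul_right h2
  exact ⟨l, hl, fun i => (hD i).trans (by exact_mod_cast h3.le)⟩

/-- A lattice of covering radius at most `R` is generated by its vectors of norm at most
`2 * R + 1`; hence a linear condition modulo `q` that fails somewhere fails on such a vector. -/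
lemma exists_short_not_dvd (φ : (ι → ℤ) →+ G) (R : ℕ)
    (hR : ∀ z : ι → ℤ, ∃ l : ι → ℤ, φ l = 0 ∧ ∀ i, |z i - l i| ≤ R) (i₀ : ι) (q : ℤ)
    (v : ι → ℤ) (hv : φ v = 0) (hqv : ¬ q ∣ v i₀) :
    ∃ b : ι → ℤ, φ b = 0 ∧ (∀ i, |b i| ≤ 2 * R + 1) ∧ ¬ q ∣ b i₀ := by
  by_contra! hcon
  have key : ∀ n : ℕ, ∀ l : ι → ℤ, φ l = 0 → (∀ i, |l i| ≤ n) → q ∣ l i₀ := by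
    intro n
    induction n with
    | zero =>
      intro l hl hn
      exact hcon l hl fun i => (hn i).trans (by push_cast; omega)
    | succ n ih =>
      intro l hl hn
      by_cases hs : n + 1 ≤ 2 * R + 1
      · exact hcon l hl fun i => (hn i).trans (by push_cast; omega)
      choose w hw1 hw2 using fun i => exists_shrink (R + 1) (l i)
      obtain ⟨l', hl', hd⟩ := hR w
      have h1 : q ∣ l' i₀ := ih l' hl' fun i => by
        have a1 := hw2 i (n + 1 : ℕ) (by push_cast; omega) (hn i)
        have a2 := hd i
        rw [abs_le] at a1 a2 ⊢
        push_cast at *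
        omega
      have h2 : q ∣ (l - l') i₀ := hcon (l - l') (by rw [map_sub, hl, hl', sub_zero]) fun i => by
        have a1 := hw1 i
        have a2 := hd i
        rw [Pi.sub_apply]
        rw [abs_le] at a1 a2 ⊢
        push_cast at *
        omega
      have := dvd_add h2 h1
      rwa [Pi.sub_apply, sub_add_cancel] at this
  exact hqv (key (∑ i, (v i).natAbs) v hv fun i => by
    rw [Int.abs_eq_natAbs]
    exact_mod_cast Finset.single_le_sum (f := fun i => (v i).natAbs) (fun _ _ => Nat.zero_le _)
      (Finset.mem_univ i))

end Covering

/-! ### Lattice vectors with coprimality conditions -/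

section Coprime

variable {m : ℕ} {G : Type*} [AddCommGroup G]

/-- If the lattice contains a vector with zeroth coordinate `1`, there is near every point a lattice
vector whose zeroth coordinate is not divisible by any of finitely many given primes. The primes are
treated one at a time: adding a short lattice vector whose zeroth coordinate is prime to `l`
(`exists_short_not_dvd`) gives a progression to which `exists_sieved` applies. -/
lemma exists_sieved_near (φ : (Fin (m + 1) → ℤ) →+ G) (R : ℕ)
    (hR : ∀ z : Fin (m + 1) → ℤ, ∃ l : Fin (m + 1) → ℤ, φ l = 0 ∧ ∀ i, |z i - l i| ≤ R)
    (u : Fin (m + 1) → ℤ) (hu : φ u = 0) (hu0 : u 0 = 1) (P : Finset ℕ)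
    (hP : ∀ l ∈ P, l.Prime) (A : ℕ) (hA : 4 ^ P.card ≤ A) (c : Fin (m + 1) → ℤ) :
    ∃ v : Fin (m + 1) → ℤ, φ v = 0 ∧ (∀ i, |v i - c i| ≤ R + P.card * (A * (2 * R + 1) : ℕ)) ∧
      ∀ l ∈ P, ¬ (l : ℤ) ∣ v 0 := by
  induction P using Finset.induction_on with
  | empty =>
    obtain ⟨v, hv, hd⟩ := hR c
    exact ⟨v, hv, fun i => by rw [abs_sub_comm]; simpa using hd i, by simp⟩
  | insert l P hl ih =>
    rw [Finset.card_insert_of_notMem hl] at hA ⊢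
    have hA' : 4 ^ P.card ≤ A := le_trans (Nat.pow_le_pow_right (by norm_num) (Nat.le_succ _)) hA
    obtain ⟨v, hv, hd, hvP⟩ := ih (fun q hq => hP q (Finset.mem_insert_of_mem hq)) hA'
    obtain ⟨b, hb, hbR, hbl⟩ := exists_short_not_dvd φ R hR 0 (l : ℤ) u hu (by
      rw [hu0]
      exact fun h => (Nat.prime_iff_prime_int.1 (hP l (Finset.mem_insert_self _ _))).not_isUnit
        (isUnit_of_dvd_one h))
    obtain ⟨t, ht, hts⟩ := exists_sieved (insert l P) hP (v 0) (b 0) (by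
      intro q hq ⟨h1, h2⟩
      rcases Finset.mem_insert.1 hq with rfl | hq
      · exact hbl h2
      · exact hvP q hq h1)
    rw [Finset.card_insert_of_notMem hl] at ht
    refine ⟨v + t • b, by rw [map_add, map_nsmul, hv, hb, smul_zero, add_zero], fun i => ?_, ?_⟩
    · have h1 : |(t : ℤ) * b i| ≤ (A * (2 * R + 1) : ℕ) := by
        rw [abs_mul, Nat.abs_cast]
        push_cast
        have h2 : (t : ℤ) ≤ A := by exact_mod_cast (ht.trans_le hA).le
        exact mul_le_mul h2 (hbR i) (abs_nonneg _) (by positivity)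
      have h2 := hd i
      have h3 : (v + t • b) i - c i = (v i - c i) + t * b i := by
        rw [Pi.add_apply, Pi.smul_apply, nsmul_eq_mul]; ring
      rw [h3]
      refine (abs_add_le _ _).trans ?_
      push_cast at *
      linarith
    · intro q hq
      simpa using hts q hq

/-- Near every point `c`, in suitable orthants, there is a lattice vector `q` whose zeroth
coordinate is prime to `p` and to all other coordinates. A vector `v` with `v 0` prime to
`w 0` is moved along `w`: the determinants `v 0 * w i - v i * w 0` do not change, and `q 0`
only has to avoid their prime factors. -/
lemma exists_coprime_near (φ : (Fin (m + 1) → ℤ) →+ G) (R : ℕ)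
    (hR : ∀ z : Fin (m + 1) → ℤ, ∃ l : Fin (m + 1) → ℤ, φ l = 0 ∧ ∀ i, |z i - l i| ≤ R)
    (u : Fin (m + 1) → ℤ) (hu : φ u = 0) (hu0 : u 0 = 1)
    (w : Fin (m + 1) → ℤ) (hw : φ w = 0) (hw0 : 0 < w 0) (hwR : ∀ i, |w i| ≤ 2 * R + 1)
    (p : ℕ) (hp : p.Prime) (Q A B : ℕ)
    (hA : ∀ n : ℕ, 1 ≤ n → n ≤ 2 * Q ^ 2 → 4 ^ n.primeFactors.card ≤ A)
    (hB : B = (2 * R + 1) * (A ^ 2 + 4 * A ^ m + 1))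
    (c : Fin (m + 1) → ℤ) (h0 : (B : ℤ) < c 0)
    (hi : ∀ i : Fin m, (0 ≤ w i.succ ∧ c i.succ < -B) ∨ (w i.succ ≤ 0 ∧ (B : ℤ) < c i.succ))
    (hQ : ∀ i, |c i| + B ≤ Q) :
    ∃ q : Fin (m + 1) → ℤ, φ q = 0 ∧ (∀ i, |q i - c i| ≤ B) ∧ ¬ (p : ℤ) ∣ q 0 ∧
      ∀ i : Fin m, Int.gcd (q i.succ) (q 0) = 1 := by
  have hBR : 2 * R + 1 ≤ B := by rw [hB]; exact Nat.le_mul_of_pos_right _ (by positivity)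
  have hwQ : ∀ i, |w i| ≤ Q := fun i => by
    have h1 := hwR i
    have h2 := hQ 0
    have h3 := abs_nonneg (c 0)
    omega
  have hQQ : Q ≤ 2 * Q ^ 2 := by nlinarith
  have hAw : 4 ^ (w 0).natAbs.primeFactors.card ≤ A := by
    refine hA _ (by omega) (le_trans ?_ hQQ)
    have := hwQ 0
    rw [Int.abs_eq_natAbs] at this
    exact_mod_cast this
  have hcard : (w 0).natAbs.primeFactors.card ≤ A :=
    (Nat.lt_pow_self (by norm_num)).le.trans hAw
  obtain ⟨v, hv, hvc, hvw⟩ := exists_sieved_near φ R hR u hu hu0 (w 0).natAbs.primeFactors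
    (fun l hl => Nat.prime_of_mem_primeFactors hl) A hAw c
  have hvB : ∀ i, |v i - c i| ≤ R + A * (A * (2 * R + 1) : ℕ) := fun i => (hvc i).trans (by gcongr)
  have hB1 : R + A * (A * (2 * R + 1)) + 4 * A ^ m * (2 * R + 1) ≤ B := by
    rw [hB]; nlinarith
  have hB2 : R + A * (A * (2 * R + 1)) ≤ B := le_trans (Nat.le_add_right _ _) hB1
  have hB1' : (R : ℤ) + A * (A * (2 * R + 1) : ℕ) + (4 * A ^ m * (2 * R + 1) : ℕ) ≤ B := by
    exact_mod_cast hB1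
  have hB2' : (R : ℤ) + A * (A * (2 * R + 1) : ℕ) ≤ B := by exact_mod_cast hB2
  have hv0 : 0 < v 0 := by
    have := (hvB 0).trans hB2'
    rw [abs_le] at this
    omega
  have hvQ : ∀ i, |v i| ≤ Q := fun i => by
    have h1 := (hvB i).trans hB2'
    have h2 := hQ i
    have := abs_add_le (v i - c i) (c i)
    rw [sub_add_cancel] at this
    omega
  set D : Fin m → ℤ := fun i => v 0 * w i.succ - v i.succ * w 0 with hD
  have hD0 : ∀ i, D i ≠ 0 := by
    intro i
    have h1 := (hvB i.succ).trans hB2'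
    rw [abs_le] at h1
    rcases hi i with ⟨h2, h3⟩ | ⟨h2, h3⟩
    · have h4 : v i.succ < 0 := by omega
      have : 0 < D i := by simp only [hD]; nlinarith
      omega
    · have h4 : 0 < v i.succ := by omega
      have : D i < 0 := by simp only [hD]; nlinarith
      omega
  have hDQ : ∀ i, (D i).natAbs ≤ 2 * Q ^ 2 := by
    intro i
    have h1 : |D i| ≤ 2 * (Q : ℤ) ^ 2 := by
      calc |D i| ≤ |v 0 * w i.succ| + |v i.succ * w 0| := abs_sub _ _
        _ ≤ Q * Q + Q * Q := by
          rw [abs_mul, abs_mul]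
          exact add_le_add (mul_le_mul (hvQ _) (hwQ _) (abs_nonneg _) (by positivity))
            (mul_le_mul (hvQ _) (hwQ _) (abs_nonneg _) (by positivity))
        _ = 2 * (Q : ℤ) ^ 2 := by ring
    rw [Int.abs_eq_natAbs] at h1
    exact_mod_cast h1
  set P : Finset ℕ := insert p (Finset.univ.biUnion fun i => (D i).natAbs.primeFactors) with hP
  have hPp : ∀ l ∈ P, l.Prime := by
    intro l hl
    rw [hP, Finset.mem_insert, Finset.mem_biUnion] at hl
    rcases hl with rfl | ⟨i, -, hl⟩
    · exact hp
    · exact Nat.prime_of_mem_primeFactors hl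
  have hPc : 4 ^ P.card ≤ 4 * A ^ m := by
    have h1 : P.card ≤ (∑ i, (D i).natAbs.primeFactors.card) + 1 :=
      (Finset.card_insert_le _ _).trans (Nat.succ_le_succ Finset.card_biUnion_le)
    calc 4 ^ P.card ≤ 4 ^ ((∑ i, (D i).natAbs.primeFactors.card) + 1) :=
          Nat.pow_le_pow_right (by norm_num) h1
      _ = 4 * ∏ i, 4 ^ (D i).natAbs.primeFactors.card := by
          rw [pow_succ, mul_comm, Finset.prod_pow_eq_pow_sum]
      _ ≤ 4 * ∏ _i : Fin m, A := by
          gcongr with i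
          exact hA _ (Int.natAbs_pos.2 (hD0 i)) (hDQ i)
      _ = 4 * A ^ m := by simp
  obtain ⟨t, ht, hts⟩ := exists_sieved P hPp (v 0) (w 0) (by
    rintro l hl ⟨h1, h2⟩
    refine hvw l ?_ h1
    rw [Nat.mem_primeFactors]
    exact ⟨hPp l hl, Int.natCast_dvd.1 h2, by omega⟩)
  refine ⟨v + t • w, by rw [map_add, map_nsmul, hv, hw, smul_zero, add_zero], fun i => ?_, ?_, ?_⟩
  · have h1 : |(t : ℤ) * w i| ≤ (4 * A ^ m * (2 * R + 1) : ℕ) := by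
      rw [abs_mul, Nat.abs_cast]
      have h2 : (t : ℤ) ≤ (4 * A ^ m : ℕ) := by exact_mod_cast (ht.trans_le hPc).le
      rw [Nat.cast_mul]
      refine mul_le_mul h2 ?_ (abs_nonneg _) (by positivity)
      push_cast
      exact hwR i
    have h3 : (v + t • w) i - c i = (v i - c i) + t * w i := by
      rw [Pi.add_apply, Pi.smul_apply, nsmul_eq_mul]; ring
    rw [h3]
    refine (abs_add_le _ _).trans ?_
    have := hvB i
    omega
  · simpa using hts p (Finset.mem_insert_self _ _)
  · intro i
    by_contra hg
    obtain ⟨l, hl, hlg⟩ := Nat.exists_prime_and_dvd hg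
    have hl1 : (l : ℤ) ∣ (v + t • w) i.succ :=
      (Int.natCast_dvd_natCast.2 hlg).trans (Int.gcd_dvd_left _ _)
    have hl2 : (l : ℤ) ∣ (v + t • w) 0 :=
      (Int.natCast_dvd_natCast.2 hlg).trans (Int.gcd_dvd_right _ _)
    have hlD : (l : ℤ) ∣ D i := by
      have := dvd_sub (hl2.mul_right (w i.succ)) (hl1.mul_right (w 0))
      rwa [Pi.add_apply, Pi.smul_apply, Pi.add_apply, Pi.smul_apply, nsmul_eq_mul, nsmul_eq_mul,
        show (v 0 + t * w 0) * w i.succ - (v i.succ + t * w i.succ) * w 0 = D i by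
          simp only [hD]; ring] at this
    have hlP : l ∈ P := by
      rw [hP, Finset.mem_insert, Finset.mem_biUnion]
      refine Or.inr ⟨i, Finset.mem_univ _, ?_⟩
      rw [Nat.mem_primeFactors]
      exact ⟨hl, Int.natCast_dvd.1 hlD, Int.natAbs_ne_zero.2 (hD0 i)⟩
    exact hts l hlP (by simpa using hl2)

/-- A grid of `J ^ (m + 1)` well separated centres produces that many lattice vectors. -/
lemma exists_many_coprime (φ : (Fin (m + 1) → ℤ) →+ G) (R : ℕ)
    (hR : ∀ z : Fin (m + 1) → ℤ, ∃ l : Fin (m + 1) → ℤ, φ l = 0 ∧ ∀ i, |z i - l i| ≤ R)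
    (u : Fin (m + 1) → ℤ) (hu : φ u = 0) (hu0 : u 0 = 1)
    (p : ℕ) (hp : p.Prime) (Q A B : ℕ)
    (hA : ∀ n : ℕ, 1 ≤ n → n ≤ 2 * Q ^ 2 → 4 ^ n.primeFactors.card ≤ A)
    (hB : B = (2 * R + 1) * (A ^ 2 + 4 * A ^ m + 1)) :
    ∃ S : Finset (Fin (m + 1) → ℤ), (Q / 2 / (2 * B + 1)) ^ (m + 1) ≤ S.card ∧ ∀ q ∈ S,
      φ q = 0 ∧ (Q : ℤ) ≤ 2 * q 0 ∧ q 0 ≤ Q ∧ (∀ i : Fin m, 2 * |q i.succ| ≤ Q) ∧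
      ¬ (p : ℤ) ∣ q 0 ∧ ∀ i : Fin m, Int.gcd (q i.succ) (q 0) = 1 := by
  obtain ⟨w, hw, hwd⟩ := hR (fun i => if i = 0 then R + 1 else 0)
  have hw0 : 0 < w 0 := by
    have := hwd 0
    rw [if_pos rfl, abs_le] at this
    omega
  have hwR : ∀ i, |w i| ≤ 2 * R + 1 := by
    intro i
    have := hwd i
    split_ifs at this <;> rw [abs_le] at this ⊢ <;> omega
  set J := Q / 2 / (2 * B + 1) with hJ
  have hJQ : J * (2 * B + 1) ≤ Q / 2 := Nat.div_mul_le_self _ _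
  -- the centres of the grid
  let c : (Fin (m + 1) → Fin J) → Fin (m + 1) → ℤ := fun e => Fin.cons
    (((Q + 1) / 2 + B + (e 0 : ℕ) * (2 * B + 1) : ℕ) : ℤ)
    (fun i => (if 0 ≤ w i.succ then -1 else 1) *
      ((B + 1 + (e i.succ : ℕ) * (2 * B + 1) : ℕ) : ℤ))
  have hc0 : ∀ e, c e 0 = ((Q + 1) / 2 + B + (e 0 : ℕ) * (2 * B + 1) : ℕ) := fun e => rfl
  have hci : ∀ e (i : Fin m), c e i.succ = (if 0 ≤ w i.succ then -1 else 1) *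
      ((B + 1 + (e i.succ : ℕ) * (2 * B + 1) : ℕ) : ℤ) := fun e i => rfl
  have heJ : ∀ (e : Fin J), (e : ℕ) * (2 * B + 1) + (2 * B + 1) ≤ Q / 2 := fun e => by
    rw [← Nat.succ_mul]
    exact (Nat.mul_le_mul_right _ e.2).trans hJQ
  have key : ∀ e, ∃ q : Fin (m + 1) → ℤ, φ q = 0 ∧ (∀ i, |q i - c e i| ≤ B) ∧ ¬ (p : ℤ) ∣ q 0 ∧
      ∀ i : Fin m, Int.gcd (q i.succ) (q 0) = 1 := by
    intro e
    refine exists_coprime_near φ R hR u hu hu0 w hw hw0 hwR p hp Q A B hA hB (c e) ?_ ?_ ?_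
    · rw [hc0]
      have := heJ (e 0)
      push_cast
      have : (1 : ℤ) ≤ (Q + 1) / 2 := by omega
      have : (0 : ℤ) ≤ (e 0 : ℕ) * (2 * B + 1) := by positivity
      omega
    · intro i
      rw [hci]
      have : (0 : ℤ) ≤ (e i.succ : ℕ) * (2 * B + 1) := by positivity
      push_cast
      split_ifs with h
      · left; constructor <;> linarith
      · right; constructor <;> linarith
    · intro i
      refine Fin.cases ?_ (fun i => ?_) i
      · rw [hc0, Nat.abs_cast]
        have := heJ (e 0)
        omega
      · rw [hci, abs_mul, Nat.abs_cast]
        have := heJ (e i.succ)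
        split_ifs <;> simp only [abs_neg, abs_one, one_mul] <;> omega
  choose q hq1 hq2 hq3 hq4 using key
  have hsep : ∀ a b B : ℕ, a < b → a * (2 * B + 1) + (2 * B + 1) ≤ b * (2 * B + 1) := by
    intro a b B h
    rw [← Nat.succ_mul]
    exact Nat.mul_le_mul_right _ h
  have hinj : Function.Injective q := by
    intro e e' hee
    funext i
    have h1 := hq2 e i
    have h2 := hq2 e' i
    rw [hee] at h1
    rw [abs_le] at h1 h2
    by_contra hne
    revert h1 h2 hne
    refine Fin.cases ?_ (fun i => ?_) i
    · intro h1 h2 hne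
      rw [hc0] at h1 h2
      rcases lt_or_gt_of_ne (fun h => hne (Fin.ext h)) with h | h <;>
        have := hsep _ _ B h <;> omega
    · intro h1 h2 hne
      rw [hci] at h1 h2
      rcases lt_or_gt_of_ne (fun h => hne (Fin.ext h)) with h | h <;>
        have := hsep _ _ B h <;> split_ifs at h1 h2 <;> omega
  refine ⟨Finset.univ.image q, ?_, ?_⟩
  · rw [Finset.card_image_of_injective _ hinj, Finset.card_univ]
    simp
  · intro x hx
    obtain ⟨e, -, rfl⟩ := Finset.mem_image.1 hx
    have h0 := hq2 e 0
    rw [hc0, abs_le] at h0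
    have h1 := heJ (e 0)
    refine ⟨hq1 e, by omega, by omega, fun i => ?_, hq3 e, hq4 e⟩
    have h2 := hq2 e i.succ
    have h3 := heJ (e i.succ)
    rw [hci] at h2
    split_ifs at h2 <;> rw [abs_le] at h2 <;>
      · have : |q e i.succ| ≤ (Q / 2 : ℕ) := by
          rw [abs_le]; constructor <;> omega
        omega

end Coprime

/-! ### Denominators of good approximations to `α` -/

section Denominators

variable {p : ℕ} [Fact p.Prime] {m : ℕ}

lemma eventually_le_rpow (c ε : ℝ) (hε : 0 < ε) :
    ∀ᶠ M : ℕ in Filter.atTop, c ≤ ((p : ℝ) ^ M) ^ ε :=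
  ((tendsto_rpow_atTop hε).comp
    (tendsto_pow_atTop_atTop_of_one_lt (one_lt_p (p := p)))).eventually_ge_atTop c

/-- Upper bound encoded in the exponent: if the exponents `σ i` have sum larger than `m + 1`, then
the system with these exponents has no solutions for large `Q`. -/
lemma exists_dioExp_bound (α : Fin m → ℤ_[p])
    (hα : dioExp α = (m : ℝ) + 1) (σ : Fin m → ℝ) (hσ : (m : ℝ) + 1 < ∑ i, σ i) :
    ∃ Q₀ : ℕ, ∀ Q : ℕ, Q₀ ≤ Q → ∀ (q₀ : ℤ) (q : Fin m → ℤ), 0 < q₀ → q₀ ≤ Q →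
      (∀ i, |q i| ≤ (Q : ℤ)) → ∃ i, (Q : ℝ) ^ (-(σ i)) ≤ ‖(q₀ : ℤ_[p]) * α i - (q i : ℤ_[p])‖ := by
  by_contra! hcon
  have hbdd : BddAbove {s : ℝ | ∃ τ : Fin m → ℝ, s = ∑ i, τ i ∧
      ∀ Q₀ : ℕ, ∃ Q : ℕ, Q₀ ≤ Q ∧ ∃ q₀ : ℤ, ∃ q : Fin m → ℤ,
        0 < q₀ ∧ q₀ ≤ (Q : ℤ) ∧ (∀ i, |q i| ≤ (Q : ℤ)) ∧
        ∀ i, ‖(q₀ : ℤ_[p]) * α i - (q i : ℤ_[p])‖ < (Q : ℝ) ^ (-(τ i))} := by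
    by_contra h
    -- the supremum of an unbounded set of reals is `0` by convention
    rw [dioExp, Real.sSup_of_not_bddAbove h] at hα
    have : (0 : ℝ) < m + 1 := by positivity
    linarith
  have := le_csSup hbdd ⟨σ, rfl, fun Q₀ => by
    obtain ⟨Q, h1, q₀, q, h2, h3, h4, h5⟩ := hcon Q₀
    exact ⟨Q, h1, q₀, q, h2, h3, h4, h5⟩⟩
  rw [dioExp] at hα
  linarith

/-- The level of congruence that expresses `‖x‖ < (p ^ M) ^ (-b)`. -/
noncomputable def lev (M : ℕ) (b : ℝ) : ℕ := ⌊(M : ℝ) * b⌋₊ + 1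

lemma rpow_lt_pow_lev (M : ℕ) (b : ℝ) : ((p : ℝ) ^ M) ^ b < (p : ℝ) ^ lev M b := by
  rw [← Real.rpow_natCast, ← Real.rpow_natCast, ← Real.rpow_mul p_pos.le]
  refine Real.rpow_lt_rpow_of_exponent_lt one_lt_p ?_
  rw [lev]; push_cast
  exact Nat.lt_floor_add_one _

lemma pow_lev_le (M : ℕ) {b : ℝ} (hb : 0 ≤ b) :
    (p : ℝ) ^ lev M b ≤ p * ((p : ℝ) ^ M) ^ b := by
  rw [lev, pow_succ, mul_comm, ← Real.rpow_natCast, ← Real.rpow_natCast, ← Real.rpow_mul p_pos.le]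
  refine mul_le_mul_of_nonneg_left (Real.rpow_le_rpow_of_exponent_le one_lt_p.le ?_) p_pos.le
  exact Nat.floor_le (by positivity)

lemma norm_lt_of_pow_lev_dvd {M : ℕ} {b : ℝ} {x : ℤ_[p]} (h : (p : ℤ_[p]) ^ lev M b ∣ x) :
    ‖x‖ < ((p : ℝ) ^ M) ^ (-b) := by
  refine ((pow_dvd_iff_norm _ _).1 h).trans_lt ?_
  have hX : (0 : ℝ) < (p : ℝ) ^ M := pow_pos p_pos _
  rw [zpow_neg, zpow_natCast, Real.rpow_neg hX.le]
  exact inv_strictAnti₀ (Real.rpow_pos_of_pos hX _) (rpow_lt_pow_lev M b)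

lemma lt_lev {M : ℕ} {b : ℝ} (hb : 1 < b) : M < lev M b := by
  rw [lev, Nat.lt_succ_iff]
  refine Nat.le_floor ?_
  nlinarith [(Nat.cast_nonneg M : (0 : ℝ) ≤ M)]

/-- The vectors `(q, a)` with `q * α i` close to `a i` form a lattice of index at most
`p ^ ∑ i, lev M (β i)`. By `hh` it has no short vectors, so its covering radius is small and
`exists_many_coprime` applies. -/
lemma exists_denominators_aux (α : Fin m → ℤ_[p]) (β : Fin m → ℝ) (hβ : ∀ i, 1 < β i)
    (M h R A B : ℕ)
    (hh : ∀ (q₀ : ℤ) (q : Fin m → ℤ), 0 < q₀ → q₀ ≤ h → (∀ i, |q i| ≤ (h : ℤ)) →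
      ∃ i, ((p : ℝ) ^ M) ^ (-(β i)) ≤ ‖(q₀ : ℤ_[p]) * α i - (q i : ℤ_[p])‖)
    (hM : h ≤ p ^ M) (hR : 2 * p ^ (∑ i, lev M (β i)) ≤ R * (h + 1) ^ m)
    (hA : ∀ n : ℕ, 1 ≤ n → n ≤ 2 * (p ^ M) ^ 2 → 4 ^ n.primeFactors.card ≤ A)
    (hB : B = (2 * R + 1) * (A ^ 2 + 4 * A ^ m + 1)) :
    ∃ S : Finset ℕ, (p ^ M / 2 / (2 * B + 1)) ^ (m + 1) ≤ S.card ∧ ∀ q ∈ S,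
      p ^ M ≤ 2 * q ∧ q ≤ p ^ M ∧ ¬ p ∣ q ∧ ∃ a : Fin m → ℤ, ∀ i, |a i| ≤ q ∧
        Int.gcd (a i) q = 1 ∧ ‖(q : ℤ_[p]) * α i - (a i : ℤ_[p])‖ < ((p : ℝ) ^ M) ^ (-(β i)) := by
  have hp : p.Prime := Fact.out
  have : ∀ i : Fin m, NeZero (p ^ lev M (β i)) := fun i => ⟨pow_ne_zero _ hp.ne_zero⟩
  let φ : (Fin (m + 1) → ℤ) →+ (∀ i : Fin m, ZMod (p ^ lev M (β i))) := AddMonoidHom.mk'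
    (fun z i => PadicInt.toZModPow (lev M (β i)) ((z 0 : ℤ_[p]) * α i - (z i.succ : ℤ_[p]))) (by
      intro a b
      funext i
      refine Eq.trans ?_ (map_add (PadicInt.toZModPow (lev M (β i))) _ _)
      congr 1
      simp only [Pi.add_apply]
      push_cast
      ring)
  have hφ : ∀ z, φ z = 0 ↔ ∀ i : Fin m, (p : ℤ_[p]) ^ lev M (β i) ∣
      (z 0 : ℤ_[p]) * α i - (z i.succ : ℤ_[p]) := by
    intro z
    rw [funext_iff]
    refine forall_congr' fun i => ?_
    rw [← Ideal.mem_span_singleton, ← PadicInt.ker_toZModPow, RingHom.mem_ker]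
    rfl
  have hcard : Fintype.card (∀ i : Fin m, ZMod (p ^ lev M (β i))) = p ^ (∑ i, lev M (β i)) := by
    rw [Fintype.card_pi, ← Finset.prod_pow_eq_pow_sum]
    exact Finset.prod_congr rfl fun i _ => ZMod.card _
  have hlt : ∀ i, (p : ℤ) ^ M < (p : ℤ) ^ lev M (β i) := fun i => by
    exact_mod_cast Nat.pow_lt_pow_right hp.one_lt (lt_lev (hβ i))
  have hshort : ∀ z : Fin (m + 1) → ℤ, (∀ i, |z i| ≤ h) → 0 < z 0 → φ z ≠ 0 := by
    intro z hz h0 h1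
    obtain ⟨i, hi⟩ := hh (z 0) (fun i => z i.succ) h0 ((le_abs_self _).trans (hz 0))
      (fun i => hz _)
    exact absurd (norm_lt_of_pow_lev_dvd ((hφ z).1 h1 i)) (not_lt.2 hi)
  have hM' : (h : ℤ) ≤ (p : ℤ) ^ M := by exact_mod_cast hM
  have hno : ∀ z : Fin (m + 1) → ℤ, (∀ i, |z i| ≤ h) → φ z = 0 → z = 0 := by
    intro z hz h1
    rcases lt_trichotomy (z 0) 0 with h0 | h0 | h0
    · exact absurd (show φ (-z) = 0 by rw [map_neg, h1, neg_zero])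
        (hshort (-z) (fun i => by rw [Pi.neg_apply, abs_neg]; exact hz i) (by simpa using h0))
    · funext i
      refine Fin.cases h0 (fun i => ?_) i
      have h2 := (hφ z).1 h1 i
      rw [h0, Int.cast_zero, zero_mul, zero_sub, dvd_neg, PadicInt.pow_p_dvd_int_iff] at h2
      refine Int.eq_zero_of_abs_lt_dvd (m := (p : ℤ) ^ lev M (β i)) (by exact_mod_cast h2) ?_
      exact (hz _).trans_lt (hM'.trans_lt (hlt i))
    · exact absurd h1 (hshort z hz h0)
  have hcov := covering φ h hno m R (by simp) (by rw [hcard]; exact hR)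
  obtain ⟨S, hS, hS'⟩ := exists_many_coprime φ R hcov
    (Fin.cons 1 fun i => ((α i).appr (lev M (β i)) : ℤ)) ((hφ _).2 fun i => by
      rw [Fin.cons_zero, Fin.cons_succ, Int.cast_one, one_mul, Int.cast_natCast,
        ← Ideal.mem_span_singleton]
      exact PadicInt.appr_spec _ _) rfl p hp (p ^ M) A B hA hB
  have hpos : ∀ q ∈ S, 0 < q 0 := by
    intro q hq
    have h1 := (hS' q hq).2.1
    have h2 : 0 < ((p ^ M : ℕ) : ℤ) := by exact_mod_cast pow_pos hp.pos M
    omega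
  refine ⟨S.image fun q => (q 0).toNat, ?_, ?_⟩
  · rw [Finset.card_image_of_injOn]
    · exact hS
    · intro q hq q' hq' hqq
      have h0 : q 0 = q' 0 := by
        have h1 := hpos q hq
        have h2 := hpos q' hq'
        have h3 : (q 0).toNat = (q' 0).toNat := hqq
        omega
      funext i
      refine Fin.cases h0 (fun i => ?_) i
      have h1 := dvd_sub ((hφ q').1 (hS' q' hq').1 i) ((hφ q).1 (hS' q hq).1 i)
      rw [h0, show ∀ a b c : ℤ_[p], a - b - (a - c) = c - b by intros; ring, ← Int.cast_sub,
        PadicInt.pow_p_dvd_int_iff] at h1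
      have h2 := (hS' q hq).2.2.2.1 i
      have h3 := (hS' q' hq').2.2.2.1 i
      have h4 := hlt i
      have h5 := abs_sub (q i.succ) (q' i.succ)
      refine sub_eq_zero.1 (Int.eq_zero_of_abs_lt_dvd (m := (p : ℤ) ^ lev M (β i))
        (by exact_mod_cast h1) ?_)
      push_cast at h2 h3
      omega
  · intro n hn
    obtain ⟨q, hq, rfl⟩ := Finset.mem_image.1 hn
    obtain ⟨h1, h2, h3, h4, h5, h6⟩ := hS' q hq
    have h0 := hpos q hq
    have h7 : ((q 0).toNat : ℤ) = q 0 := Int.toNat_of_nonneg h0.le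
    refine ⟨by omega, by omega, fun h => h5 (by rw [← h7]; exact_mod_cast h),
      fun i => q i.succ, fun i => ⟨?_, ?_, ?_⟩⟩
    · have := h4 i
      change |q i.succ| ≤ _
      omega
    · rw [h7]; exact h6 i
    · have := norm_lt_of_pow_lev_dvd ((hφ q).1 h1 i)
      rwa [← h7, Int.cast_natCast] at this

end Denominators

section DenominatorsAsymptotic

variable {p : ℕ} [Fact p.Prime] {m : ℕ}

/-- The numerical part of the count of denominators. Here `Y` stands for a small power of the
size `X` of the denominators and `Z` for the covering radius up to factors `Y`. -/
lemma grid_bound (m P R A B : ℕ) (X Y Z r c₂ c₃ : ℝ) (hX : X = P) (hY : 1 ≤ Y) (hZ : 1 ≤ Z)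
    (hr : 0 ≤ r) (hc₂ : 0 ≤ c₂) (hR : (R : ℝ) ≤ r * (Z * Y ^ m) + 1) (hA : (A : ℝ) ≤ c₂ * Y ^ 2)
    (hB : B = (2 * R + 1) * (A ^ 2 + 4 * A ^ m + 1))
    (hc₃ : c₃ = (2 * (r + 1) + 1) * (c₂ ^ 2 + 4 * c₂ ^ m + 1))
    (hYc : 4 * (2 * c₃ + 1) ≤ Y) (hW : Z * Y ^ (3 * m + 5) ≤ X) :
    X / (Z * Y ^ (3 * m + 5)) ≤ (P / 2 / (2 * B + 1) : ℕ) := by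
  have hZY : 1 ≤ Z * Y ^ m := one_le_mul_of_one_le_of_one_le hZ (one_le_pow₀ hY)
  have h1 : (2 * (R : ℝ) + 1) ≤ (2 * (r + 1) + 1) * (Z * Y ^ m) := by nlinarith
  have h2 : (A : ℝ) ^ 2 ≤ c₂ ^ 2 * Y ^ (2 * m + 4) := by
    calc (A : ℝ) ^ 2 ≤ (c₂ * Y ^ 2) ^ 2 := by gcongr
      _ = c₂ ^ 2 * Y ^ 4 := by ring
      _ ≤ c₂ ^ 2 * Y ^ (2 * m + 4) := by gcongr; omega
  have h3 : (A : ℝ) ^ m ≤ c₂ ^ m * Y ^ (2 * m + 4) := by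
    calc (A : ℝ) ^ m ≤ (c₂ * Y ^ 2) ^ m := by gcongr
      _ = c₂ ^ m * Y ^ (2 * m) := by rw [mul_pow, ← pow_mul]
      _ ≤ c₂ ^ m * Y ^ (2 * m + 4) := by gcongr; omega
  have h4 : (1 : ℝ) ≤ Y ^ (2 * m + 4) := one_le_pow₀ hY
  have h5 : (A : ℝ) ^ 2 + 4 * A ^ m + 1 ≤ (c₂ ^ 2 + 4 * c₂ ^ m + 1) * Y ^ (2 * m + 4) := by
    linarith
  have hc₃0 : 0 ≤ c₃ := by rw [hc₃]; positivity
  have h6 : (B : ℝ) ≤ c₃ * (Z * Y ^ (3 * m + 4)) := by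
    rw [hB]
    push_cast
    calc (2 * (R : ℝ) + 1) * ((A : ℝ) ^ 2 + 4 * A ^ m + 1)
        ≤ ((2 * (r + 1) + 1) * (Z * Y ^ m)) * ((c₂ ^ 2 + 4 * c₂ ^ m + 1) * Y ^ (2 * m + 4)) := by
          gcongr
      _ = c₃ * (Z * Y ^ (3 * m + 4)) := by rw [hc₃]; ring
  have h7 : 1 ≤ Z * Y ^ (3 * m + 4) := one_le_mul_of_one_le_of_one_le hZ (one_le_pow₀ hY)
  have h8 : 2 * (B : ℝ) + 1 ≤ (2 * c₃ + 1) * (Z * Y ^ (3 * m + 4)) := by nlinarith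
  set J := P / 2 / (2 * B + 1) with hJ
  have h9 : P / 2 < (J + 1) * (2 * B + 1) := by
    rw [← Nat.div_lt_iff_lt_mul (by omega)]; exact Nat.lt_succ_self _
  have h10 : P ≤ 2 * ((J + 1) * (2 * B + 1)) := by omega
  have h11 : X ≤ 2 * ((J + 1) * (2 * (B : ℝ) + 1)) := by rw [hX]; exact_mod_cast h10
  have hpos : 0 < Z * Y ^ (3 * m + 5) := by positivity
  have h12 : 2 * X ≤ (J + 1) * (Z * Y ^ (3 * m + 5)) := by
    calc 2 * X ≤ 2 * (2 * ((J + 1) * ((2 * c₃ + 1) * (Z * Y ^ (3 * m + 4))))) := by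
          have : ((J : ℝ) + 1) * (2 * (B : ℝ) + 1) ≤
            (J + 1) * ((2 * c₃ + 1) * (Z * Y ^ (3 * m + 4))) := by gcongr
          linarith
      _ = (4 * (2 * c₃ + 1)) * ((J + 1) * (Z * Y ^ (3 * m + 4))) := by ring
      _ ≤ Y * ((J + 1) * (Z * Y ^ (3 * m + 4))) := by gcongr
      _ = (J + 1) * (Z * Y ^ (3 * m + 5)) := by ring
  rw [div_le_iff₀ hpos]
  linarith

/-- Every large power `p ^ M` has many integers `q` of comparable size such that `q * α` is
close to integers coprime to `q`: about as many as in the case of a generic `α`. -/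
lemma exists_denominators (hm : 1 ≤ m) (α : Fin m → ℤ_[p]) (hα : dioExp α = (m : ℝ) + 1)
    (β : Fin m → ℝ) (hβ : ∀ i, 1 < β i) (hβm : ∑ i, β i < (m : ℝ) + 1) (η : ℝ) (hη : 0 < η) :
    ∀ᶠ M : ℕ in Filter.atTop, ∃ S : Finset ℕ,
      ((p : ℝ) ^ M) ^ ((m : ℝ) + 1 - ∑ i, β i - η) ≤ S.card ∧ ∀ q ∈ S,
      p ^ M ≤ 2 * q ∧ q ≤ p ^ M ∧ ¬ p ∣ q ∧ ∃ a : Fin m → ℤ, ∀ i, |a i| ≤ q ∧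
        Int.gcd (a i) q = 1 ∧ ‖(q : ℤ_[p]) * α i - (a i : ℤ_[p])‖ < ((p : ℝ) ^ M) ^ (-(β i)) := by
  have hp0 := p_pos (p := p)
  have hp1 := one_lt_p (p := p)
  set b := ∑ i, β i with hb
  have hm1 : (0 : ℝ) < m + 1 := by positivity
  have hb0 : 0 < b := by
    rw [hb]
    have : Nonempty (Fin m) := ⟨⟨0, hm⟩⟩
    exact Finset.sum_pos (fun i _ => by linarith [hβ i]) Finset.univ_nonempty
  set ω := b / (m + 1) with hω
  have hω0 : 0 < ω := div_pos hb0 hm1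
  have hω1 : ω < 1 := (div_lt_one hm1).2 hβm
  have hωb : b = ω * (m + 1) := by rw [hω]; field_simp
  have hm5 : (0 : ℝ) < 3 * m + 5 := by positivity
  obtain ⟨e, he0, he1, he2, he3⟩ : ∃ e : ℝ, 0 < e ∧ e < ω ∧ (3 * m + 5) * e ≤ 1 - ω ∧
      (m + 1) * ((3 * m + 5) * e) ≤ η := by
    refine ⟨min (ω / 2) (min ((1 - ω) / (3 * m + 5)) (η / ((m + 1) * (3 * m + 5)))), ?_, ?_, ?_, ?_⟩
    · refine lt_min (by linarith) (lt_min (div_pos (by linarith) hm5) (by positivity))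
    · exact (min_le_left _ _).trans_lt (by linarith)
    · rw [mul_comm, ← le_div_iff₀ hm5]
      exact (min_le_right _ _).trans (min_le_left _ _)
    · rw [← mul_assoc, mul_comm, ← le_div_iff₀ (by positivity)]
      exact (min_le_right _ _).trans (min_le_right _ _)
  set lam := ω - e with hlam
  have hlam0 : 0 < lam := by linarith
  obtain ⟨Q₀, hQ₀⟩ := exists_dioExp_bound α hα (fun i => β i / lam) (by
    rw [← Finset.sum_div, ← hb, lt_div_iff₀ hlam0, hωb, hlam]
    nlinarith)
  obtain ⟨C, hC0, hC⟩ := four_pow_omega_le e he0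
  set r : ℝ := 2 * p ^ m with hr
  have hr0 : 0 ≤ r := by positivity
  set c₂ : ℝ := C * 2 ^ e with hc₂
  have hc₂0 : 0 ≤ c₂ := by positivity
  set c₃ : ℝ := (2 * (r + 1) + 1) * (c₂ ^ 2 + 4 * c₂ ^ m + 1) with hc₃
  filter_upwards [eventually_le_rpow (p := p) (Q₀ + 1) lam hlam0,
    eventually_le_rpow (p := p) (4 * (2 * c₃ + 1)) e he0] with M hM1 hM2
  set X : ℝ := (p : ℝ) ^ M with hX
  have hX1 : 1 ≤ X := one_le_pow₀ hp1.le
  have hX0 : 0 < X := by linarith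
  have hXP : X = (p ^ M : ℕ) := by rw [hX]; push_cast; rfl
  set Y : ℝ := X ^ e with hY
  set Z : ℝ := X ^ ω with hZ
  have hY1 : 1 ≤ Y := Real.one_le_rpow hX1 he0.le
  have hZ1 : 1 ≤ Z := Real.one_le_rpow hX1 hω0.le
  set h : ℕ := ⌊X ^ lam⌋₊ with hh
  have hXl : 1 ≤ X ^ lam := Real.one_le_rpow hX1 hlam0.le
  have hhQ : Q₀ + 1 ≤ h := Nat.le_floor (by exact_mod_cast hM1)
  have hhX : (h : ℝ) ≤ X ^ lam := Nat.floor_le (by linarith)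
  have hXh : X ^ lam ≤ h + 1 := (Nat.lt_floor_add_one _).le
  have hZY : X ^ (b - lam * m) = Z * Y ^ m := by
    rw [hZ, hY, ← Real.rpow_natCast, ← Real.rpow_mul hX0.le, ← Real.rpow_add hX0]
    congr 1
    rw [hωb, hlam]; ring
  set R : ℕ := ⌈r * (Z * Y ^ m)⌉₊ with hR
  have hR1 : (R : ℝ) ≤ r * (Z * Y ^ m) + 1 := (Nat.ceil_lt_add_one (by positivity)).le
  set A : ℕ := ⌊C * (2 * X ^ 2) ^ e⌋₊ with hA
  have hA1 : (A : ℝ) ≤ c₂ * Y ^ 2 := by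
    refine (Nat.floor_le (by positivity)).trans (le_of_eq ?_)
    rw [hc₂, hY, Real.mul_rpow (by norm_num) (by positivity), mul_assoc]
    congr 2
    rw [← Real.rpow_natCast, ← Real.rpow_natCast, ← Real.rpow_mul hX0.le, ← Real.rpow_mul hX0.le,
      mul_comm]
  obtain ⟨S, hS, hS'⟩ := exists_denominators_aux α β hβ M h R A
    ((2 * R + 1) * (A ^ 2 + 4 * A ^ m + 1)) (by
      intro q₀ q h1 h2 h3
      obtain ⟨i, hi⟩ := hQ₀ h (by omega) q₀ q h1 h2 h3
      refine ⟨i, le_trans ?_ hi⟩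
      have h4 : X ^ (-(β i)) = (X ^ lam) ^ (-(β i / lam)) := by
        rw [← Real.rpow_mul hX0.le]
        congr 1
        field_simp
      rw [h4]
      have h5 : (0 : ℝ) < h := by
        have : 0 < h := by omega
        exact_mod_cast this
      exact Real.rpow_le_rpow_of_nonpos h5 hhX
        (neg_nonpos.2 (div_nonneg (by linarith [hβ i]) hlam0.le))) (by
      have : (h : ℝ) ≤ (p ^ M : ℕ) := by
        rw [← hXP]
        refine hhX.trans ?_
        calc X ^ lam ≤ X ^ (1 : ℝ) := Real.rpow_le_rpow_of_exponent_le hX1 (by linarith)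
          _ = X := Real.rpow_one X
      exact_mod_cast this) (by
      have h1 : (2 : ℝ) * p ^ (∑ i, lev M (β i)) ≤ R * (h + 1) ^ m := by
        calc (2 : ℝ) * p ^ (∑ i, lev M (β i)) = 2 * ∏ i, (p : ℝ) ^ lev M (β i) := by
              rw [Finset.prod_pow_eq_pow_sum]
          _ ≤ 2 * ∏ i, ((p : ℝ) * X ^ (β i)) := by
              gcongr with i
              exact pow_lev_le M (by linarith [hβ i])
          _ = r * X ^ b := by
              rw [Finset.prod_mul_distrib, Finset.prod_const, Finset.card_univ, Fintype.card_fin,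
                hb, Real.rpow_sum_of_pos hX0, hr, mul_assoc]
          _ = r * (Z * Y ^ m) * (X ^ lam) ^ m := by
              rw [← hZY, ← Real.rpow_natCast (X ^ lam), ← Real.rpow_mul hX0.le, mul_assoc r,
                ← Real.rpow_add hX0, sub_add_cancel]
          _ ≤ R * (h + 1) ^ m := by
              gcongr
              exact Nat.le_ceil _
      exact_mod_cast h1) (by
      intro n hn1 hn2
      refine Nat.le_floor ?_
      push_cast
      refine (hC n hn1).trans ?_
      gcongr
      rw [hXP]
      exact_mod_cast hn2) rfl
  refine ⟨S, ?_, hS'⟩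
  have hYp : Y ^ (3 * m + 5) = X ^ ((3 * m + 5) * e) := by
    rw [hY, ← Real.rpow_natCast, ← Real.rpow_mul hX0.le]
    congr 1; push_cast; ring
  have hZYX : Z * Y ^ (3 * m + 5) = X ^ (ω + (3 * m + 5) * e) := by
    rw [hYp, hZ, ← Real.rpow_add hX0]
  have key := grid_bound m (p ^ M) R A _ X Y Z r c₂ c₃ hXP hY1 hZ1 hr0 hc₂0 hR1 hA1 rfl hc₃ hM2 (by
    rw [hZYX]
    calc X ^ (ω + (3 * m + 5) * e) ≤ X ^ (1 : ℝ) :=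
          Real.rpow_le_rpow_of_exponent_le hX1 (by linarith)
      _ = X := Real.rpow_one X)
  calc X ^ ((m : ℝ) + 1 - b - η) ≤ X ^ ((1 - (ω + (3 * m + 5) * e)) * ((m + 1 : ℕ) : ℝ)) := by
        refine Real.rpow_le_rpow_of_exponent_le hX1 ?_
        push_cast
        rw [hωb]
        nlinarith
    _ = (X / (Z * Y ^ (3 * m + 5))) ^ (m + 1) := by
        rw [Real.rpow_mul hX0.le, Real.rpow_natCast, hZYX, Real.rpow_sub hX0, Real.rpow_one]
    _ ≤ ((p ^ M / 2 / (2 * ((2 * R + 1) * (A ^ 2 + 4 * A ^ m + 1)) + 1) : ℕ) : ℝ) ^ (m + 1) := by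
        gcongr
    _ ≤ S.card := by exact_mod_cast hS

end DenominatorsAsymptotic

/-! ### Families of rational points in one coordinate -/

section Families

variable {p : ℕ} [Fact p.Prime]

/-- The number of pairs `(i, i')` for which `y i` and `y' i'` agree modulo `p ^ L`. -/
noncomputable def pc {ι ι' : Type*} [Fintype ι] [Fintype ι'] (L : ℕ) (y : ι → ℤ_[p])
    (y' : ι' → ℤ_[p]) : ℝ :=
  ∑ i, ∑ i', if (p : ℤ_[p]) ^ L ∣ y i - y' i' then 1 else 0

lemma pow_dvd_of_mul_unit {L : ℕ} {x r : ℤ_[p]} {q : ℕ} (hq : (q : ℤ_[p]) * r = 1)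
    (h : (p : ℤ_[p]) ^ L ∣ x * q) : (p : ℤ_[p]) ^ L ∣ x := by
  have := h.mul_right r
  rwa [mul_assoc, hq, mul_one] at this

lemma exists_inv_of_not_dvd {q : ℕ} (h : ¬ p ∣ q) : ∃ r : ℤ_[p], (q : ℤ_[p]) * r = 1 := by
  have h1 : ‖(q : ℤ_[p])‖ = 1 := by
    refine le_antisymm (PadicInt.norm_le_one _) (not_lt.1 fun hlt => h ?_)
    have := (PadicInt.norm_int_lt_one_iff_dvd (p := p) (q : ℤ)).1 (by simpa using hlt)
    exact_mod_cast this
  exact ⟨_, PadicInt.mul_inv h1⟩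

/-- A congruence modulo `p ^ L` has at most `p ^ (a + b - L)` solutions `u < p ^ b` if the
coefficient of `u` is `p ^ a`. -/
lemma count_dvd_le {a b L : ℕ} (haL : a ≤ L) (hL : L ≤ a + b) (c : ℤ_[p]) :
    (∑ u : Fin (p ^ b), if (p : ℤ_[p]) ^ L ∣ c + (p : ℤ_[p]) ^ a * (u : ℕ) then (1 : ℝ) else 0) ≤
      (p : ℝ) ^ (a + b - L) := by
  have hp : p.Prime := Fact.out
  have hpz : (p : ℤ_[p]) ≠ 0 := by exact_mod_cast hp.ne_zero
  rw [Finset.sum_boole]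
  have : (Finset.univ.filter fun u : Fin (p ^ b) =>
      (p : ℤ_[p]) ^ L ∣ c + (p : ℤ_[p]) ^ a * (u : ℕ)).card ≤
      (Finset.range (p ^ (a + b - L))).card := by
    refine Finset.card_le_card_of_injOn (fun u => (u : ℕ) / p ^ (L - a)) ?_ ?_
    · intro u _
      rw [Finset.mem_coe, Finset.mem_range, Nat.div_lt_iff_lt_mul (pow_pos hp.pos _), ← pow_add,
        show a + b - L + (L - a) = b by omega]
      exact u.2
    · intro u hu v hv huv
      have h1 := dvd_sub (Finset.mem_filter.1 hu).2 (Finset.mem_filter.1 hv).2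
      rw [show c + (p : ℤ_[p]) ^ a * (u : ℕ) - (c + (p : ℤ_[p]) ^ a * (v : ℕ)) =
        (p : ℤ_[p]) ^ a * ((((u : ℕ) : ℤ) - ((v : ℕ) : ℤ) : ℤ) : ℤ_[p]) by push_cast; ring,
        show L = a + (L - a) by omega, pow_add, mul_dvd_mul_iff_left (pow_ne_zero _ hpz),
        PadicInt.pow_p_dvd_int_iff] at h1
      have h2 : (v : ℕ) ≡ u [MOD p ^ (L - a)] := by
        rw [Nat.modEq_iff_dvd]; exact_mod_cast h1
      refine Fin.ext ?_
      rw [← Nat.div_add_mod (u : ℕ) (p ^ (L - a)), ← Nat.div_add_mod (v : ℕ) (p ^ (L - a)), h2]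
      congr 2
  rw [Finset.card_range] at this
  exact_mod_cast this

/-- Pair counts after adding free digits from position `k` to `N`: agreement modulo `p ^ L` forces
agreement of the base points modulo `p ^ min L k`, and then one set of free digits determines the
other one up to position `L`. -/
lemma pc_lift {F F' : Type*} [Fintype F] [Fintype F'] (g : F → ℤ_[p]) (g' : F' → ℤ_[p])
    {k N L : ℕ} (hk : k ≤ N) (hL : L ≤ N) :
    pc L (fun i : F × Fin (p ^ (N - k)) => g i.1 + (p : ℤ_[p]) ^ k * ((i.2 : ℕ) : ℤ_[p]))
      (fun i : F' × Fin (p ^ (N - k)) => g' i.1 + (p : ℤ_[p]) ^ k * ((i.2 : ℕ) : ℤ_[p])) ≤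
    pc (min L k) g g' * (p : ℝ) ^ (N - k) * (p : ℝ) ^ (N - k - (L - min L k)) := by
  have key : ∀ (f : F) (f' : F') (a : Fin (p ^ (N - k))),
      (∑ a' : Fin (p ^ (N - k)), if (p : ℤ_[p]) ^ L ∣
        (g f + (p : ℤ_[p]) ^ k * (a : ℕ)) - (g' f' + (p : ℤ_[p]) ^ k * (a' : ℕ)) then (1 : ℝ)
        else 0) ≤ (if (p : ℤ_[p]) ^ (min L k) ∣ g f - g' f' then 1 else 0) *
        (p : ℝ) ^ (N - k - (L - min L k)) := by
    intro f f' a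
    by_cases h : (p : ℤ_[p]) ^ (min L k) ∣ g f - g' f'
    · rw [if_pos h, one_mul]
      rcases le_total L k with hLk | hLk
      · rw [min_eq_left hLk, Nat.sub_self, Nat.sub_zero]
        refine (Finset.sum_le_sum (g := fun _ => (1 : ℝ)) fun a' _ => ?_).trans ?_
        · split_ifs <;> norm_num
        · simp
      · rw [min_eq_right hLk]
        have h1 := count_dvd_le (p := p) (a := k) (b := N - k) (L := L) hLk (by omega)
          (-(g f + (p : ℤ_[p]) ^ k * (a : ℕ) - g' f'))
        rw [show k + (N - k) - L = N - k - (L - k) by omega] at h1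
        refine le_trans (le_of_eq (Finset.sum_congr rfl fun a' _ => ?_)) h1
        congr 1
        rw [eq_iff_iff, ← dvd_neg]
        ring_nf
    · rw [if_neg h, zero_mul]
      refine le_of_eq (Finset.sum_eq_zero fun a' _ => if_neg fun h' => h ?_)
      have h1 := (pow_dvd_pow (p : ℤ_[p]) (min_le_left L k)).trans h'
      have h2 : (p : ℤ_[p]) ^ (min L k) ∣ (p : ℤ_[p]) ^ k * (((a' : ℕ) : ℤ_[p]) - (a : ℕ)) :=
        (pow_dvd_pow _ (min_le_right L k)).mul_right _
      have := dvd_add h1 h2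
      rwa [show g f + (p : ℤ_[p]) ^ k * (a : ℕ) - (g' f' + (p : ℤ_[p]) ^ k * (a' : ℕ)) +
        (p : ℤ_[p]) ^ k * (((a' : ℕ) : ℤ_[p]) - (a : ℕ)) = g f - g' f' by ring] at this
  unfold pc
  simp only [Fintype.sum_prod_type]
  calc _ ≤ ∑ f : F, ∑ _a : Fin (p ^ (N - k)), ∑ f' : F',
        (if (p : ℤ_[p]) ^ (min L k) ∣ g f - g' f' then (1 : ℝ) else 0) *
        (p : ℝ) ^ (N - k - (L - min L k)) :=
        Finset.sum_le_sum fun f _ => Finset.sum_le_sum fun a _ => Finset.sum_le_sum fun f' _ =>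
          key f f' a
    _ = _ := by
      simp only [Finset.sum_const, Finset.card_univ, Fintype.card_fin, nsmul_eq_mul,
        Finset.sum_mul, Finset.mul_sum]
      push_cast
      refine Finset.sum_congr rfl fun f _ => Finset.sum_congr rfl fun f' _ => ?_
      ring

/-- Fractions with different denominators `q` and `q'` rarely agree modulo `p ^ l`: the numerator
`a * q' - b * q` of their difference is nonzero and divisible by `p ^ l`. -/
lemma card_pairs_offdiag {q q' l : ℕ} (hq : 0 < q) (hq' : 0 < q') (hpq : ¬ p ∣ q) (hne : q ≠ q')
    (s : Finset (ℕ × ℕ)) (hs : ∀ x ∈ s, x.1 < q ∧ x.2 < q' ∧ x.1.Coprime q ∧ x.2.Coprime q' ∧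
      (p : ℤ) ^ l ∣ (x.1 : ℤ) * q' - x.2 * q) :
    s.card * p ^ l ≤ 2 * (q * q') := by
  have hp : p.Prime := Fact.out
  obtain ⟨g, q₁, q₁', hg, hcop, rfl, rfl⟩ := Nat.exists_coprime' (Nat.gcd_pos_of_pos_left q' hq)
  have hq₁ : 0 < q₁ := Nat.pos_of_mul_pos_right hq
  have hq₁' : 0 < q₁' := Nat.pos_of_mul_pos_right hq'
  have hpg : IsCoprime ((p : ℤ) ^ l) (g : ℤ) := by
    refine IsCoprime.pow_left ((Nat.prime_iff_prime_int.1 hp).coprime_iff_not_dvd.2 fun h => hpq ?_)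
    exact (Int.natCast_dvd_natCast.1 h).mul_left _
  have hdiv : ∀ x ∈ s, (p : ℤ) ^ l ∣ (x.1 : ℤ) * q₁' - x.2 * q₁ := by
    intro x hx
    have h := (hs x hx).2.2.2.2
    push_cast at h
    rw [show (x.1 : ℤ) * (q₁' * g) - x.2 * (q₁ * g) = (x.1 * q₁' - x.2 * q₁) * g by ring] at h
    exact hpg.dvd_of_dvd_mul_right h
  set B : ℕ := g * (q₁ * q₁') / p ^ l with hB
  have hcard : s.card ≤ (((Finset.Icc (-(B : ℤ)) B).erase 0) ×ˢ Finset.range g).card := by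
    refine Finset.card_le_card_of_injOn
      (fun x => (((x.1 : ℤ) * q₁' - x.2 * q₁) / (p : ℤ) ^ l, x.1 / q₁)) ?_ ?_
    · intro x hx
      obtain ⟨h1, h2, h3, h4, -⟩ := hs x hx
      obtain ⟨t, ht⟩ := hdiv x hx
      have hpl : (0 : ℤ) < (p : ℤ) ^ l := by exact_mod_cast pow_pos hp.pos l
      have ht' : ((x.1 : ℤ) * q₁' - x.2 * q₁) / (p : ℤ) ^ l = t := by
        rw [ht, Int.mul_ediv_cancel_left _ hpl.ne']
      beta_reduce
      rw [ht', Finset.mem_coe, Finset.mem_product, Finset.mem_erase, Finset.mem_Icc,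
        Finset.mem_range]
      refine ⟨⟨?_, ?_⟩, ?_⟩
      · rintro rfl
        -- a zero numerator would force equal reduced fractions, hence equal denominators
        have h5 : x.1 * q₁' = x.2 * q₁ := by
          rw [mul_zero, sub_eq_zero] at ht
          exact_mod_cast ht
        have h6 : x.1 * (q₁' * g) = x.2 * (q₁ * g) := by
          rw [← mul_assoc, h5, mul_assoc]
        refine hne (Nat.dvd_antisymm ?_ ?_)
        · refine h3.symm.dvd_of_dvd_mul_left (?_ : q₁ * g ∣ x.1 * (q₁' * g))
          rw [h6]; exact dvd_mul_left _ _
        · refine h4.symm.dvd_of_dvd_mul_left (?_ : q₁' * g ∣ x.2 * (q₁ * g))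
          rw [← h6]; exact dvd_mul_left _ _
      · have h5 : |(x.1 : ℤ) * q₁' - x.2 * q₁| ≤ (g * (q₁ * q₁') : ℕ) := by
          have a1 : x.1 * q₁' ≤ q₁ * g * q₁' := Nat.mul_le_mul_right _ h1.le
          have a2 : x.2 * q₁ ≤ q₁' * g * q₁ := Nat.mul_le_mul_right _ h2.le
          have a3 : q₁ * g * q₁' = g * (q₁ * q₁') := by ring
          have a4 : q₁' * g * q₁ = g * (q₁ * q₁') := by ring
          rw [a3] at a1
          rw [a4] at a2
          have a1' : (x.1 : ℤ) * q₁' ≤ (g * (q₁ * q₁') : ℕ) := by exact_mod_cast a1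
          have a2' : (x.2 : ℤ) * q₁ ≤ (g * (q₁ * q₁') : ℕ) := by exact_mod_cast a2
          have a5 : (0 : ℤ) ≤ (x.1 : ℤ) * q₁' := by positivity
          have a6 : (0 : ℤ) ≤ (x.2 : ℤ) * q₁ := by positivity
          rw [abs_le]
          constructor <;> linarith
        have h6 : t.natAbs ≤ B := by
          rw [hB, Nat.le_div_iff_mul_le (pow_pos hp.pos _)]
          rw [ht, abs_mul, abs_of_pos hpl, Int.abs_eq_natAbs] at h5
          have : p ^ l * t.natAbs ≤ g * (q₁ * q₁') := by exact_mod_cast h5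
          rwa [mul_comm]
        omega
      · rw [Nat.div_lt_iff_lt_mul hq₁, mul_comm]
        exact h1
    · intro x hx y hy hxy
      obtain ⟨t, ht⟩ := hdiv x hx
      obtain ⟨t', ht'⟩ := hdiv y hy
      have hpl : (0 : ℤ) < (p : ℤ) ^ l := by exact_mod_cast pow_pos hp.pos l
      simp only [Prod.mk.injEq] at hxy
      obtain ⟨e1, e2⟩ := hxy
      rw [ht, ht', Int.mul_ediv_cancel_left _ hpl.ne', Int.mul_ediv_cancel_left _ hpl.ne'] at e1
      rw [e1, ← ht'] at ht
      have h3 : (q₁ : ℤ) ∣ ((y.1 : ℤ) - x.1) * q₁' := ⟨(y.2 : ℤ) - x.2, by linear_combination -ht⟩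
      have h4 : (q₁ : ℤ) ∣ (y.1 : ℤ) - x.1 :=
        (Nat.isCoprime_iff_coprime.2 hcop).dvd_of_dvd_mul_right h3
      have h5 : x.1 ≡ y.1 [MOD q₁] := Nat.modEq_iff_dvd.2 h4
      have h6 : x.1 = y.1 := by
        rw [← Nat.div_add_mod x.1 q₁, ← Nat.div_add_mod y.1 q₁, e2, h5]
      rw [h6] at ht
      have h7 : (x.2 : ℤ) * q₁ = y.2 * q₁ := by linarith
      have h8 : x.2 = y.2 := by
        have := mul_right_cancel₀ (by exact_mod_cast hq₁.ne') h7
        exact_mod_cast this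
      exact Prod.ext h6 h8
  have h1 : (((Finset.Icc (-(B : ℤ)) B).erase 0) ×ˢ Finset.range g).card = 2 * B * g := by
    rw [Finset.card_product, Finset.card_erase_of_mem (by simp), Int.card_Icc, Finset.card_range]
    congr 1
    omega
  rw [h1] at hcard
  calc s.card * p ^ l ≤ 2 * B * g * p ^ l := Nat.mul_le_mul_right _ hcard
    _ = 2 * g * (B * p ^ l) := by ring
    _ ≤ 2 * g * (g * (q₁ * q₁')) := Nat.mul_le_mul_left _ (Nat.div_mul_le_self _ _)
    _ = 2 * (q₁ * g * (q₁' * g)) := by ring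

lemma pc_offdiag_base {F F' : Type*} [Fintype F] [Fintype F'] {q q' l : ℕ} {r r' : ℤ_[p]}
    (hr : (q : ℤ_[p]) * r = 1) (hr' : (q' : ℤ_[p]) * r' = 1) (hpq : ¬ p ∣ q) (hne : q ≠ q')
    (f : F → ℕ) (f' : F' → ℕ) (hf : Function.Injective f) (hf' : Function.Injective f')
    (hfq : ∀ i, f i < q) (hfq' : ∀ i, f' i < q') (hfc : ∀ i, (f i).Coprime q)
    (hfc' : ∀ i, (f' i).Coprime q') (hq : 0 < q) (hq' : 0 < q') :
    pc l (fun i => (f i : ℤ_[p]) * r) (fun i => (f' i : ℤ_[p]) * r') * (p : ℝ) ^ l ≤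
      2 * (q * q') := by
  have h1 : pc l (fun i => (f i : ℤ_[p]) * r) (fun i => (f' i : ℤ_[p]) * r') =
      (((Finset.univ : Finset (F × F')).filter fun x =>
        (p : ℤ_[p]) ^ l ∣ (f x.1 : ℤ_[p]) * r - (f' x.2 : ℤ_[p]) * r').card : ℝ) := by
    rw [pc, ← Finset.sum_boole, Fintype.sum_prod_type]
  have h2 := card_pairs_offdiag (p := p) (l := l) hq hq' hpq hne
    (((Finset.univ : Finset (F × F')).filter fun x =>
        (p : ℤ_[p]) ^ l ∣ (f x.1 : ℤ_[p]) * r - (f' x.2 : ℤ_[p]) * r').image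
      (Prod.map f f')) (by
    intro x hx
    obtain ⟨⟨i, i'⟩, hi, rfl⟩ := Finset.mem_image.1 hx
    refine ⟨hfq i, hfq' i', hfc i, hfc' i', ?_⟩
    have h3 := (Finset.mem_filter.1 hi).2.mul_right ((q : ℤ_[p]) * q')
    rw [show ((f i : ℤ_[p]) * r - (f' i' : ℤ_[p]) * r') * ((q : ℤ_[p]) * q') =
      f i * q' * (q * r) - f' i' * q * (q' * r') by ring, hr, hr', mul_one, mul_one] at h3
    rw [← PadicInt.pow_p_dvd_int_iff]
    push_cast
    exact h3)
  rw [Finset.card_image_of_injective _ (hf.prodMap hf')] at h2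
  rw [h1]
  exact_mod_cast h2

lemma pc_diag_base {F : Type*} [Fintype F] {q l : ℕ} {r : ℤ_[p]}
    (hr : (q : ℤ_[p]) * r = 1) (f : F → ℕ) (hf : Function.Injective f) (hfq : ∀ i, f i < q) :
    pc l (fun i => (f i : ℤ_[p]) * r) (fun i => (f i : ℤ_[p]) * r) ≤
      Fintype.card F * ((q / p ^ l : ℕ) + 1 : ℝ) := by
  have hp : p.Prime := Fact.out
  rw [pc, ← nsmul_eq_mul, ← Finset.card_univ]
  refine Finset.sum_le_card_nsmul _ _ _ fun i _ => ?_
  rw [Finset.sum_boole]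
  have : (Finset.univ.filter fun i' : F =>
      (p : ℤ_[p]) ^ l ∣ (f i : ℤ_[p]) * r - (f i' : ℤ_[p]) * r).card ≤
      (Finset.range (q / p ^ l + 1)).card := by
    have hmod : ∀ i' : F, (p : ℤ_[p]) ^ l ∣ (f i : ℤ_[p]) * r - (f i' : ℤ_[p]) * r →
        f i' ≡ f i [MOD p ^ l] := by
      intro i' h
      have h3 := h.mul_right (q : ℤ_[p])
      rw [show ((f i : ℤ_[p]) * r - (f i' : ℤ_[p]) * r) * (q : ℤ_[p]) =
        (f i - f i') * (q * r) by ring, hr, mul_one] at h3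
      have h4 : (p : ℤ_[p]) ^ l ∣ (((f i : ℤ) - (f i' : ℤ) : ℤ) : ℤ_[p]) := by
        push_cast; exact h3
      rw [PadicInt.pow_p_dvd_int_iff] at h4
      rw [Nat.modEq_iff_dvd]
      exact_mod_cast h4
    refine Finset.card_le_card_of_injOn (fun i' => f i' / p ^ l) ?_ ?_
    · intro i' _
      rw [Finset.mem_coe, Finset.mem_range, Nat.lt_succ_iff]
      exact Nat.div_le_div_right (hfq i').le
    · intro i₁ h₁ i₂ h₂ h
      have h3 := hmod i₁ (Finset.mem_filter.1 h₁).2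
      have h4 := hmod i₂ (Finset.mem_filter.1 h₂).2
      refine hf ?_
      have h' : f i₁ / p ^ l = f i₂ / p ^ l := h
      rw [← Nat.div_add_mod (f i₁) (p ^ l), ← Nat.div_add_mod (f i₂) (p ^ l), h', h3, h4]
  rw [Finset.card_range] at this
  exact_mod_cast this

/-- Numerators `f (u, b) < q` coprime to `q`, one in each of `J` blocks for every residue class
modulo `p ^ K` whose quotient by `q` lies in the cylinder of level `K₀` around `z`. -/
lemma exists_numerators {K₀ K J T q : ℕ} (hK : K₀ ≤ K) (hpq : ¬ p ∣ q)
    (hT : 4 ^ q.primeFactors.card ≤ T) (hJ : J * (p ^ K * T) ≤ q) (z : ℤ_[p]) :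
    ∃ f : Fin (p ^ (K - K₀)) × Fin J → ℕ, Function.Injective f ∧ (∀ i, f i < q) ∧
      (∀ i, (f i).Coprime q) ∧
      ∀ i, (p : ℤ_[p]) ^ K ∣ f i - q * (z + (p : ℤ_[p]) ^ K₀ * (i.1 : ℕ)) := by
  have hp : p.Prime := Fact.out
  have hpz : (p : ℤ_[p]) ≠ 0 := by exact_mod_cast hp.ne_zero
  obtain ⟨r, hr⟩ := exists_inv_of_not_dvd hpq
  set c : Fin (p ^ (K - K₀)) → ℕ := fun u =>
    ((q : ℤ_[p]) * (z + (p : ℤ_[p]) ^ K₀ * (u : ℕ))).appr K with hc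
  have hcK : ∀ u, c u < p ^ K := fun u => PadicInt.appr_lt _ _
  have hcd : ∀ u, (p : ℤ_[p]) ^ K ∣ c u - q * (z + (p : ℤ_[p]) ^ K₀ * (u : ℕ)) := fun u => by
    rw [dvd_sub_comm, ← Ideal.mem_span_singleton]
    exact PadicInt.appr_spec _ _
  have key : ∀ i : Fin (p ^ (K - K₀)) × Fin J, ∃ t : ℕ, t < T ∧
      ∀ l ∈ q.primeFactors, ¬ (l : ℤ) ∣ ((c i.1 + i.2 * (p ^ K * T) : ℕ) : ℤ) +
        t * ((p ^ K : ℕ) : ℤ) := by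
    intro i
    obtain ⟨t, ht, hts⟩ := exists_sieved q.primeFactors
      (fun l hl => Nat.prime_of_mem_primeFactors hl)
      ((c i.1 + i.2 * (p ^ K * T) : ℕ) : ℤ) ((p ^ K : ℕ) : ℤ) (by
      rintro l hl ⟨-, h2⟩
      have h3 := (Nat.prime_of_mem_primeFactors hl).dvd_of_dvd_pow (Int.natCast_dvd_natCast.1 h2)
      rw [(Nat.prime_dvd_prime_iff_eq (Nat.prime_of_mem_primeFactors hl) hp).1 h3] at hl
      exact hpq (Nat.dvd_of_mem_primeFactors hl))
    exact ⟨t, ht.trans_le hT, hts⟩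
  choose t ht hts using key
  have hq0 : q ≠ 0 := fun h => hpq (h ▸ dvd_zero p)
  set f : Fin (p ^ (K - K₀)) × Fin J → ℕ := fun i => c i.1 + i.2 * (p ^ K * T) + t i * p ^ K with hf
  have hoff : ∀ i, c i.1 + t i * p ^ K < p ^ K * T := by
    intro i
    have h1 : (t i + 1) * p ^ K ≤ T * p ^ K := Nat.mul_le_mul_right _ (ht i)
    have h2 := hcK i.1
    rw [Nat.succ_mul, mul_comm T] at h1
    omega
  have hfd : ∀ i, (p : ℤ_[p]) ^ K ∣ f i - q * (z + (p : ℤ_[p]) ^ K₀ * (i.1 : ℕ)) := by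
    intro i
    have h1 := dvd_add (hcd i.1) (dvd_mul_right ((p : ℤ_[p]) ^ K) ((i.2 : ℕ) * T + t i))
    convert h1 using 1
    simp only [hf]
    push_cast
    ring
  refine ⟨f, ?_, ?_, ?_, hfd⟩
  · intro i i' h
    have hblock : ∀ i, f i / (p ^ K * T) = i.2 := by
      intro i
      have : f i = (c i.1 + t i * p ^ K) + (p ^ K * T) * i.2 := by simp only [hf]; ring
      rw [this, Nat.add_mul_div_left _ _ (by have := hoff i; omega), Nat.div_eq_of_lt (hoff i),
        zero_add]
    have h2 : i.2 = i'.2 := by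
      refine Fin.ext ?_
      rw [← hblock i, ← hblock i', h]
    have h3 := dvd_sub (hfd i') (hfd i)
    rw [h, show ((f i' : ℕ) : ℤ_[p]) - q * (z + (p : ℤ_[p]) ^ K₀ * (i'.1 : ℕ)) -
      ((f i' : ℕ) - q * (z + (p : ℤ_[p]) ^ K₀ * (i.1 : ℕ))) =
      ((p : ℤ_[p]) ^ K₀ * ((((i.1 : ℕ) : ℤ) - ((i'.1 : ℕ) : ℤ) : ℤ) : ℤ_[p])) * q by
        push_cast; ring] at h3
    have h4 := pow_dvd_of_mul_unit hr h3
    have hsplit : (p : ℤ_[p]) ^ K = (p : ℤ_[p]) ^ K₀ * (p : ℤ_[p]) ^ (K - K₀) := by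
      rw [← pow_add, Nat.add_sub_cancel' hK]
    rw [hsplit, mul_dvd_mul_iff_left (pow_ne_zero _ hpz), PadicInt.pow_p_dvd_int_iff] at h4
    have h5 : (i'.1 : ℕ) ≡ i.1 [MOD p ^ (K - K₀)] := by
      rw [Nat.modEq_iff_dvd]; exact_mod_cast h4
    exact Prod.ext (Fin.ext (h5.eq_of_lt_of_lt i'.1.2 i.1.2).symm) h2
  · intro i
    have h1 : ((i.2 : ℕ) + 1) * (p ^ K * T) ≤ J * (p ^ K * T) := Nat.mul_le_mul_right _ i.2.2
    rw [Nat.succ_mul] at h1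
    have h2 := hoff i
    simp only [hf]
    omega
  · intro i
    rw [Nat.coprime_iff_gcd_eq_one]
    by_contra hg
    obtain ⟨l, hl, hlg⟩ := Nat.exists_prime_and_dvd hg
    refine hts i l (Nat.mem_primeFactors.2 ⟨hl, hlg.trans (Nat.gcd_dvd_right _ _), hq0⟩) ?_
    have := hlg.trans (Nat.gcd_dvd_left _ _)
    exact_mod_cast this

end Families

section Product

/-- The index set of one coordinate: a residue `u` modulo `p ^ (K - K₀)`, a block, and free digits
in the positions from `κ` to `N`. -/
abbrev Idx (p K₀ K J κ N : ℕ) : Type := (Fin (p ^ (K - K₀)) × Fin J) × Fin (p ^ (N - κ))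

lemma card_Idx {p : ℕ} (K₀ K J κ N : ℕ) :
    (Fintype.card (Idx p K₀ K J κ N) : ℝ) = (p : ℝ) ^ (K - K₀) * J * (p : ℝ) ^ (N - κ) := by
  simp [Fintype.card_prod]

variable {p : ℕ} [Fact p.Prime]

/-- For each denominator `q ∈ S` a family of points near `z`, each within `p ^ (-κ)` of a reduced
fraction with denominator `q`, that is equidistributed up to level `K` and has few coincident pairs,
both between different denominators and for a single one. -/
lemma exists_families {K₀ K J T M κ N : ℕ} (S : Finset ℕ) (hK : K₀ ≤ K) (hKκ : K ≤ κ) (hMκ : M < κ)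
    (hκ : κ ≤ N) (hS : ∀ q ∈ S, ¬ p ∣ q ∧ 4 ^ q.primeFactors.card ≤ T ∧ J * (p ^ K * T) ≤ q ∧
      q ≤ p ^ M) (z : ℤ_[p]) :
    ∃ y : S → Idx p K₀ K J κ N → ℤ_[p],
      (∀ q i, (p : ℤ_[p]) ^ K₀ ∣ y q i - z) ∧
      (∀ (q : S) i, ∃ a : ℕ, a < (q : ℕ) ∧ a.Coprime (q : ℕ) ∧
        (p : ℤ_[p]) ^ κ ∣ ((q : ℕ) : ℤ_[p]) * y q i - (a : ℤ_[p])) ∧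
      (∀ q L x, K₀ ≤ L → L ≤ K → (∑ i, if (p : ℤ_[p]) ^ L ∣ y q i - x then (1 : ℝ) else 0) ≤
        (p : ℝ) ^ (K - L) * J * (p : ℝ) ^ (N - κ)) ∧
      (∀ q q' L, q ≠ q' → L ≤ N → pc L (y q) (y q') * (p : ℝ) ^ L ≤
        2 * ((p : ℝ) ^ M) ^ 2 * ((p : ℝ) ^ (N - κ)) ^ 2) ∧
      (∀ q L, L ≤ κ → pc L (y q) (y q) * (p : ℝ) ^ L ≤
        (p : ℝ) ^ (K - K₀) * J * ((p : ℝ) ^ M + (p : ℝ) ^ L) * ((p : ℝ) ^ (N - κ)) ^ 2) ∧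
      (∀ q L, κ ≤ L → L ≤ N → pc L (y q) (y q) * (p : ℝ) ^ L ≤
        (p : ℝ) ^ (K - K₀) * J * (p : ℝ) ^ κ * ((p : ℝ) ^ (N - κ)) ^ 2) := by
  have hp : p.Prime := Fact.out
  have hp0 : (0 : ℝ) < p := by exact_mod_cast hp.pos
  have hex : ∀ q : S, ∃ r : ℤ_[p], ((q : ℕ) : ℤ_[p]) * r = 1 := fun q =>
    exists_inv_of_not_dvd (hS q q.2).1
  choose r hr using hex
  have hex : ∀ q : S, _ := fun q => exists_numerators (T := T) (J := J) (q := q) hK (hS q q.2).1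
    (hS q q.2).2.1 (hS q q.2).2.2.1 z
  choose f hfi hfq hfc hfd using hex
  have hqpos : ∀ q : S, 0 < (q : ℕ) := fun q =>
    Nat.pos_of_ne_zero fun h => (hS q q.2).1 (h ▸ dvd_zero p)
  have hqM : ∀ q : S, ((q : ℕ) : ℝ) ≤ (p : ℝ) ^ M := fun q => by
    exact_mod_cast (hS q q.2).2.2.2
  -- modulo `p ^ K` the points of the family are `z + p ^ K₀ * u`
  have hmod : ∀ q i, (p : ℤ_[p]) ^ K ∣
      ((f q i : ℕ) : ℤ_[p]) * r q - (z + (p : ℤ_[p]) ^ K₀ * ((i.1 : ℕ) : ℤ_[p])) := by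
    intro q i
    have h := (hfd q i).mul_right (r q)
    rwa [show (((f q i : ℕ) : ℤ_[p]) - ((q : ℕ) : ℤ_[p]) *
      (z + (p : ℤ_[p]) ^ K₀ * ((i.1 : ℕ) : ℤ_[p]))) * r q =
      ((f q i : ℕ) : ℤ_[p]) * r q - (((q : ℕ) : ℤ_[p]) * r q) *
      (z + (p : ℤ_[p]) ^ K₀ * ((i.1 : ℕ) : ℤ_[p])) by ring, hr, one_mul] at h
  set y : S → Idx p K₀ K J κ N → ℤ_[p] := fun q i =>
    ((f q i.1 : ℕ) : ℤ_[p]) * r q + (p : ℤ_[p]) ^ κ * ((i.2 : ℕ) : ℤ_[p]) with hy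
  have hymod : ∀ q i, (p : ℤ_[p]) ^ K ∣
      y q i - (z + (p : ℤ_[p]) ^ K₀ * ((i.1.1 : ℕ) : ℤ_[p])) := by
    intro q i
    have h := dvd_add (hmod q i.1)
      ((pow_dvd_pow (p : ℤ_[p]) hKκ).mul_right ((i.2 : ℕ) : ℤ_[p]))
    rwa [show ((f q i.1 : ℕ) : ℤ_[p]) * r q - (z + (p : ℤ_[p]) ^ K₀ * ((i.1.1 : ℕ) : ℤ_[p])) +
      (p : ℤ_[p]) ^ κ * ((i.2 : ℕ) : ℤ_[p]) =
      y q i - (z + (p : ℤ_[p]) ^ K₀ * ((i.1.1 : ℕ) : ℤ_[p])) by simp only [hy]; ring] at h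
  have hlift : ∀ q q' L, L ≤ N → pc L (y q) (y q') ≤
      pc (min L κ) (fun i => ((f q i : ℕ) : ℤ_[p]) * r q) (fun i => ((f q' i : ℕ) : ℤ_[p]) * r q') *
      (p : ℝ) ^ (N - κ) * (p : ℝ) ^ (N - κ - (L - min L κ)) := fun q q' L hL =>
    pc_lift (fun i => ((f q i : ℕ) : ℤ_[p]) * r q) (fun i => ((f q' i : ℕ) : ℤ_[p]) * r q') hκ hL
  have hsplit : ∀ L, L ≤ N → (p : ℝ) ^ (N - κ - (L - min L κ)) * (p : ℝ) ^ L =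
      (p : ℝ) ^ (N - κ) * (p : ℝ) ^ (min L κ) := by
    intro L hL
    rw [← pow_add, ← pow_add]
    congr 1
    omega
  have hlift' : ∀ q q' L, L ≤ N → pc L (y q) (y q') * (p : ℝ) ^ L ≤
      (pc (min L κ) (fun i => ((f q i : ℕ) : ℤ_[p]) * r q)
        (fun i => ((f q' i : ℕ) : ℤ_[p]) * r q') * (p : ℝ) ^ (min L κ)) *
        ((p : ℝ) ^ (N - κ)) ^ 2 := by
    intro q q' L hL
    have h1 := mul_le_mul_of_nonneg_right (hlift q q' L hL) (pow_nonneg hp0.le L)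
    rw [mul_assoc _ _ ((p : ℝ) ^ L), hsplit L hL] at h1
    refine h1.trans (le_of_eq ?_)
    ring
  have hdiag : ∀ q l, pc l (fun i => ((f q i : ℕ) : ℤ_[p]) * r q)
      (fun i => ((f q i : ℕ) : ℤ_[p]) * r q) ≤ (p : ℝ) ^ (K - K₀) * J *
        ((((q : ℕ) / p ^ l : ℕ) : ℝ) + 1) := by
    intro q l
    have h := pc_diag_base (l := l) (hr q) (f q) (hfi q) (hfq q)
    simpa [Fintype.card_prod] using h
  refine ⟨y, ?_, ?_, ?_, ?_, ?_, ?_⟩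
  · intro q i
    have h := dvd_add ((pow_dvd_pow (p : ℤ_[p]) hK).trans (hymod q i))
      (dvd_mul_right ((p : ℤ_[p]) ^ K₀) ((i.1.1 : ℕ) : ℤ_[p]))
    rwa [show y q i - (z + (p : ℤ_[p]) ^ K₀ * ((i.1.1 : ℕ) : ℤ_[p])) +
      (p : ℤ_[p]) ^ K₀ * ((i.1.1 : ℕ) : ℤ_[p]) = y q i - z by ring] at h
  · intro q i
    refine ⟨f q i.1, hfq q i.1, hfc q i.1, ((q : ℕ) : ℤ_[p]) * ((i.2 : ℕ) : ℤ_[p]), ?_⟩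
    simp only [hy]
    linear_combination ((f q i.1 : ℕ) : ℤ_[p]) * hr q
  · intro q L x hKL hLK
    have h1 : ∀ i : Idx p K₀ K J κ N, (if (p : ℤ_[p]) ^ L ∣ y q i - x then (1 : ℝ) else 0) ≤
        if (p : ℤ_[p]) ^ L ∣ (z - x) + (p : ℤ_[p]) ^ K₀ * ((i.1.1 : ℕ) : ℤ_[p])
          then (1 : ℝ) else 0 := by
      intro i
      by_cases h : (p : ℤ_[p]) ^ L ∣ y q i - x
      · have h2 := dvd_sub h ((pow_dvd_pow (p : ℤ_[p]) hLK).trans (hymod q i))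
        rw [show y q i - x - (y q i - (z + (p : ℤ_[p]) ^ K₀ * ((i.1.1 : ℕ) : ℤ_[p]))) =
          (z - x) + (p : ℤ_[p]) ^ K₀ * ((i.1.1 : ℕ) : ℤ_[p]) by ring] at h2
        rw [if_pos h, if_pos h2]
      · rw [if_neg h]
        split_ifs <;> norm_num
    refine (Finset.sum_le_sum fun i _ => h1 i).trans ?_
    have hsum : ∀ g : Fin (p ^ (K - K₀)) → ℝ, ∑ i : Idx p K₀ K J κ N, g i.1.1 =
        (p : ℝ) ^ (N - κ) * (J * ∑ u, g u) := by
      intro g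
      simp only [Fintype.sum_prod_type, Finset.sum_const, Finset.card_univ, Fintype.card_fin,
        nsmul_eq_mul, Finset.mul_sum]
      push_cast
      exact Finset.sum_congr rfl fun u _ => by ring
    rw [hsum fun u => if (p : ℤ_[p]) ^ L ∣ (z - x) + (p : ℤ_[p]) ^ K₀ * ((u : ℕ) : ℤ_[p])
          then (1 : ℝ) else 0]
    have h2 := count_dvd_le (p := p) (a := K₀) (b := K - K₀) (L := L) hKL (by omega) (z - x)
    rw [show K₀ + (K - K₀) - L = K - L by omega] at h2
    calc _ ≤ (p : ℝ) ^ (N - κ) * (J * (p : ℝ) ^ (K - L)) := by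
          refine mul_le_mul_of_nonneg_left ?_ (by positivity)
          exact mul_le_mul_of_nonneg_left h2 (by positivity)
      _ = _ := by ring
  · intro q q' L hne hL
    refine (hlift' q q' L hL).trans ?_
    refine mul_le_mul_of_nonneg_right ?_ (by positivity)
    refine (pc_offdiag_base (hr q) (hr q') (hS q q.2).1 (fun h => hne (Subtype.ext h)) (f q) (f q')
      (hfi q) (hfi q') (hfq q) (hfq q') (hfc q) (hfc q') (hqpos q) (hqpos q')).trans ?_
    have := mul_le_mul (hqM q) (hqM q') (by positivity) (by positivity)
    nlinarith
  · intro q L hL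
    refine (hlift' q q L (hL.trans hκ)).trans ?_
    refine mul_le_mul_of_nonneg_right ?_ (by positivity)
    rw [min_eq_left hL]
    have h1 : ((((q : ℕ) / p ^ L : ℕ) : ℝ)) * (p : ℝ) ^ L ≤ (p : ℝ) ^ M :=
      le_trans (by exact_mod_cast Nat.div_mul_le_self _ _) (hqM q)
    calc _ ≤ ((p : ℝ) ^ (K - K₀) * J * ((((q : ℕ) / p ^ L : ℕ) : ℝ) + 1)) * (p : ℝ) ^ L :=
          mul_le_mul_of_nonneg_right (hdiag q L) (by positivity)
      _ = (p : ℝ) ^ (K - K₀) * J * ((((q : ℕ) / p ^ L : ℕ) : ℝ) * (p : ℝ) ^ L + (p : ℝ) ^ L) := by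
          ring
      _ ≤ _ := by gcongr
  · intro q L hκL hL
    refine (hlift' q q L hL).trans ?_
    refine mul_le_mul_of_nonneg_right ?_ (by positivity)
    rw [min_eq_right hκL]
    refine mul_le_mul_of_nonneg_right ?_ (by positivity)
    have h1 : (q : ℕ) / p ^ κ = 0 := by
      refine Nat.div_eq_of_lt ((hS q q.2).2.2.2.trans_lt ?_)
      exact Nat.pow_lt_pow_right hp.one_lt hMκ
    have h2 := hdiag q κ
    rwa [h1, Nat.cast_zero, zero_add, mul_one] at h2

lemma sum_ite_forall {d : ℕ} {ι : Fin d → Type} [∀ j, Fintype (ι j)] (P : ∀ j, ι j → Prop) :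
    (∑ t : ∀ j, ι j, if ∀ j, P j (t j) then (1 : ℝ) else 0) =
      ∏ j, ∑ i, if P j i then (1 : ℝ) else 0 := by
  rw [Finset.prod_univ_sum, Fintype.piFinset_univ]
  refine Finset.sum_congr rfl fun t _ => ?_
  rw [Finset.prod_ite_zero]
  simp

lemma pc_pi {d : ℕ} {ι : Fin d → Type} [∀ j, Fintype (ι j)] (L : ℕ) (y y' : ∀ j, ι j → ℤ_[p]) :
    (∑ t : ∀ j, ι j, ∑ t' : ∀ j, ι j,
      if ∀ j, (p : ℤ_[p]) ^ L ∣ y j (t j) - y' j (t' j) then (1 : ℝ) else 0) =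
      ∏ j, pc L (y j) (y' j) := by
  simp only [pc]
  rw [Finset.prod_univ_sum, Fintype.piFinset_univ]
  refine Finset.sum_congr rfl fun t _ => ?_
  exact sum_ite_forall fun j i => (p : ℤ_[p]) ^ L ∣ y j (t j) - y' j i

end Product

/-! ### Selecting a well spread subfamily -/

section Select

variable {p : ℕ} [Fact p.Prime]

/-- If a finite family of points is equidistributed at levels up to `K` and has few coincident pairs
at the levels from `K` to `N`, then the members that see few others at each of these levels form a
subfamily that is well spread at all levels up to `N`. -/
lemma exists_spread {d : ℕ} {I : Type} [Fintype I] [Nonempty I] (y : I → Fin d → ℤ_[p])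
    {N₀ K N : ℕ} {s s' s'' c : ℝ} (hs' : 0 < s') (hss : s' < s'') (hsd : s' < d) (hss' : s'' < s)
    (hc : 0 < c) (hc1 : (p : ℝ) ^ (-((d : ℝ) - s')) ≤ c)
    (hc2 : (p : ℝ) ^ (-(K : ℝ) * (s'' - s')) ≤ c)
    (hc3 : N * (p : ℝ) ^ (-(K : ℝ) * (s - s'')) ≤ 1 - c)
    (h₁ : ∀ L x, N₀ < L → L ≤ K → ((Finset.univ.filter fun i => y i ∈ cyl L x).card : ℝ) ≤
      Fintype.card I * (p : ℝ) ^ (((N₀ : ℝ) - L) * d))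
    (h₂ : ∀ L, K < L → L ≤ N → (∑ i, ∑ i', if y i' ∈ cyl L (y i) then (1 : ℝ) else 0) ≤
      (Fintype.card I : ℝ) ^ 2 * (p : ℝ) ^ (-(L : ℝ) * s)) :
    ∃ I' : Finset I, I'.Nonempty ∧ ∀ L x, N₀ < L → L ≤ N →
      ((I'.filter fun i => y i ∈ cyl L x).card : ℝ) ≤
        I'.card * (p : ℝ) ^ (((N₀ : ℝ) - L) * s') := by
  have hp0 : (0 : ℝ) < p := p_pos
  have hp1 : (1 : ℝ) < p := one_lt_p
  set A : ℝ := (Fintype.card I : ℝ) with hA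
  have hA0 : 0 < A := by rw [hA]; exact_mod_cast Fintype.card_pos (α := I)
  -- Markov's inequality bounds the number of members with too many neighbours at level `L`.
  set bad : ℕ → Finset I := fun L => Finset.univ.filter fun i =>
    A * (p : ℝ) ^ (-(L : ℝ) * s'') < ((Finset.univ.filter fun i' => y i' ∈ cyl L (y i)).card : ℝ)
    with hbad
  have hbadcard : ∀ L, K < L → L ≤ N → ((bad L).card : ℝ) ≤
      A * (p : ℝ) ^ (-(K : ℝ) * (s - s'')) := by
    intro L hKL hLN
    have hpos : 0 < A * (p : ℝ) ^ (-(L : ℝ) * s'') := by positivity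
    have h3 : ((bad L).card : ℝ) * (A * (p : ℝ) ^ (-(L : ℝ) * s'')) ≤
        A ^ 2 * (p : ℝ) ^ (-(L : ℝ) * s) := by
      refine le_trans ?_ (h₂ L hKL hLN)
      rw [← nsmul_eq_mul]
      refine (Finset.card_nsmul_le_sum (bad L)
        (fun i => ∑ i', if y i' ∈ cyl L (y i) then (1 : ℝ) else 0) _ fun i hi => ?_).trans ?_
      · rw [Finset.sum_boole]
        exact (Finset.mem_filter.1 hi).2.le
      · refine Finset.sum_le_sum_of_subset_of_nonneg (Finset.subset_univ _) fun i _ _ => ?_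
        exact Finset.sum_nonneg fun i' _ => by split_ifs <;> norm_num
    rw [← le_div_iff₀ hpos] at h3
    refine h3.trans (le_of_eq_of_le (b := A * (p : ℝ) ^ (-(L : ℝ) * (s - s''))) ?_ ?_)
    · rw [div_eq_iff hpos.ne']
      have : (p : ℝ) ^ (-(L : ℝ) * s) =
          (p : ℝ) ^ (-(L : ℝ) * (s - s'')) * (p : ℝ) ^ (-(L : ℝ) * s'') := by
        rw [← Real.rpow_add hp0]; congr 1; ring
      rw [this]; ring
    · refine mul_le_mul_of_nonneg_left (Real.rpow_le_rpow_of_exponent_le hp1.le ?_) hA0.le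
      have : (K : ℝ) ≤ L := by exact_mod_cast hKL.le
      nlinarith
  set B : Finset I := (Finset.Ioc K N).biUnion bad with hB
  have hBcard : (B.card : ℝ) ≤ A * (1 - c) := by
    have h3 : (B.card : ℝ) ≤ ∑ L ∈ Finset.Ioc K N, ((bad L).card : ℝ) := by
      exact_mod_cast Finset.card_biUnion_le
    refine h3.trans ?_
    refine (Finset.sum_le_card_nsmul _ _ (A * (p : ℝ) ^ (-(K : ℝ) * (s - s''))) fun L hL => ?_).trans
      ?_
    · rw [Finset.mem_Ioc] at hL
      exact hbadcard L hL.1 hL.2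
    · rw [nsmul_eq_mul, Nat.card_Ioc]
      have : ((N - K : ℕ) : ℝ) ≤ N := by exact_mod_cast Nat.sub_le _ _
      calc ((N - K : ℕ) : ℝ) * (A * (p : ℝ) ^ (-(K : ℝ) * (s - s'')))
          ≤ N * (A * (p : ℝ) ^ (-(K : ℝ) * (s - s''))) := by gcongr
        _ = A * (N * (p : ℝ) ^ (-(K : ℝ) * (s - s''))) := by ring
        _ ≤ _ := by gcongr
  have hI' : A * c ≤ (Bᶜ.card : ℝ) := by
    rw [Finset.card_compl, Nat.cast_sub (Finset.card_le_univ _)]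
    linarith
  refine ⟨Bᶜ, ?_, ?_⟩
  · rw [← Finset.card_pos]
    exact_mod_cast (mul_pos hA0 hc).trans_le hI'
  intro L x hL hLN
  rcases le_or_gt L K with hLK | hLK
  · have h3 : (((Bᶜ).filter fun i => y i ∈ cyl L x).card : ℝ) ≤
        A * (p : ℝ) ^ (((N₀ : ℝ) - L) * d) := by
      refine le_trans ?_ (h₁ L x hL hLK)
      exact_mod_cast Finset.card_le_card (Finset.filter_subset_filter _ (Finset.subset_univ _))
    refine h3.trans ?_
    have h4 : (p : ℝ) ^ (((N₀ : ℝ) - L) * d) ≤ c * (p : ℝ) ^ (((N₀ : ℝ) - L) * s') := by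
      refine le_trans ?_ (mul_le_mul_of_nonneg_right hc1 (by positivity))
      rw [← Real.rpow_add hp0]
      refine Real.rpow_le_rpow_of_exponent_le hp1.le ?_
      have : (N₀ : ℝ) + 1 ≤ L := by exact_mod_cast hL
      nlinarith
    calc _ ≤ A * (c * (p : ℝ) ^ (((N₀ : ℝ) - L) * s')) := by gcongr
      _ = A * c * (p : ℝ) ^ (((N₀ : ℝ) - L) * s') := by ring
      _ ≤ _ := by gcongr
  · rcases Finset.eq_empty_or_nonempty ((Bᶜ).filter fun i => y i ∈ cyl L x) with h | ⟨i, hi⟩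
    · rw [h, Finset.card_empty, Nat.cast_zero]
      positivity
    · obtain ⟨hiB, hix⟩ := Finset.mem_filter.1 hi
      have hgood : i ∉ bad L := fun h => Finset.mem_compl.1 hiB
        (Finset.mem_biUnion.2 ⟨L, Finset.mem_Ioc.2 ⟨hLK, hLN⟩, h⟩)
      have h3 : ((Finset.univ.filter fun i' => y i' ∈ cyl L (y i)).card : ℝ) ≤
          A * (p : ℝ) ^ (-(L : ℝ) * s'') := by
        by_contra h
        exact hgood (Finset.mem_filter.2 ⟨Finset.mem_univ _, not_le.1 h⟩)
      have h4 : (((Bᶜ).filter fun i => y i ∈ cyl L x).card : ℝ) ≤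
          (Finset.univ.filter fun i' => y i' ∈ cyl L (y i)).card := by
        refine Nat.cast_le.2 (Finset.card_le_card fun i' hi' => ?_)
        rw [Finset.mem_filter] at hi' ⊢
        exact ⟨Finset.mem_univ _, cyl_trans (cyl_symm hix) hi'.2⟩
      refine (h4.trans h3).trans ?_
      have h5 : (p : ℝ) ^ (-(L : ℝ) * s'') ≤ c * (p : ℝ) ^ (((N₀ : ℝ) - L) * s') := by
        refine le_trans ?_ (mul_le_mul_of_nonneg_right hc2 (by positivity))
        rw [← Real.rpow_add hp0]
        refine Real.rpow_le_rpow_of_exponent_le hp1.le ?_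
        have h6 : (K : ℝ) ≤ L := by exact_mod_cast hLK.le
        have h7 : (0 : ℝ) ≤ N₀ := Nat.cast_nonneg _
        nlinarith [mul_nonneg h7 hs'.le]
      calc _ ≤ A * (c * (p : ℝ) ^ (((N₀ : ℝ) - L) * s')) := by gcongr
        _ = A * c * (p : ℝ) ^ (((N₀ : ℝ) - L) * s') := by ring
        _ ≤ _ := by gcongr

/-- A well spread finite family supports a probability measure of the kind needed in `cantor`. -/
lemma exists_pmf {d : ℕ} {I : Type} [Fintype I] (y : I → Fin d → ℤ_[p]) (I' : Finset I)
    (hI' : I'.Nonempty) {N₀ N : ℕ} {s' : ℝ}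
    (h : ∀ L x, N₀ < L → L ≤ N → ((I'.filter fun i => y i ∈ cyl L x).card : ℝ) ≤
        I'.card * (p : ℝ) ^ (((N₀ : ℝ) - L) * s')) :
    ∃ μ : PMF (Fin d → ℤ_[p]), (∀ v ∈ μ.support, ∃ i, y i = v) ∧
      ∀ L, N₀ < L → L ≤ N → ∀ x, μ.toOuterMeasure (cyl L x) ≤
        ENNReal.ofReal ((p : ℝ) ^ (((N₀ : ℝ) - L) * s')) := by
  refine ⟨(PMF.uniformOfFinset I' hI').map y, ?_, ?_⟩
  · intro v hv
    obtain ⟨i, -, hi⟩ := (PMF.mem_support_map_iff _ _ _).1 hv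
    exact ⟨i, hi⟩
  · intro L h1 h2 x
    rw [PMF.toOuterMeasure_map_apply, PMF.toOuterMeasure_uniformOfFinset_apply]
    have h3 := h L x h1 h2
    have h4 : (0 : ℝ) < I'.card := by exact_mod_cast hI'.card_pos
    rw [ENNReal.div_le_iff_le_mul (Or.inl (by exact_mod_cast h4.ne'))
      (Or.inl (ENNReal.natCast_ne_top _))]
    rw [← ENNReal.ofReal_natCast, ← ENNReal.ofReal_natCast (I'.card),
      ← ENNReal.ofReal_mul (Real.rpow_nonneg p_pos.le _)]
    refine ENNReal.ofReal_le_ofReal ?_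
    rw [mul_comm]
    exact h3

end Select

/-! ### The dimension formula as a piecewise linear inequality -/

section Formula

variable {d : ℕ}

/-- The claimed dimension is less than `d`, as its term for the largest `b i` is
`d - (∑ j, b j - D) / b i`. -/
lemma iInf_lt_card (hd : 1 ≤ d) (b : Fin d → ℝ) (hb : ∀ j, 1 < b j) {D s : ℝ}
    (hD : D < ∑ j, b j) (hs : ∀ i, s ≤ (D + ∑ j, max (b i - b j) 0) / b i) : s < d := by
  have : Nonempty (Fin d) := ⟨⟨0, hd⟩⟩
  obtain ⟨i, hi⟩ := Finite.exists_max b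
  refine (hs i).trans_lt ?_
  have hbi : 0 < b i := by linarith [hb i]
  rw [div_lt_iff₀ hbi]
  have : ∑ j, max (b i - b j) 0 = d * b i - ∑ j, b j := by
    rw [show ∑ j, max (b i - b j) 0 = ∑ j, (b i - b j) from
      Finset.sum_congr rfl fun j _ => max_eq_left (sub_nonneg.2 (hi j))]
    simp
  linarith

/-- The function `ρ ↦ D + ∑ j, max (ρ - b j) 0 - ρ * s` is linear between consecutive breakpoints
`b j`, nonnegative at them and at `0`, and finally increasing; so it is nonnegative throughout. -/
lemma mul_le_breakpoints (b : Fin d → ℝ) (hb : ∀ j, 1 < b j) {D s : ℝ} (hs0 : 0 < s)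
    (hsd : s < d) (hs : ∀ i, s ≤ (D + ∑ j, max (b i - b j) 0) / b i) (ρ : ℝ) :
    ρ * s ≤ D + ∑ j, max (ρ - b j) 0 := by
  set A : Finset (Fin d) := Finset.univ.filter fun j => b j < ρ with hA
  have hmem : ∀ j, j ∈ A ↔ b j < ρ := fun j => by simp [hA]
  have hs' : ∀ i, s * b i ≤ D + ∑ j, max (b i - b j) 0 := fun i =>
    (le_div_iff₀ (by linarith [hb i])).1 (hs i)
  -- the sum may be restricted to `A` at `ρ` and at the breakpoints next to `ρ`
  have hsum : ∀ t, (∀ j ∈ A, b j ≤ t) → (∀ j ∉ A, t ≤ b j) →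
      ∑ j, max (t - b j) 0 = A.card * t - ∑ j ∈ A, b j := by
    intro t h1 h2
    rw [← Finset.sum_subset (Finset.subset_univ A) fun j _ hj =>
      max_eq_right (sub_nonpos.2 (h2 j hj)),
      Finset.sum_congr rfl fun j hj => max_eq_left (sub_nonneg.2 (h1 j hj)),
      Finset.sum_sub_distrib, Finset.sum_const, nsmul_eq_mul]
  have hρ := hsum ρ (fun j hj => ((hmem j).1 hj).le) fun j hj => not_lt.1 fun h => hj ((hmem j).2 h)
  rw [hρ]
  rcases le_or_gt s A.card with h | h
  · have hne : A.Nonempty := by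
      rw [← Finset.card_pos]
      exact_mod_cast hs0.trans_le h
    obtain ⟨i, hi, hmax⟩ := A.exists_max_image b hne
    have h1 := hs' i
    have h2 := (hmem i).1 hi
    rw [hsum (b i) hmax fun j hj => h2.le.trans (not_lt.1 fun h => hj ((hmem j).2 h))] at h1
    nlinarith
  · have hne : (Finset.univ \ A).Nonempty := by
      rw [Finset.sdiff_nonempty]
      intro hsub
      have h3 := Finset.card_le_card hsub
      rw [Finset.card_univ, Fintype.card_fin] at h3
      have h3' : (d : ℝ) ≤ A.card := by exact_mod_cast h3
      linarith
    obtain ⟨i, hi, hmin⟩ := (Finset.univ \ A).exists_min_image b hne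
    have h1 := hs' i
    have h2 : ρ ≤ b i := not_lt.1 fun h => (Finset.mem_sdiff.1 hi).2 ((hmem i).2 h)
    rw [hsum (b i) (fun j hj => ((hmem j).1 hj).le.trans h2) fun j hj =>
      hmin j (Finset.mem_sdiff.2 ⟨Finset.mem_univ _, hj⟩)] at h1
    nlinarith

/-- The form of the inequality that controls pairs of points with the same denominator. -/
lemma mul_le_diag (b : Fin d → ℝ) (hb : ∀ j, 1 < b j) {e s : ℝ} (he : 0 < e) (hs0 : 0 < s)
    (hsd : s < d) (hs : ∀ i, s ≤ (d + e + ∑ j, max (b i - b j) 0) / b i) (ρ : ℝ) (hρ : 0 ≤ ρ) :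
    ρ * s ≤ e + d * min ρ 1 + ∑ j, max (ρ - b j) 0 := by
  rcases le_total ρ 1 with h | h
  · rw [min_eq_left h]
    have : 0 ≤ ∑ j, max (ρ - b j) 0 := Finset.sum_nonneg fun j _ => le_max_right _ _
    nlinarith
  · rw [min_eq_right h]
    have := mul_le_breakpoints b hb hs0 hsd hs ρ
    linarith

end Formula

/-! ### Pair counts of the product families -/

section Pairs

variable {p : ℕ} [Fact p.Prime]

/-- Pair counts for equal denominators at level `L = ρ * M`, as a power of `Q = p ^ M`: the
hypotheses treat the levels below and above the quality `b` of the approximation. -/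
lemma diag_bound {L M : ℕ} {b ε ρ n P v : ℝ} (hb : 0 ≤ b)
    (hρ : ((p : ℝ) ^ M) ^ ρ = (p : ℝ) ^ L) (hM : 0 < M) (hn : ((p : ℝ) ^ M) ^ (1 - ε) ≤ n)
    (h₁ : L ≤ lev M b → v * (p : ℝ) ^ L ≤ n * ((p : ℝ) ^ M + (p : ℝ) ^ L) * P ^ 2)
    (h₂ : lev M b ≤ L → v * (p : ℝ) ^ L ≤ n * (p : ℝ) ^ (lev M b) * P ^ 2) :
    v ≤ (n * P) ^ 2 * (2 * p * ((p : ℝ) ^ M) ^ (ε - min ρ 1 - max (ρ - b) 0)) := by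
  have hp0 : (0 : ℝ) < p := p_pos
  have hp1 : (1 : ℝ) < p := one_lt_p
  have hlev1 := rpow_lt_pow_lev (p := p) M b
  have hlev2 := pow_lev_le (p := p) M hb
  set Q : ℝ := (p : ℝ) ^ M with hQ
  have hQ0 : 0 < Q := pow_pos hp0 M
  have hQ1 : 1 < Q := one_lt_pow₀ hp1 hM.ne'
  have hn0 : 0 < n := (Real.rpow_pos_of_pos hQ0 _).trans_le hn
  set E : ℝ := 1 - min ρ 1 + ρ - max (ρ - b) 0 with hE
  have hstep : Q ^ E ≤ n * Q ^ (ε - min ρ 1 - max (ρ - b) 0) * Q ^ ρ := by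
    refine le_trans (le_of_eq ?_) (mul_le_mul_of_nonneg_right
      (mul_le_mul_of_nonneg_right hn (Real.rpow_nonneg hQ0.le _)) (Real.rpow_nonneg hQ0.le _))
    rw [← Real.rpow_add hQ0, ← Real.rpow_add hQ0, hE]
    congr 1
    ring
  have hfin : ∀ W : ℝ, v * Q ^ ρ ≤ n * W * P ^ 2 → W ≤ 2 * p * Q ^ E →
      v ≤ (n * P) ^ 2 * (2 * p * Q ^ (ε - min ρ 1 - max (ρ - b) 0)) := by
    intro W h3 h4
    refine le_of_mul_le_mul_right (h3.trans ?_) (Real.rpow_pos_of_pos hQ0 ρ)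
    calc n * W * P ^ 2 ≤ n * (2 * p * (n * Q ^ (ε - min ρ 1 - max (ρ - b) 0) * Q ^ ρ)) * P ^ 2 := by
          gcongr
          exact h4.trans (by gcongr)
      _ = _ := by ring
  rcases le_total L (lev M b) with hL | hL
  · refine hfin (Q + (p : ℝ) ^ L) (hρ ▸ h₁ hL) ?_
    have h3 : Q ^ (max (ρ - b) 0) ≤ p := by
      rcases le_total (ρ - b) 0 with h | h
      · rw [max_eq_right h, Real.rpow_zero]; exact hp1.le
      · rw [max_eq_left h, Real.rpow_sub hQ0, div_le_iff₀ (Real.rpow_pos_of_pos hQ0 _), hρ]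
        exact (pow_le_pow_right₀ hp1.le hL).trans hlev2
    have h4 : Q + Q ^ ρ ≤ 2 * Q ^ (1 - min ρ 1 + ρ) := by
      have h5 : Q ≤ Q ^ (1 - min ρ 1 + ρ) := by
        conv_lhs => rw [← Real.rpow_one Q]
        refine Real.rpow_le_rpow_of_exponent_le hQ1.le ?_
        linarith [min_le_left ρ 1]
      have h6 : Q ^ ρ ≤ Q ^ (1 - min ρ 1 + ρ) := by
        refine Real.rpow_le_rpow_of_exponent_le hQ1.le ?_
        linarith [min_le_right ρ 1]
      linarith
    rw [← hρ]
    refine h4.trans ?_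
    have h7 : Q ^ (1 - min ρ 1 + ρ) = Q ^ E * Q ^ (max (ρ - b) 0) := by
      rw [← Real.rpow_add hQ0, hE]
      congr 1
      ring
    rw [h7]
    have := mul_le_mul_of_nonneg_left h3 (Real.rpow_nonneg hQ0.le E)
    nlinarith
  · refine hfin ((p : ℝ) ^ lev M b) (hρ ▸ h₂ hL) ?_
    have hρb : b < ρ := by
      rw [← Real.rpow_lt_rpow_left_iff hQ1, hρ]
      exact hlev1.trans_le (pow_le_pow_right₀ hp1.le hL)
    have h3 : Q ^ b ≤ Q ^ E := by
      refine Real.rpow_le_rpow_of_exponent_le hQ1.le ?_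
      rw [hE, max_eq_left (by linarith)]
      linarith [min_le_right ρ 1]
    refine hlev2.trans ?_
    have := mul_le_mul_of_nonneg_left h3 hp0.le
    have h4 : 0 ≤ (p : ℝ) * Q ^ E := by positivity
    nlinarith

/-- Pair counts for different denominators at level `L = ρ * M`, as a power of `Q = p ^ M`: up to
`Q ^ (2 * ε)` they are those of random points. -/
lemma offdiag_bound {L M : ℕ} {ε ρ n P v : ℝ}
    (hρ : ((p : ℝ) ^ M) ^ ρ = (p : ℝ) ^ L) (hn : ((p : ℝ) ^ M) ^ (1 - ε) ≤ n)
    (h : v * (p : ℝ) ^ L ≤ 2 * ((p : ℝ) ^ M) ^ 2 * P ^ 2) :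
    v ≤ (n * P) ^ 2 * (2 * ((p : ℝ) ^ M) ^ (2 * ε - ρ)) := by
  have hp0 : (0 : ℝ) < p := p_pos
  set Q : ℝ := (p : ℝ) ^ M with hQ
  have hQ0 : 0 < Q := pow_pos hp0 M
  rw [← hρ] at h
  refine le_of_mul_le_mul_right (h.trans ?_) (Real.rpow_pos_of_pos hQ0 ρ)
  have h3 : (Q ^ (1 - ε)) ^ 2 ≤ n ^ 2 := pow_le_pow_left₀ (Real.rpow_nonneg hQ0.le _) hn 2
  have h4 : Q ^ 2 = (Q ^ (1 - ε)) ^ 2 * Q ^ (2 * ε - ρ) * Q ^ ρ := by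
    rw [← Real.rpow_natCast, ← Real.rpow_natCast, ← Real.rpow_mul hQ0.le, ← Real.rpow_add hQ0,
      ← Real.rpow_add hQ0]
    congr 1
    push_cast
    ring
  rw [h4]
  have h5 : 0 ≤ Q ^ (2 * ε - ρ) * Q ^ ρ * P ^ 2 := by positivity
  nlinarith [mul_le_mul_of_nonneg_right h3 h5]

lemma sum_pairs_le {d L : ℕ} {S : Finset ℕ} {ι : Fin d → Type} [∀ j, Fintype (ι j)]
    (Y : ∀ j, S → ι j → ℤ_[p]) {A B : ℝ} (hA : 0 ≤ A)
    (hoff : ∀ q q' : S, q ≠ q' → ∏ j, pc L (Y j q) (Y j q') ≤ A)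
    (hdiag : ∀ q : S, ∏ j, pc L (Y j q) (Y j q) ≤ B) :
    (∑ i : S × (∀ j, ι j), ∑ i' : S × (∀ j, ι j),
      if (fun j => Y j i'.1 (i'.2 j)) ∈ cyl L (fun j => Y j i.1 (i.2 j)) then (1 : ℝ) else 0) ≤
      (S.card : ℝ) ^ 2 * A + S.card * B := by
  rw [Finset.sum_comm]
  have h1 : ∀ q q' : S, (∑ t : ∀ j, ι j, ∑ t' : ∀ j, ι j,
      if (fun j => Y j q (t j)) ∈ cyl L (fun j => Y j q' (t' j)) then (1 : ℝ) else 0) =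
      ∏ j, pc L (Y j q) (Y j q') := by
    intro q q'
    rw [← pc_pi]
    exact Finset.sum_congr rfl fun t _ => Finset.sum_congr rfl fun t' _ =>
      if_congr Iff.rfl rfl rfl
  have h2 : (∑ i : S × (∀ j, ι j), ∑ i' : S × (∀ j, ι j),
      if (fun j => Y j i.1 (i.2 j)) ∈ cyl L (fun j => Y j i'.1 (i'.2 j)) then (1 : ℝ) else 0) =
      ∑ q : S, ∑ q' : S, ∏ j, pc L (Y j q) (Y j q') := by
    simp_rw [Fintype.sum_prod_type, ← h1]
    exact Finset.sum_congr rfl fun q _ => Finset.sum_comm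
  rw [h2]
  calc _ ≤ ∑ q : S, ∑ q' : S, (A + if q = q' then B else 0) := by
        refine Finset.sum_le_sum fun q _ => Finset.sum_le_sum fun q' _ => ?_
        by_cases h : q = q'
        · subst h
          rw [if_pos rfl]
          exact (hdiag q).trans (le_add_of_nonneg_left hA)
        · rw [if_neg h, add_zero]
          exact hoff q q' h
    _ = _ := by
        simp [Finset.sum_add_distrib]
        ring

/-- Parameters of the families: `T` bounds the gaps between numerators coprime to `q`, and `J` is
the number of blocks of length `p ^ K * T` below `p ^ (2 * K) / 2`. -/
lemma exists_parameters (N₀ : ℕ) {ε : ℝ} (hε : 0 < ε) (hε2 : ε ≤ 1 / 2) :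
    ∀ᶠ K : ℕ in Filter.atTop, N₀ ≤ K ∧ ∃ T J : ℕ,
      (∀ q, 1 ≤ q → q ≤ p ^ (2 * K) → 4 ^ q.primeFactors.card ≤ T) ∧
      2 * (J * (p ^ K * T)) ≤ p ^ (2 * K) ∧
      ((p : ℝ) ^ (2 * K)) ^ (1 - ε) ≤ (p : ℝ) ^ (K - N₀) * J := by
  have hp : p.Prime := Fact.out
  have hp0 : (0 : ℝ) < p := p_pos
  have hp1 : (1 : ℝ) < p := one_lt_p
  obtain ⟨C, hC, hω⟩ := four_pow_omega_le (ε / 2) (by positivity)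
  have htwo : Filter.Tendsto (fun K : ℕ => 2 * K) Filter.atTop Filter.atTop :=
    Filter.tendsto_atTop_mono (fun K => Nat.le_mul_of_pos_left K two_pos) Filter.tendsto_id
  filter_upwards [htwo.eventually (eventually_le_rpow (p := p) (4 * (p : ℝ) ^ N₀ * C) (ε / 2)
    (by positivity)), Filter.eventually_ge_atTop N₀] with K h1 hK
  refine ⟨hK, ?_⟩
  set Q : ℝ := (p : ℝ) ^ (2 * K) with hQ
  have hQ0 : 0 < Q := pow_pos hp0 _
  have hQ1 : 1 ≤ Q := one_le_pow₀ hp1.le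
  set T : ℕ := ⌊C * Q ^ (ε / 2)⌋₊ with hT
  have hωT : ∀ q, 1 ≤ q → q ≤ p ^ (2 * K) → 4 ^ q.primeFactors.card ≤ T := by
    intro q hq hqQ
    refine Nat.le_floor ?_
    push_cast
    refine (hω q hq).trans (mul_le_mul_of_nonneg_left ?_ hC.le)
    refine Real.rpow_le_rpow (Nat.cast_nonneg _) ?_ (by positivity)
    rw [hQ]; exact_mod_cast hqQ
  have hT0 : 0 < T := by
    have := hωT 1 le_rfl (Nat.one_le_pow _ _ hp.pos)
    exact (pow_pos (by norm_num) _).trans_le this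
  have hTle : (T : ℝ) ≤ C * Q ^ (ε / 2) := Nat.floor_le (by positivity)
  have hTQ : 4 * (p : ℝ) ^ N₀ * T ≤ Q ^ ε := by
    have : Q ^ ε = Q ^ (ε / 2) * Q ^ (ε / 2) := by
      rw [← Real.rpow_add hQ0]; congr 1; ring
    rw [this]
    calc 4 * (p : ℝ) ^ N₀ * T ≤ 4 * (p : ℝ) ^ N₀ * (C * Q ^ (ε / 2)) := by gcongr
      _ = (4 * (p : ℝ) ^ N₀ * C) * Q ^ (ε / 2) := by ring
      _ ≤ _ := by gcongr
  have hpN : (1 : ℝ) ≤ (p : ℝ) ^ N₀ := one_le_pow₀ hp1.le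
  have hhalf : Q ^ ε ≤ (p : ℝ) ^ K := by
    have : (p : ℝ) ^ K = Q ^ (1 / 2 : ℝ) := by
      rw [hQ, ← Real.rpow_natCast, ← Real.rpow_natCast, ← Real.rpow_mul hp0.le]
      congr 1; push_cast; ring
    rw [this]
    exact Real.rpow_le_rpow_of_exponent_le hQ1 hε2
  have hT2 : 2 * T ≤ p ^ K := by
    have h3 : 2 * (T : ℝ) ≤ (p : ℝ) ^ K := by
      have h4 : (0 : ℝ) ≤ T := Nat.cast_nonneg _
      nlinarith
    exact_mod_cast h3
  set W : ℕ := 2 * (p ^ K * T) with hW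
  have hW0 : 0 < W := Nat.mul_pos two_pos (Nat.mul_pos (pow_pos hp.pos _) hT0)
  refine ⟨T, p ^ (2 * K) / W, hωT, ?_, ?_⟩
  · calc 2 * (p ^ (2 * K) / W * (p ^ K * T)) = p ^ (2 * K) / W * W := by rw [hW]; ring
      _ ≤ _ := Nat.div_mul_le_self _ _
  · have hWQ : W ≤ p ^ (2 * K) := by
      rw [hW, two_mul K, pow_add]
      calc 2 * (p ^ K * T) = p ^ K * (2 * T) := by ring
        _ ≤ _ := Nat.mul_le_mul_left _ hT2
    -- the integer quotient is at least half of the real one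
    have hJ : Q ≤ 2 * (((p ^ (2 * K) / W : ℕ) : ℝ)) * W := by
      have h5 := Nat.div_add_mod (p ^ (2 * K)) W
      have h6 := Nat.mod_lt (p ^ (2 * K)) hW0
      have h7 : 1 ≤ p ^ (2 * K) / W := (Nat.one_le_div_iff hW0).2 hWQ
      have h8 : p ^ (2 * K) ≤ 2 * (p ^ (2 * K) / W) * W := by nlinarith
      rw [hQ]
      exact_mod_cast h8
    have hpow : (p : ℝ) ^ K = (p : ℝ) ^ (K - N₀) * (p : ℝ) ^ N₀ := by
      rw [← pow_add, Nat.sub_add_cancel hK]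
    set J : ℝ := ((p ^ (2 * K) / W : ℕ) : ℝ) with hJdef
    have h9 : Q ≤ ((p : ℝ) ^ (K - N₀) * J) * (4 * (p : ℝ) ^ N₀ * T) := by
      refine hJ.trans (le_of_eq ?_)
      rw [hW]
      push_cast
      rw [hpow]
      ring
    have h10 : Q ≤ ((p : ℝ) ^ (K - N₀) * J) * Q ^ ε :=
      h9.trans (mul_le_mul_of_nonneg_left hTQ (by positivity))
    rw [Real.rpow_sub hQ0, Real.rpow_one, div_le_iff₀ (Real.rpow_pos_of_pos hQ0 _)]
    exact h10

end Pairs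

/-! ### The local measures -/

section LocalMeasure

variable {p : ℕ} [Fact p.Prime]

/-- The total weight of the pairs at level `L`, in terms of `Q = p ^ M` and `ρ = L / M`: both the
pairs with different denominators and those with equal denominators are rare. -/
lemma pair_weight_le {d : ℕ} (b : Fin d → ℝ) {Q e s t ε η ρ A C : ℝ} (hQ : 1 < Q) (hC : 1 ≤ C)
    (hsd : s < d) (hε : 0 ≤ ε) (hη : 0 ≤ η) (hρ : 1 / 2 ≤ ρ)
    (hF : ρ * s ≤ e + d * min ρ 1 + ∑ j, max (ρ - b j) 0)
    (hA : Q ^ (e - η) ≤ A) (hCQ : 2 * C ≤ Q ^ (2 * (d * ε) + η))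
    (ht : 2 * (2 * (d * ε) + η) ≤ (s - t) / 2) (hts : t ≤ s) :
    A ^ 2 * (C * Q ^ (d * (2 * ε - ρ))) +
      A * (C * Q ^ (∑ j, (ε - min ρ 1 - max (ρ - b j) 0))) ≤ A ^ 2 * Q ^ (-ρ * t) := by
  have hQ0 : 0 < Q := by linarith
  have hA0 : 0 < A := (Real.rpow_pos_of_pos hQ0 _).trans_le hA
  set θ : ℝ := 2 * (d * ε) + η with hθ
  have hd0 : (0 : ℝ) ≤ d := Nat.cast_nonneg d
  have hdε : 0 ≤ d * ε := mul_nonneg hd0 hε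
  have h1 : Q ^ (d * (2 * ε - ρ)) ≤ Q ^ (θ - ρ * s) := by
    refine Real.rpow_le_rpow_of_exponent_le hQ.le ?_
    nlinarith
  have h2 : A * Q ^ (∑ j, (ε - min ρ 1 - max (ρ - b j) 0)) ≤ A ^ 2 * Q ^ (θ - ρ * s) := by
    have h3 : Q ^ (∑ j, (ε - min ρ 1 - max (ρ - b j) 0)) ≤ Q ^ (e - η) * Q ^ (θ - ρ * s) := by
      rw [← Real.rpow_add hQ0]
      refine Real.rpow_le_rpow_of_exponent_le hQ.le ?_
      rw [Finset.sum_sub_distrib, Finset.sum_const, Finset.card_univ, Fintype.card_fin,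
        nsmul_eq_mul]
      nlinarith
    have h4 : 0 < Q ^ (θ - ρ * s) := Real.rpow_pos_of_pos hQ0 _
    calc _ ≤ A * (Q ^ (e - η) * Q ^ (θ - ρ * s)) := by gcongr
      _ ≤ A * (A * Q ^ (θ - ρ * s)) := by gcongr
      _ = _ := by ring
  have h5 : 2 * C * Q ^ (θ - ρ * s) ≤ Q ^ (-ρ * t) := by
    calc 2 * C * Q ^ (θ - ρ * s) ≤ Q ^ θ * Q ^ (θ - ρ * s) := by gcongr
      _ = Q ^ (θ + (θ - ρ * s)) := (Real.rpow_add hQ0 _ _).symm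
      _ ≤ _ := by
        refine Real.rpow_le_rpow_of_exponent_le hQ.le ?_
        nlinarith
  calc _ ≤ A ^ 2 * (C * Q ^ (θ - ρ * s)) + C * (A ^ 2 * Q ^ (θ - ρ * s)) := by
        refine add_le_add (by gcongr) ?_
        rw [mul_left_comm]
        gcongr
    _ = A ^ 2 * (2 * C * Q ^ (θ - ρ * s)) := by ring
    _ ≤ _ := by gcongr

/-- The number of levels treated by the second moment method grows only linearly in `K`. -/
lemma eventually_levels_le {d : ℕ} (b : Fin d → ℝ) (hb : ∀ j, 1 < b j) {γ c : ℝ} (hγ : 0 < γ)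
    (hc : c < 1) : ∀ᶠ K : ℕ in Filter.atTop,
      ((∑ j, lev (2 * K) (b j) : ℕ) : ℝ) * (p : ℝ) ^ (-(K : ℝ) * γ) ≤ 1 - c := by
  have hp0 : (0 : ℝ) < p := p_pos
  have hp1 : (1 : ℝ) < p := one_lt_p
  set r : ℝ := (p : ℝ) ^ (-γ) with hr
  have hr0 : 0 < r := Real.rpow_pos_of_pos hp0 _
  have hr1 : |r| < 1 := by
    rw [abs_of_pos hr0]
    exact Real.rpow_lt_one_of_one_lt_of_neg hp1 (by linarith)
  have hlim := (tendsto_pow_const_mul_const_pow_of_abs_lt_one 1 hr1).const_mul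
    (∑ j, (2 * b j + 1))
  rw [mul_zero] at hlim
  filter_upwards [hlim.eventually_le_const (u := 1 - c) (by linarith),
    Filter.eventually_ge_atTop 1] with K h1 hK
  have hK' : (1 : ℝ) ≤ K := by exact_mod_cast hK
  have h2 : ((∑ j, lev (2 * K) (b j) : ℕ) : ℝ) ≤ (∑ j, (2 * b j + 1)) * K := by
    push_cast
    rw [Finset.sum_mul]
    refine Finset.sum_le_sum fun j _ => ?_
    have h3 : ((lev (2 * K) (b j) : ℕ) : ℝ) ≤ (2 * K : ℕ) * b j + 1 := by
      rw [lev]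
      push_cast
      have := Nat.floor_le (a := 2 * (K : ℝ) * b j) (by have := hb j; positivity)
      linarith
    push_cast at h3
    nlinarith
  have h4 : (p : ℝ) ^ (-(K : ℝ) * γ) = r ^ K := by
    rw [hr, ← Real.rpow_natCast, ← Real.rpow_mul hp0.le]
    congr 1; ring
  rw [h4]
  refine le_trans ?_ h1
  rw [pow_one, ← mul_assoc]
  gcongr

/-- From sufficiently many denominators `q` of size about `p ^ (2 * K)` one obtains, inside every
cylinder of level `N₀`, a measure carried by points near fractions with these denominators and with
the regularity required in `cantor`. -/
lemma exists_measure {d : ℕ} (hd : 1 ≤ d) (b : Fin d → ℝ) (hb : ∀ j, 1 < b j) {e s s' : ℝ}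
    (he : 0 < e) (hs'0 : 0 < s') (hs's : s' < s) (hsd : s < d)
    (hs : ∀ i, s ≤ (d + e + ∑ j, max (b i - b j) 0) / b i) (N₀ : ℕ) :
    ∃ η : ℝ, 0 < η ∧ ∀ᶠ K : ℕ in Filter.atTop, ∃ N > N₀, (∀ j, lev (2 * K) (b j) ≤ N) ∧
      ∀ S : Finset ℕ, ((p : ℝ) ^ (2 * K)) ^ (e - η) ≤ S.card →
      (∀ q ∈ S, p ^ (2 * K) ≤ 2 * q ∧ q ≤ p ^ (2 * K) ∧ ¬ p ∣ q) →
      ∀ z : Fin d → ℤ_[p], ∃ μ : PMF (Fin d → ℤ_[p]), (∀ y ∈ μ.support, y ∈ cyl N₀ z) ∧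
        (∀ y ∈ μ.support, ∃ q ∈ S, ∀ j, ∃ a : ℕ, a < q ∧ a.Coprime q ∧
          (p : ℤ_[p]) ^ (lev (2 * K) (b j)) ∣ (q : ℤ_[p]) * y j - (a : ℤ_[p])) ∧
        ∀ L, N₀ < L → L ≤ N → ∀ x, μ.toOuterMeasure (cyl L x) ≤
          ENNReal.ofReal ((p : ℝ) ^ (((N₀ : ℝ) - L) * s')) := by
  have hp : p.Prime := Fact.out
  have hp0 : (0 : ℝ) < p := p_pos
  have hp1 : (1 : ℝ) < p := one_lt_p
  have hd1 : (1 : ℝ) ≤ d := by exact_mod_cast hd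
  have hd0 : (0 : ℝ) < d := by linarith
  set δ : ℝ := s - s' with hδ
  have hδ0 : 0 < δ := by rw [hδ]; linarith
  set ε : ℝ := δ / (48 * d) with hε
  have hε0 : 0 < ε := by positivity
  have hdε : d * ε = δ / 48 := by rw [hε]; field_simp
  have hε2 : ε ≤ 1 / 2 := by
    have : δ ≤ d := by rw [hδ]; linarith
    nlinarith
  set c : ℝ := (p : ℝ) ^ (-((d : ℝ) - s')) with hc
  have hc0 : 0 < c := Real.rpow_pos_of_pos hp0 _
  have hc1 : c < 1 := Real.rpow_lt_one_of_one_lt_of_neg hp1 (by linarith)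
  have htwo : Filter.Tendsto (fun K : ℕ => 2 * K) Filter.atTop Filter.atTop :=
    Filter.tendsto_atTop_mono (fun K => Nat.le_mul_of_pos_left K two_pos) Filter.tendsto_id
  refine ⟨δ / 24, by positivity, ?_⟩
  filter_upwards [exists_parameters (p := p) N₀ hε0 hε2,
    htwo.eventually (eventually_le_rpow (p := p) (2 * (2 * p) ^ d) (2 * (d * ε) + δ / 24)
      (by positivity)),
    eventually_levels_le (p := p) b hb (γ := δ / 3) (by positivity) hc1,
    Filter.eventually_ge_atTop ⌈3 * d / δ⌉₊, Filter.eventually_ge_atTop 1] with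
    K ⟨hN₀K, T, J, hT, hJ, hn⟩ hCQ hlev hKδ hK1
  have hK2 : ∀ j, 2 * K < lev (2 * K) (b j) := fun j => lt_lev (hb j)
  set N : ℕ := ∑ j, lev (2 * K) (b j) with hN
  have hκN : ∀ j, lev (2 * K) (b j) ≤ N := fun j =>
    Finset.single_le_sum (f := fun j => lev (2 * K) (b j)) (fun _ _ => Nat.zero_le _)
      (Finset.mem_univ j)
  refine ⟨N, ?_, hκN, ?_⟩
  · have h1 := hK2 ⟨0, hd⟩
    have h2 := hκN ⟨0, hd⟩
    omega
  intro S hScard hS z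
  set Q : ℝ := (p : ℝ) ^ (2 * K) with hQ
  have hQ0 : 0 < Q := pow_pos hp0 _
  have hQ1 : 1 < Q := one_lt_pow₀ hp1 (by omega)
  set n : ℝ := (p : ℝ) ^ (K - N₀) * J with hndef
  have hn0 : 0 < n := (Real.rpow_pos_of_pos hQ0 _).trans_le hn
  have hJ0 : 0 < J := by
    rcases Nat.eq_zero_or_pos J with h | h
    · rw [hndef, h] at hn0; simp at hn0
    · exact h
  have hfam : ∀ j, _ := fun j => exists_families (p := p) (K₀ := N₀) (K := K) (J := J) (T := T)
    (M := 2 * K) (κ := lev (2 * K) (b j)) (N := N) S hN₀K (by have := hK2 j; omega) (hK2 j) (hκN j)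
    (fun q hq => by
      obtain ⟨h1, h2, h3⟩ := hS q hq
      have hq1 : 1 ≤ q := Nat.pos_of_ne_zero fun h => h3 (h ▸ dvd_zero p)
      exact ⟨h3, hT q hq1 h2, by omega, h2⟩) (z j)
  choose Y hYz hYa hYlow hYoff hYd1 hYd2 using hfam
  set y : S × (∀ j, Idx p N₀ K J (lev (2 * K) (b j)) N) → Fin d → ℤ_[p] :=
    fun i j => Y j i.1 (i.2 j) with hy
  have hS0 : (0 : ℝ) < S.card := (Real.rpow_pos_of_pos hQ0 _).trans_le hScard
  set P : Fin d → ℝ := fun j => (p : ℝ) ^ (N - lev (2 * K) (b j)) with hP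
  have hP0 : ∀ j, 0 < P j := fun j => pow_pos hp0 _
  have hIcard : (Fintype.card (S × (∀ j, Idx p N₀ K J (lev (2 * K) (b j)) N)) : ℝ) =
      S.card * ∏ j, (n * P j) := by
    rw [Fintype.card_prod, Fintype.card_pi, Fintype.card_coe]
    push_cast
    congr 1
    refine Finset.prod_congr rfl fun j _ => ?_
    exact card_Idx (p := p) N₀ K J (lev (2 * K) (b j)) N
  have hnP : 0 < ∏ j, (n * P j) := Finset.prod_pos fun j _ => mul_pos hn0 (hP0 j)
  have : Nonempty (S × (∀ j, Idx p N₀ K J (lev (2 * K) (b j)) N)) := by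
    rw [← Fintype.card_pos_iff]
    have : (0 : ℝ) < Fintype.card (S × (∀ j, Idx p N₀ K J (lev (2 * K) (b j)) N)) := by
      rw [hIcard]; positivity
    exact_mod_cast this
  refine Exists.elim (exists_spread (p := p) y (N₀ := N₀) (K := K) (N := N)
    (s := s' + 2 * (δ / 3)) (s' := s') (s'' := s' + δ / 3) (c := c) hs'0 (by linarith)
    (by linarith) (by linarith) hc0 le_rfl ?_ ?_ ?_ ?_) ?_
  · rw [hc]
    refine Real.rpow_le_rpow_of_exponent_le hp1.le ?_
    have h1 : 3 * d / δ ≤ K := Nat.ceil_le.1 hKδ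
    rw [div_le_iff₀ hδ0] at h1
    nlinarith
  · convert hlev using 4
    ring
  · intro L x h1 h2
    have h3 : ((Finset.univ.filter fun i => y i ∈ cyl L x).card : ℝ) =
        ∑ q : S, ∏ j, ∑ i, if (p : ℤ_[p]) ^ L ∣ Y j q i - x j then (1 : ℝ) else 0 := by
      rw [← Finset.sum_boole, Fintype.sum_prod_type]
      refine Finset.sum_congr rfl fun q _ => ?_
      rw [← sum_ite_forall fun j i => (p : ℤ_[p]) ^ L ∣ Y j q i - x j]
      exact Finset.sum_congr rfl fun t _ => if_congr Iff.rfl rfl rfl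
    have h4 : (p : ℝ) ^ (K - L) = (p : ℝ) ^ (K - N₀) * (p : ℝ) ^ ((N₀ : ℝ) - L) := by
      rw [← Real.rpow_natCast, ← Real.rpow_natCast, ← Real.rpow_add hp0, Nat.cast_sub h2,
        Nat.cast_sub hN₀K]
      congr 1; ring
    rw [h3, hIcard]
    have h5 : ∀ q : S, (∏ j, ∑ i, if (p : ℤ_[p]) ^ L ∣ Y j q i - x j then (1 : ℝ) else 0) ≤
        (∏ j, (n * P j)) * (p : ℝ) ^ (((N₀ : ℝ) - L) * d) := by
      intro q
      refine (Finset.prod_le_prod (fun j _ => Finset.sum_nonneg fun i _ => by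
        split_ifs <;> norm_num) fun j _ => hYlow j q L (x j) h1.le h2).trans (le_of_eq ?_)
      have h6 : ((p : ℝ) ^ ((N₀ : ℝ) - L)) ^ d = ∏ _j : Fin d, (p : ℝ) ^ ((N₀ : ℝ) - L) :=
        (Fin.prod_const d _).symm
      rw [Real.rpow_mul hp0.le, Real.rpow_natCast, h6, ← Finset.prod_mul_distrib]
      refine Finset.prod_congr rfl fun j _ => ?_
      rw [h4, hndef, hP]
      ring
    refine (Finset.sum_le_card_nsmul _ _ _ fun q _ => h5 q).trans (le_of_eq ?_)
    rw [Finset.card_univ, Fintype.card_coe, nsmul_eq_mul]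
    ring
  · intro L h1 h2
    set ρ : ℝ := (L : ℝ) / (2 * K : ℕ) with hρ
    have hK0 : (0 : ℝ) < K := by exact_mod_cast hK1
    have hρL : ρ * (2 * K : ℕ) = L := by
      rw [hρ, div_mul_cancel₀]
      push_cast
      positivity
    have hQρ : Q ^ ρ = (p : ℝ) ^ L := by
      rw [hQ, ← Real.rpow_natCast, ← Real.rpow_natCast, ← Real.rpow_mul hp0.le, mul_comm, hρL]
    have hρ2 : 1 / 2 ≤ ρ := by
      have h3 : (K : ℝ) ≤ L := by exact_mod_cast h1.le
      push_cast at hρL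
      nlinarith
    have hsq : ∀ g : Fin d → ℝ, (∏ j, (n * P j) ^ 2 * g j) = (∏ j, (n * P j)) ^ 2 * ∏ j, g j := by
      intro g
      rw [Finset.prod_mul_distrib, Finset.prod_pow]
    have hpcnn : ∀ q q' j, 0 ≤ pc L (Y j q) (Y j q') := fun q q' j =>
      Finset.sum_nonneg fun i _ => Finset.sum_nonneg fun i' _ => by split_ifs <;> norm_num
    have hC1 : (1 : ℝ) ≤ (2 * p) ^ d := one_le_pow₀ (by linarith)
    have hoff : ∀ q q' : S, q ≠ q' → ∏ j, pc L (Y j q) (Y j q') ≤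
        (∏ j, (n * P j)) ^ 2 * ((2 * p) ^ d * Q ^ (d * (2 * ε - ρ))) := by
      intro q q' hne
      refine (Finset.prod_le_prod (fun j _ => hpcnn q q' j) fun j _ =>
        offdiag_bound hQρ hn (hYoff j q q' L hne h2)).trans ?_
      rw [hsq, Fin.prod_const, mul_pow, ← Real.rpow_natCast (Q ^ _), ← Real.rpow_mul hQ0.le,
        mul_comm (2 * ε - ρ)]
      gcongr
      linarith
    have hdg : ∀ q : S, ∏ j, pc L (Y j q) (Y j q) ≤ (∏ j, (n * P j)) ^ 2 *
        ((2 * p) ^ d * Q ^ (∑ j, (ε - min ρ 1 - max (ρ - b j) 0))) := by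
      intro q
      refine (Finset.prod_le_prod (fun j _ => hpcnn q q j) fun j _ =>
        diag_bound (by linarith [hb j]) hQρ (by omega) hn (hYd1 j q L)
          (fun h => hYd2 j q L h h2)).trans (le_of_eq ?_)
      have h3 : ∏ j, (2 * (p : ℝ) * Q ^ (ε - min ρ 1 - max (ρ - b j) 0)) =
          (2 * p) ^ d * Q ^ (∑ j, (ε - min ρ 1 - max (ρ - b j) 0)) := by
        rw [Finset.prod_mul_distrib, Fin.prod_const, Real.rpow_sum_of_pos hQ0]
      rw [hsq, h3]
    refine (sum_pairs_le Y (by positivity) hoff hdg).trans ?_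
    rw [hIcard]
    have hw := pair_weight_le b (Q := Q) (e := e) (s := s) (t := s' + 2 * (δ / 3)) (ε := ε)
      (η := δ / 24) (ρ := ρ) (A := S.card) (C := (2 * p) ^ d) hQ1 hC1 hsd hε0.le (by positivity) hρ2
      (mul_le_diag b hb he (by linarith) hsd hs ρ (by linarith)) hScard hCQ
      (by rw [hdε]; linarith) (by linarith)
    have hpt : (p : ℝ) ^ (-(L : ℝ) * (s' + 2 * (δ / 3))) = Q ^ (-ρ * (s' + 2 * (δ / 3))) := by
      rw [← hρL, hQ, ← Real.rpow_natCast, ← Real.rpow_mul hp0.le]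
      congr 1; ring
    rw [hpt]
    have := mul_le_mul_of_nonneg_left hw (sq_nonneg (∏ j, (n * P j)))
    refine le_trans (le_of_eq ?_) (this.trans (le_of_eq ?_)) <;> ring
  · rintro I' ⟨hI', hspread⟩
    obtain ⟨μ, hμ1, hμ2⟩ := exists_pmf y I' hI' hspread
    refine ⟨μ, ?_, ?_, hμ2⟩
    · intro v hv
      obtain ⟨i, rfl⟩ := hμ1 v hv
      exact fun j => hYz j i.1 (i.2 j)
    · intro v hv
      obtain ⟨i, rfl⟩ := hμ1 v hv
      exact ⟨i.1, i.1.2, fun j => hYa j i.1 (i.2 j)⟩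

end LocalMeasure

/-! ### The lower bound -/

section Main

variable {p : ℕ} [Fact p.Prime]

lemma norm_natCast_eq_one {q : ℕ} (hq : ¬ p ∣ q) : ‖(q : ℤ_[p])‖ = 1 := by
  refine le_antisymm (PadicInt.norm_le_one _) (not_lt.1 fun h => hq ?_)
  have h1 : ‖((q : ℤ) : ℤ_[p])‖ < 1 := by exact_mod_cast h
  exact_mod_cast (PadicInt.norm_int_lt_one_iff_dvd (q : ℤ)).1 h1

/-- For a denominator `q` prime to `p`, approximating `x` by `a / q` is the same as approximating
`q * x` by `a`; and bounds in terms of `Q ≥ q` are stronger than bounds in terms of `q`. -/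
lemma norm_sub_div_lt {q : ℕ} (hq : ¬ p ∣ q) {Q : ℝ} (hqQ : (q : ℝ) ≤ Q) {b : ℝ} (hb : 0 ≤ b)
    {x : ℤ_[p]} {a : ℤ} (h : ‖(q : ℤ_[p]) * x - (a : ℤ_[p])‖ < Q ^ (-b)) :
    ‖(x : ℚ_[p]) - (a : ℚ_[p]) / (q : ℚ_[p])‖ < (q : ℝ) ^ (-b) := by
  have hq0 : q ≠ 0 := fun h => hq (h ▸ dvd_zero p)
  have hq0' : (0 : ℝ) < q := by exact_mod_cast Nat.pos_of_ne_zero hq0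
  have hq1 : ‖(q : ℚ_[p])‖ = 1 := by
    rw [← norm_natCast_eq_one hq, PadicInt.norm_def]; norm_num
  have hqp : (q : ℚ_[p]) ≠ 0 := by exact_mod_cast hq0
  have h1 : ‖(x : ℚ_[p]) - (a : ℚ_[p]) / (q : ℚ_[p])‖ =
      ‖(q : ℤ_[p]) * x - (a : ℤ_[p])‖ := by
    have : (((q : ℤ_[p]) * x - (a : ℤ_[p]) : ℤ_[p]) : ℚ_[p]) =
        (q : ℚ_[p]) * ((x : ℚ_[p]) - (a : ℚ_[p]) / (q : ℚ_[p])) := by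
      push_cast
      field_simp
    rw [PadicInt.norm_def, this, norm_mul, hq1, one_mul]
  rw [h1]
  exact h.trans_le (Real.rpow_le_rpow_of_nonpos hq0' hqQ (by linarith))

/-- Good rational approximations of `x` and of `α` with a common denominator `q` prime to `p`
combine to one of the point `(x, α)`. -/
lemma append_mem_Aset {d m : ℕ} {τ : Fin (d + m) → ℝ} (hτ : ∀ i, 0 ≤ τ i) {α : Fin m → ℤ_[p]}
    {q : ℕ} (hq : ¬ p ∣ q) {Q : ℝ} (hqQ : (q : ℝ) ≤ Q) {x : Fin d → ℤ_[p]}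
    (hx : ∀ j, ∃ a : ℕ, a < q ∧ a.Coprime q ∧
      ‖(q : ℤ_[p]) * x j - (a : ℤ_[p])‖ < Q ^ (-τ (Fin.castAdd m j)))
    (hα : ∃ a : Fin m → ℤ, ∀ i, |a i| ≤ q ∧ Int.gcd (a i) q = 1 ∧
      ‖(q : ℤ_[p]) * α i - (a i : ℤ_[p])‖ < Q ^ (-τ (Fin.natAdd d i))) :
    Fin.append x α ∈ Aset τ q := by
  choose a ha hac hax using hx
  obtain ⟨a', ha'⟩ := hα
  simp only [Aset, Set.mem_iUnion, Set.mem_ofPred_eq]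
  refine ⟨Fin.append (fun j => (a j : ℤ)) a', ?_, ?_⟩
  · refine Fin.addCases (fun j => ?_) fun i => ?_
    · rw [Fin.append_left]
      refine ⟨?_, ?_⟩
      · rw [abs_of_nonneg (Int.natCast_nonneg _)]
        exact_mod_cast (ha j).le
      · rw [Int.gcd_natCast_natCast]
        exact hac j
    · rw [Fin.append_right]
      exact ⟨(ha' i).1, (ha' i).2.1⟩
  · refine Fin.addCases (fun j => ?_) fun i => ?_
    · rw [Fin.append_left, Fin.append_left]
      refine norm_sub_div_lt hq hqQ (hτ _) ?_
      rw [Int.cast_natCast]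
      exact hax j
    · rw [Fin.append_right, Fin.append_right]
      exact norm_sub_div_lt hq hqQ (hτ _) (ha' i).2.2

lemma isometry_append {d m : ℕ} (α : Fin m → ℤ_[p]) :
    Isometry fun x : Fin d → ℤ_[p] => (Fin.append x α : Fin (d + m) → ℤ_[p]) := by
  refine Isometry.of_dist_eq fun x y => le_antisymm ?_ ?_
  · refine (dist_pi_le_iff dist_nonneg).2 (Fin.addCases (fun j => ?_) fun i => ?_)
    · simp only [Fin.append_left]
      exact dist_le_pi_dist x y j
    · simp only [Fin.append_right, dist_self]
      exact dist_nonneg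
  · refine (dist_pi_le_iff dist_nonneg).2 fun j => ?_
    have := dist_le_pi_dist (Fin.append x α : Fin (d + m) → ℤ_[p]) (Fin.append y α) (Fin.castAdd m j)
    simpa only [Fin.append_left] using this

/-- The set of `x` with `(x, α)` approximable has dimension at least `s'`, for every `s'` below the
claimed bound `s`. -/
lemma ofReal_le_dimH_of_lt {d m : ℕ} (hd : 1 ≤ d) (hm : 1 ≤ m) (α : Fin m → ℤ_[p])
    (hα : dioExp α = (m : ℝ) + 1) (τ : Fin (d + m) → ℝ) (hτ : ∀ i, 1 < τ i)
    (h₁ : ∑ i : Fin m, τ (Fin.natAdd d i) < (m : ℝ) + 1) {s s' : ℝ} (hs'0 : 0 < s') (hs's : s' < s)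
    (hsd : s < d)
    (hs : ∀ i : Fin d, s ≤ (d + ((m : ℝ) + 1 - ∑ i', τ (Fin.natAdd d i')) +
      ∑ j, max (τ (Fin.castAdd m i) - τ (Fin.castAdd m j)) 0) / τ (Fin.castAdd m i)) :
    ENNReal.ofReal s' ≤
      dimH (⋂ k : ℕ, {x : Fin d → ℤ_[p] | ∃ q ≥ k, Fin.append x α ∈ Aset τ q}) := by
  refine cantor hs'0 _ fun N₀ k => ?_
  have hp : p.Prime := Fact.out
  obtain ⟨η, hη, hev⟩ := exists_measure (p := p) hd (fun j => τ (Fin.castAdd m j)) (fun j => hτ _)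
    (sub_pos.2 h₁) hs'0 hs's hsd hs N₀
  have htwo : Filter.Tendsto (fun K : ℕ => 2 * K) Filter.atTop Filter.atTop :=
    Filter.tendsto_atTop_mono (fun K => Nat.le_mul_of_pos_left K two_pos) Filter.tendsto_id
  have hden := htwo.eventually
    (exists_denominators hm α hα (fun i => τ (Fin.natAdd d i)) (fun i => hτ _) h₁ η hη)
  obtain ⟨K, ⟨N, hN, hlev, hμ⟩, ⟨S, hcard, hS⟩, hK⟩ :=
    (hev.and (hden.and (Filter.eventually_ge_atTop k))).exists
  refine ⟨N, hN, fun z => ?_⟩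
  obtain ⟨μ, hμz, hμa, hμL⟩ := hμ S hcard
    (fun q hq => ⟨(hS q hq).1, (hS q hq).2.1, (hS q hq).2.2.1⟩) z
  refine ⟨μ, hμz, fun y hy x hx => ?_, hμL⟩
  obtain ⟨q, hq, hqa⟩ := hμa y hy
  obtain ⟨hq1, hq2, hq3, hq4⟩ := hS q hq
  refine ⟨q, ?_, append_mem_Aset (fun i => by linarith [hτ i]) hq3 (Q := (p : ℝ) ^ (2 * K))
    (by exact_mod_cast hq2) (fun j => ?_) hq4⟩
  · have h1 : 2 * K < 2 ^ (2 * K) := Nat.lt_two_pow_self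
    have h2 : 2 ^ (2 * K) ≤ p ^ (2 * K) := Nat.pow_le_pow_left hp.two_le _
    have h3 : k ≤ K := hK
    show k ≤ q
    omega
  · obtain ⟨a, ha, hac, hdvd⟩ := hqa j
    refine ⟨a, ha, hac, norm_lt_of_pow_lev_dvd ?_⟩
    have hxy : (p : ℤ_[p]) ^ lev (2 * K) (τ (Fin.castAdd m j)) ∣ x j - y j :=
      (pow_dvd_pow _ (hlev j)).trans (hx j)
    have : (q : ℤ_[p]) * x j - (a : ℤ_[p]) =
        (q : ℤ_[p]) * (x j - y j) + ((q : ℤ_[p]) * y j - (a : ℤ_[p])) := by ring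
    rw [this]
    exact dvd_add (hxy.mul_left _) hdvd

end Main

/-- Lower bound of Theorem 2 for the Hausdorff dimension of `𝔚_n(τ) ∩ Π_α`. -/
theorem dimH_Wset_inter_hyperplane_lower {p : ℕ} [Fact p.Prime] {d m : ℕ}
    (hd : 1 ≤ d) (hm : 1 ≤ m) (α : Fin m → ℤ_[p])
    (hα : dioExp α = (m : ℝ) + 1) (τ : Fin (d + m) → ℝ)
    (hτpos : ∀ i, 0 < τ i)
    (h₁ : ∑ i : Fin m, τ (Fin.natAdd d i) < (m : ℝ) + 1)
    (h₂ : ((d : ℝ) + m) + 1 < ∑ i, τ i)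
    (h₃ : ∀ i, 1 < τ i) (s : ℝ)
    (hs : s = ⨅ i : Fin d,
      (((d : ℝ) + m + 1 - ∑ i' : Fin m, τ (Fin.natAdd d i') +
        ∑ j ∈ Finset.univ.filter
          (fun j : Fin d => τ (Fin.castAdd m j) ≤ τ (Fin.castAdd m i)),
          (τ (Fin.castAdd m i) - τ (Fin.castAdd m j))) / τ (Fin.castAdd m i))) :
    ENNReal.ofReal s ≤ dimH (Wset τ ∩ Pialpha α) := by
  have hs' : ∀ i : Fin d, s ≤ (d + ((m : ℝ) + 1 - ∑ i', τ (Fin.natAdd d i')) +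
      ∑ j, max (τ (Fin.castAdd m i) - τ (Fin.castAdd m j)) 0) / τ (Fin.castAdd m i) := by
    intro i
    rw [hs]
    refine (ciInf_le (Set.finite_range _).bddBelow i).trans (le_of_eq ?_)
    have h : ∑ j ∈ Finset.univ.filter
        (fun j : Fin d => τ (Fin.castAdd m j) ≤ τ (Fin.castAdd m i)),
        (τ (Fin.castAdd m i) - τ (Fin.castAdd m j)) =
        ∑ j, max (τ (Fin.castAdd m i) - τ (Fin.castAdd m j)) 0 := by
      rw [Finset.sum_filter]
      refine Finset.sum_congr rfl fun j _ => ?_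
      split_ifs with hj
      · rw [max_eq_left (by linarith)]
      · rw [max_eq_right (by linarith)]
    rw [h]
    congr 1
    ring
  have hsd : s < d := by
    refine iInf_lt_card hd (fun j => τ (Fin.castAdd m j)) (fun j => h₃ _)
      (D := d + ((m : ℝ) + 1 - ∑ i', τ (Fin.natAdd d i'))) ?_ hs'
    rw [Fin.sum_univ_add] at h₂
    linarith
  have hsub : (fun x : Fin d → ℤ_[p] => (Fin.append x α : Fin (d + m) → ℤ_[p])) ''
      (⋂ k : ℕ, {x : Fin d → ℤ_[p] | ∃ q ≥ k, Fin.append x α ∈ Aset τ q}) ⊆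
      Wset τ ∩ Pialpha α := by
    rintro _ ⟨x, hx, rfl⟩
    refine ⟨?_, fun i => Fin.append_right _ _ i⟩
    simp only [Wset, Set.mem_iInter, Set.mem_iUnion]
    intro k
    obtain ⟨q, hq, h⟩ := Set.mem_iInter.1 hx k
    exact ⟨q, hq, h⟩
  refine le_trans ?_ (dimH_mono hsub)
  rw [(isometry_append α).dimH_image]
  refine le_of_forall_lt fun t ht => ?_
  -- It suffices to treat exponents strictly between `t` and `s`.
  have htop : t ≠ ⊤ := ht.ne_top
  have hts : t.toReal < s := (ENNReal.lt_ofReal_iff_toReal_lt htop).1 ht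
  obtain ⟨s', h1, h2⟩ := exists_between hts
  refine lt_of_lt_of_le ?_ (ofReal_le_dimH_of_lt hd hm α hα τ h₃ h₁
    (ENNReal.toReal_nonneg.trans_lt h1) h2 hsd hs')
  exact (ENNReal.lt_ofReal_iff_toReal_lt htop).2 h1
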